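/- Every loose web is linkable: if the only wave in a web Γ = (D, A, B) is the trivial wave ⟨A⟩ consisting of the singleton paths (a) for a ∈ A, then Γ has a linkage. -/

import Mathlib

/-!
The theorem is proved in the form that every unhindered web is linkable (the Aharoni–Berger theorem).

Paths are traded for functions and relations. A wave becomes a set `D` of vertices lying strictly
before its separating set, together with an injective partial predecessor function into `D`
(`WaveF`). The web is unhindered (`Unh`) if for every wave each vertex of `D` is a predecessor, so that
no vertex is lost. A linkage becomes a biunique relation joining every vertex of `A` to `B`
(`Linking`). Looseness implies `Unh` (`unh_of_loose`), and a `Linking` yields disjoint paths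
(`linkable_of_linking`). Deleted vertices are recorded by an extra set `Z`. Waves compose along
well-orders (`wave_comp`), so there is a largest one (`exists_wave_maxD`).

The core is `linking_main`, proved by induction on the cardinality of `A`.

*Countable `A`.* By augmentation along alternating paths, any single vertex of `A` can be joined to
`B` by a path whose deletion leaves the web unhindered (`safe_link`). Iterating this links all of a
countable `A` (`linking_countable`).

*Regular uncountable `κ`.* A closed ladder (`CLadder`) is a continuous increasing chain of sets `X i`
of size less than `κ`, where a single function `g` describes, for all `i` at once, the maximal wave of
the web started from `A ∪ X i`. If at many levels some track of this wave never leaves it, the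
alternating paths chosen at these levels can be glued into a hindrance of the whole web; hence at
almost all levels there is no such dead vertex (`CLadder.lrg_no_dead`). A pair of vertices is wide if
it is joined by so many alternating blocks that no small set meets them all; wide pairs act as
virtual edges, since a block avoiding any small set remains available later. The web between two
levels, with the virtual edges added, is unhindered (`CLadder.unh_step`), hence linkable by the
induction hypothesis. These linkings are assembled by transfinite recursion into a chain of
partial linkages (`CLadder.step`, `PL.limit`, `CLadder.exists_states`). The rank `Rk` of a vertex
counts the virtual edges and the loose end still to be resolved on the way from it to `B`; it drops
whenever the vertex is treated, and a vertex of rank zero is linked to `B` by real edges.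
The outcome is `regular_closure`: one relation linking many small closed sets, which exhaust `A` when `κ` is the cardinality of `A`.

*Singular cardinals.* A rank (`Lvl`) in the style of Shelah's singular compactness measures how badly
a small set fails to be extendable to a linked one. `regular_closure`, applied to the
regular cardinals below the singular one, shows that the empty set has no such rank
(`not_lvl_empty`). A set without a rank can be enlarged, so as to contain any given
small set, to another set without a rank (`exists_not_lvl`), and interleaving such extensions for cofinally many cardinals produces a
linking (`linking_singular`).
-/

namespace ErdosMenger

variable {V : Type*}

/-- A finite path in a digraph with edge relation `E`: a nonempty list of
distinct vertices, each consecutive pair of which is a directed edge. -/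
def IsFinPath (E : V → V → Prop) (p : List V) : Prop :=
  p ≠ [] ∧ p.Nodup ∧ p.Chain' E

/-- An `X`–`Y` path: a finite path starting in `X` and ending in `Y`. -/
def IsXYPath (E : V → V → Prop) (X Y : Set V) (p : List V) : Prop :=
  IsFinPath E p ∧ (∃ x ∈ X, p.head? = some x) ∧ (∃ y ∈ Y, p.getLast? = some y)

/-- `S` is `X`–`Y`-separating: every `X`–`Y` path contains a vertex of `S`. -/
def Separates (E : V → V → Prop) (X Y S : Set V) : Prop :=
  ∀ p : List V, IsXYPath E X Y p → ∃ s ∈ S, s ∈ p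


/-- A path in a digraph: either finite (a list of vertices) or infinite
(a sequence of vertices). -/
inductive GPath (V : Type*) where
  | fin : List V → GPath V
  | inf : (ℕ → V) → GPath V

namespace GPath

variable {V : Type*}

/-- The predicate that a `GPath` really is a path of the digraph with edge
relation `E`: finite paths are nonempty lists of distinct vertices whose
consecutive pairs are edges; infinite paths are injective sequences whose
consecutive pairs are edges. -/
def IsPath (E : V → V → Prop) : GPath V → Prop
  | .fin l => l ≠ [] ∧ l.Nodup ∧ l.Chain' E
  | .inf f => Function.Injective f ∧ ∀ n, E (f n) (f (n + 1))

/-- The vertex set of a path. -/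
def verts : GPath V → Set V
  | .fin l => {v | v ∈ l}
  | .inf f => Set.range f

/-- The initial vertex of a path. -/
def initv : GPath V → Option V
  | .fin l => l.head?
  | .inf f => some (f 0)

/-- The terminal vertex of a (finite) path. -/
def terv : GPath V → Option V
  | .fin l => l.getLast?
  | .inf _ => none

/-- The edge set of a path. -/
def edges : GPath V → Set (V × V)
  | .fin l => {e | e ∈ l.zip l.tail}
  | .inf f => {e | ∃ n, e = (f n, f (n + 1))}

end GPath

variable {V : Type*}

/-- `in[W]`: the set of initial vertices of the paths of `W`. -/
def warpIn (W : Set (GPath V)) : Set V := {v | ∃ P ∈ W, P.initv = some v}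

/-- `ter[W]`: the set of terminal vertices of the finite paths of `W`. -/
def warpTer (W : Set (GPath V)) : Set V := {v | ∃ P ∈ W, P.terv = some v}

/-- `V[W]`: the set of vertices appearing on paths of `W`. -/
def warpVerts (W : Set (GPath V)) : Set V := {v | ∃ P ∈ W, v ∈ P.verts}

/-- `E[W]`: the set of edges appearing on paths of `W`. -/
def warpEdges (W : Set (GPath V)) : Set (V × V) := {e | ∃ P ∈ W, e ∈ P.edges}

/-- A web `Γ = (D, A, B)`: a digraph together with vertex sets `A` and `B`,
such that no edge enters `A` and no edge leaves `B`. -/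
structure Web (V : Type*) where
  Adj : V → V → Prop
  A : Set V
  B : Set V
  not_into_A : ∀ u v, Adj u v → v ∉ A
  not_from_B : ∀ u v, Adj u v → u ∉ B

namespace Web

variable (Γ : Web V)

/-- A warp: a set of pairwise vertex-disjoint paths of the web. -/
def IsWarp (W : Set (GPath V)) : Prop :=
  (∀ P ∈ W, P.IsPath Γ.Adj) ∧
    ∀ P ∈ W, ∀ Q ∈ W, P ≠ Q → ∀ v, v ∈ P.verts → v ∉ Q.verts

/-- A wave: an `A`-starting warp `W` such that `ter[W]` is `A`–`B`-separating. -/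
def IsWave (W : Set (GPath V)) : Prop :=
  Γ.IsWarp W ∧ warpIn W ⊆ Γ.A ∧ Separates Γ.Adj Γ.A Γ.B (warpTer W)

/-- A hindrance: a wave with `in[W] ≠ A`. -/
def IsHindrance (W : Set (GPath V)) : Prop :=
  Γ.IsWave W ∧ warpIn W ≠ Γ.A

/-- A web is hindered if it contains a hindrance. -/
def Hindered : Prop := ∃ W, Γ.IsHindrance W

/-- An `A`–`B`-warp: a set of pairwise disjoint finite `A`–`B` paths, each
meeting `A ∪ B` only at its endpoints. -/
def IsABWarp (𝒲 : Set (List V)) : Prop :=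
  (∀ p ∈ 𝒲, IsXYPath Γ.Adj Γ.A Γ.B p) ∧
    (∀ p ∈ 𝒲, ∀ v ∈ p, v ∈ Γ.A ∪ Γ.B → p.head? = some v ∨ p.getLast? = some v) ∧
    ∀ p ∈ 𝒲, ∀ q ∈ 𝒲, p ≠ q → ∀ v, v ∈ p → v ∉ q

/-- A linkage of `Γ`: an `A`–`B`-warp whose set of initial vertices is all of `A`. -/
def IsLinkage (𝒲 : Set (List V)) : Prop :=
  Γ.IsABWarp 𝒲 ∧ {v | ∃ p ∈ 𝒲, p.head? = some v} = Γ.A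

/-- A web is linkable if it has a linkage. -/
def Linkable : Prop := ∃ 𝒲, Γ.IsLinkage 𝒲

/-- The web `Γ − X` obtained by deleting the vertices of `X`. -/
def delete (X : Set V) : Web V where
  Adj u v := Γ.Adj u v ∧ u ∉ X ∧ v ∉ X
  A := Γ.A \ X
  B := Γ.B \ X
  not_into_A := fun u v h hv => Γ.not_into_A u v h.1 hv.1
  not_from_B := fun u v h hu => Γ.not_from_B u v h.1 hu.1

end Web


/-! ### Waves as partial predecessor functions -/
section Waves
open Set
variable {V : Type*}

/-- The closed out-neighbourhood of `D`. -/
def Rg (E : V → V → Prop) (D : Set V) : Set V := {x | ∃ u ∈ D, x = u ∨ E u x}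

/-- The vertices at which a wave on `D` has to supply a predecessor: the closed
out-neighbourhood of `D` without the starting set `A` and the deleted set `Z`. -/
def Dm (E : V → V → Prop) (A Z D : Set V) : Set V := {x | x ∈ Rg E D ∧ x ∉ A ∧ x ∉ Z}

/-- A wave in functional form, for the digraph `E` with target `B`, starting set `A` and
deleted set `Z`: `D` is the set of vertices strictly before the separating set, and `g` sends each
vertex of `Dm E A Z D` injectively to its predecessor on the wave; `g x = x` marks a vertex
which lies on no path of the wave. Cycles of `g` are permitted, infinite backward
orbits are not. -/
structure WaveF (E : V → V → Prop) (B A Z D : Set V) (g : V → V) : Prop where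
  notZ : ∀ x ∈ D, x ∉ Z
  notB : ∀ x ∈ D, x ∉ B
  mem : ∀ x ∈ Dm E A Z D, g x ∈ D
  adj : ∀ x ∈ Dm E A Z D, x = g x ∨ E (g x) x
  inj : ∀ x ∈ Dm E A Z D, ∀ y ∈ Dm E A Z D, g x = g y → x = y
  noray : ∀ y : ℕ → V, Function.Injective y → (∀ n, y n ∈ Dm E A Z D) →
    (∀ n, y (n + 1) = g (y n)) → False

/-- No wave loses a vertex: the functional form of being unhindered. -/
def Unh (E : V → V → Prop) (B A Z : Set V) : Prop :=
  ∀ D g, WaveF E B A Z D g → ∀ w ∈ D, ∃ x ∈ Dm E A Z D, g x = w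

/-- The union of all waves. -/
def maxD (E : V → V → Prop) (B A Z : Set V) : Set V := {x | ∃ D g, WaveF E B A Z D g ∧ x ∈ D}

variable {E : V → V → Prop} {B A A' Z Z' D D' : Set V} {g : V → V}

theorem Rg_mono (h : D ⊆ D') : Rg E D ⊆ Rg E D' := fun _ ⟨u, hu, hx⟩ => ⟨u, h hu, hx⟩

theorem subset_Rg : D ⊆ Rg E D := fun x hx => ⟨x, hx, Or.inl rfl⟩

theorem Rg_of_adj {u x : V} (hu : u ∈ D) (h : x = u ∨ E u x) : x ∈ Rg E D := ⟨u, hu, h⟩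

theorem Dm_mono (h : D ⊆ D') : Dm E A Z D ⊆ Dm E A Z D' := fun _ hx => ⟨Rg_mono h hx.1, hx.2⟩

theorem wave_empty : WaveF E B A Z ∅ g := by
  constructor <;> simp [Dm, Rg]

/-- Least-index-first combination of functions `g i` along sets `D i`. -/
noncomputable def compg {ι : Type*} [LinearOrder ι] [WellFoundedLT ι] (E : V → V → Prop)
    (D : ι → Set V) (g : ι → V → V) (x : V) : V :=
  open Classical in
  if h : ∃ i, x ∈ Rg E (D i) then
    g ((wellFounded_lt : WellFounded ((· < ·) : ι → ι → Prop)).min {i | x ∈ Rg E (D i)} h) x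
  else x

theorem compg_spec {ι : Type*} [LinearOrder ι] [WellFoundedLT ι]
    (D : ι → Set V) (g : ι → V → V) {x : V} {i : ι} (hi : x ∈ Rg E (D i))
    (hmin : ∀ j < i, x ∉ Rg E (D j)) : compg E D g x = g i x := by
  have h : ∃ i, x ∈ Rg E (D i) := ⟨i, hi⟩
  unfold compg
  rw [dif_pos h]
  congr 1
  apply le_antisymm
  · exact not_lt.1 (WellFounded.not_lt_min wellFounded_lt (s := {i | x ∈ Rg E (D i)}) hi)
  · by_contra hlt
    exact hmin _ (not_le.1 hlt) (WellFounded.min_mem wellFounded_lt {i | x ∈ Rg E (D i)} h)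

theorem exists_least_index {ι : Type*} [LinearOrder ι] [WellFoundedLT ι]
    (D : ι → Set V) {x : V} (h : x ∈ Rg E (⋃ i, D i)) :
    ∃ i, x ∈ Rg E (D i) ∧ ∀ j < i, x ∉ Rg E (D j) := by
  obtain ⟨u, hu, hx⟩ := h
  obtain ⟨i, hi⟩ := mem_iUnion.1 hu
  have h : ({i | x ∈ Rg E (D i)} : Set ι).Nonempty := ⟨i, u, hi, hx⟩
  refine ⟨wellFounded_lt.min _ h, WellFounded.min_mem wellFounded_lt _ h, fun j hj hx => ?_⟩
  exact WellFounded.not_lt_min wellFounded_lt (s := {i | x ∈ Rg E (D i)}) hx hj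

/-- A well-ordered family of waves, with starting sets contained in `A`, combines to a wave. -/
theorem wave_comp {ι : Type*} [LinearOrder ι] [WellFoundedLT ι]
    (As : ι → Set V) (D : ι → Set V) (g : ι → V → V) (hA : ∀ i, As i ⊆ A)
    (h : ∀ i, WaveF E B (As i) Z (D i) (g i)) :
    WaveF E B A Z (⋃ i, D i) (compg E D g) := by
  have key : ∀ x ∈ Dm E A Z (⋃ i, D i), ∃ i, (∀ j < i, x ∉ Rg E (D j)) ∧
      x ∈ Dm E (As i) Z (D i) ∧ compg E D g x = g i x := by
    intro x hx
    obtain ⟨i, hi, hm⟩ := exists_least_index D hx.1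
    exact ⟨i, hm, ⟨hi, fun hh => hx.2.1 (hA i hh), hx.2.2⟩, compg_spec D g hi hm⟩
  constructor
  · intro x hx
    obtain ⟨i, hi⟩ := mem_iUnion.1 hx
    exact (h i).notZ x hi
  · intro x hx
    obtain ⟨i, hi⟩ := mem_iUnion.1 hx
    exact (h i).notB x hi
  · intro x hx
    obtain ⟨i, _, hi, e⟩ := key x hx
    rw [e]
    exact mem_iUnion.2 ⟨i, (h i).mem x hi⟩
  · intro x hx
    obtain ⟨i, _, hi, e⟩ := key x hx
    rw [e]
    exact (h i).adj x hi
  · intro x hx y hy hxy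
    obtain ⟨i, hmi, hi, ei⟩ := key x hx
    obtain ⟨j, hmj, hj, ej⟩ := key y hy
    rw [ei, ej] at hxy
    rcases lt_trichotomy i j with hij | hij | hij
    · exact absurd (Rg_of_adj (hxy ▸ (h i).mem x hi : g j y ∈ D i) ((h j).adj y hj)) (hmj i hij)
    · subst hij
      exact (h i).inj x hi y hj hxy
    · exact absurd (Rg_of_adj (hxy ▸ (h j).mem y hj : g i x ∈ D j) ((h i).adj x hi)) (hmi j hij)
  · intro y hy hmem hstep
    choose ρ hm hD he using fun n => key (y n) (hmem n)
    have hanti : ∀ n, ρ (n + 1) ≤ ρ n := by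
      intro n
      by_contra hlt
      refine hm (n + 1) _ (not_le.1 hlt) ?_
      rw [hstep, he]
      exact subset_Rg ((h _).mem _ (hD n))
    have hne : (range ρ).Nonempty := ⟨ρ 0, 0, rfl⟩
    obtain ⟨n0, hn0⟩ := WellFounded.min_mem wellFounded_lt (range ρ) hne
    have hc : ∀ k, ρ (n0 + k) = ρ n0 := by
      intro k
      apply le_antisymm
      · induction k with
        | zero => exact le_rfl
        | succ k ih => exact (hanti (n0 + k)).trans ih
      · rw [hn0]
        exact not_lt.1 (WellFounded.not_lt_min wellFounded_lt (s := range ρ) ⟨_, rfl⟩)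
    refine (h (ρ n0)).noray (fun k => y (n0 + k)) (fun a b hab => ?_) (fun k => ?_) (fun k => ?_)
    · exact Nat.add_left_cancel (hy hab)
    · rw [← hc k]; exact hD _
    · change y (n0 + k + 1) = _
      rw [hstep, he, hc]

theorem wave_mono_A (h : WaveF E B A Z D g) (hA : A ⊆ A') : WaveF E B A' Z D g := by
  have hs : ∀ x ∈ Dm E A' Z D, x ∈ Dm E A Z D := fun x hx => ⟨hx.1, fun hh => hx.2.1 (hA hh), hx.2.2⟩
  exact ⟨h.notZ, h.notB, fun x hx => h.mem x (hs x hx), fun x hx => h.adj x (hs x hx),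
    fun x hx y hy => h.inj x (hs x hx) y (hs y hy), fun y hy hm => h.noray y hy fun n => hs _ (hm n)⟩

/-- The union of all waves is again (the underlying set of) a wave. -/
theorem exists_wave_maxD (E : V → V → Prop) (B A Z : Set V) :
    ∃ g, WaveF E B A Z (maxD E B A Z) g := by
  let ι := {p : Set V × (V → V) // WaveF E B A Z p.1 p.2}
  classical
  let _ : LinearOrder ι := linearOrderOfSTO (WellOrderingRel (α := ι))
  have : WellFoundedLT ι := ⟨(WellOrderingRel.isWellOrder (α := ι)).wf⟩
  have h := wave_comp (E := E) (B := B) (Z := Z) (A := A) (fun _ : ι => A) (fun i => i.1.1)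
    (fun i => i.1.2) (fun _ => Subset.rfl) (fun i => i.2)
  have he : maxD E B A Z = ⋃ i : ι, i.1.1 := by
    ext x
    constructor
    · rintro ⟨D, g, hw, hx⟩
      exact mem_iUnion.2 ⟨⟨(D, g), hw⟩, hx⟩
    · intro hx
      obtain ⟨i, hi⟩ := mem_iUnion.1 hx
      exact ⟨_, _, i.2, hi⟩
  rw [he]
  exact ⟨_, h⟩

theorem subset_maxD (h : WaveF E B A Z D g) : D ⊆ maxD E B A Z := fun _ hx => ⟨D, g, h, hx⟩

theorem maxD_mono (hA : A ⊆ A') : maxD E B A Z ⊆ maxD E B A' Z :=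
  fun _ ⟨D, g, h, hx⟩ => ⟨D, g, wave_mono_A h hA, hx⟩

theorem maxD_notB {x : V} (hx : x ∈ maxD E B A Z) : x ∉ B := by
  obtain ⟨D, g, h, hx⟩ := hx; exact h.notB x hx

theorem maxD_notZ {x : V} (hx : x ∈ maxD E B A Z) : x ∉ Z := by
  obtain ⟨D, g, h, hx⟩ := hx; exact h.notZ x hx

theorem Unh.anti (h : Unh E B A' Z) (hA : A ⊆ A') : Unh E B A Z := by
  intro D g hw w hwD
  obtain ⟨x, hx, e⟩ := h D g (wave_mono_A hw hA) w hwD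
  exact ⟨x, ⟨hx.1, fun hh => hx.2.1 (hA hh), hx.2.2⟩, e⟩

/-- A wave avoiding additional deleted vertices. -/
theorem wave_mono_Z (h : WaveF E B A Z D g) (hZ : Z ⊆ Z') (hD : ∀ x ∈ D, x ∉ Z') :
    WaveF E B A Z' D g := by
  have hs : ∀ x ∈ Dm E A Z' D, x ∈ Dm E A Z D := fun x hx => ⟨hx.1, hx.2.1, fun hh => hx.2.2 (hZ hh)⟩
  exact ⟨hD, h.notB, fun x hx => h.mem x (hs x hx), fun x hx => h.adj x (hs x hx),
    fun x hx y hy => h.inj x (hs x hx) y (hs y hy), fun y hy hm => h.noray y hy fun n => hs _ (hm n)⟩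

/-- Only `A ∪ Z` matters for the domain of a wave. -/
theorem wave_congr (h : WaveF E B A Z D g) (hAZ : ∀ x, x ∈ A ∨ x ∈ Z → x ∈ A' ∨ x ∈ Z')
    (hD : ∀ x ∈ D, x ∉ Z') : WaveF E B A' Z' D g := by
  have hs : ∀ x ∈ Dm E A' Z' D, x ∈ Dm E A Z D := fun x hx =>
    ⟨hx.1, fun hh => (hAZ x (Or.inl hh)).elim hx.2.1 hx.2.2,
      fun hh => (hAZ x (Or.inr hh)).elim hx.2.1 hx.2.2⟩
  exact ⟨hD, h.notB, fun x hx => h.mem x (hs x hx), fun x hx => h.adj x (hs x hx),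
    fun x hx y hy => h.inj x (hs x hx) y (hs y hy), fun y hy hm => h.noray y hy fun n => hs _ (hm n)⟩

theorem Unh.delete_start (h : Unh E B A Z) {S : Set V} (hS : S ⊆ A) : Unh E B A (Z ∪ S) := by
  intro D g hw w hwD
  have hw' : WaveF E B A Z D g := by
    refine wave_congr hw (fun x hx => ?_) fun x hx hh => hw.notZ x hx (Or.inl hh)
    rcases hx with hx | hx | hx
    · exact Or.inl hx
    · exact Or.inr hx
    · exact Or.inl (hS hx)
  obtain ⟨x, hx, e⟩ := h D g hw' w hwD
  exact ⟨x, ⟨hx.1, hx.2.1, fun hh => hh.elim hx.2.2 fun hs => hx.2.1 (hS hs)⟩, e⟩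

/-! ### Simple sequences and augmentation -/

theorem rtg_mono {r s : V → V → Prop} {a b : V} (h : Relation.ReflTransGen r a b)
    (hrs : ∀ u v, r u v → s u v) : Relation.ReflTransGen s a b := by
  induction h with
  | refl => exact .refl
  | tail _ hst ih => exact ih.tail (hrs _ _ hst)

/-- A relation path can be made simple. -/
theorem exists_simple_seq {r : V → V → Prop} {a b : V} (h : Relation.ReflTransGen r a b) :
    ∃ (n : ℕ) (u : ℕ → V), u 0 = a ∧ u n = b ∧ (∀ i < n, r (u i) (u (i + 1))) ∧
      ∀ i ≤ n, ∀ j ≤ n, u i = u j → i = j := by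
  classical
  have hex : ∃ n, ∃ u : ℕ → V, u 0 = a ∧ u n = b ∧ ∀ i < n, r (u i) (u (i + 1)) := by
    induction h with
    | refl => exact ⟨0, fun _ => a, rfl, rfl, by simp⟩
    | @tail c d _ hcd ih =>
      obtain ⟨n, u, h0, hn, hr⟩ := ih
      refine ⟨n + 1, fun i => if i ≤ n then u i else d, by simp [h0], by simp, fun i hi => ?_⟩
      rcases Nat.lt_or_ge i n with hin | hin
      · simp only [if_pos hin.le, if_pos (Nat.succ_le_of_lt hin)]
        exact hr i hin
      · have : i = n := by omega
        subst this
        simpa [hn] using hcd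
  obtain ⟨u, h0, hn, hr⟩ := Nat.find_spec hex
  have hmin : ∀ m < Nat.find hex, _ := fun m hm => Nat.find_min hex hm
  generalize Nat.find hex = n at *
  have key : ∀ i j, i < j → j ≤ n → u i ≠ u j := by
    intro i j hij hj he
    refine hmin (n - (j - i)) (by omega) ⟨fun m => if m < i then u m else u (m + (j - i)), ?_, ?_, ?_⟩
    · by_cases hi : 0 < i
      · simp [hi, h0]
      · have : i = 0 := by omega
        subst this
        simp only [lt_irrefl, if_false, zero_add, Nat.sub_zero]
        rw [← he, h0]
    · beta_reduce
      rw [if_neg (by omega), ← hn]; congr 1; omega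
    · intro m hm
      beta_reduce
      by_cases h1 : m + 1 < i
      · rw [if_pos (by omega), if_pos h1]
        exact hr m (by omega)
      · by_cases h2 : m < i
        · have : m + 1 = i := by omega
          rw [if_pos h2, if_neg h1, this]
          have e : i + (j - i) = j := by omega
          rw [e, ← he, ← this]
          exact hr m (by omega)
        · rw [if_neg h2, if_neg h1]
          have e : m + 1 + (j - i) = m + (j - i) + 1 := by omega
          rw [e]
          exact hr _ (by omega)
  refine ⟨n, u, h0, hn, hr, fun i hi j hj he => ?_⟩
  rcases lt_trichotomy i j with hij | hij | hij
  · exact absurd he (key i j hij hj)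
  · exact hij
  · exact absurd he.symm (key j i hij hi)

/-- A vertex of `D` missed by `g`. -/
def Lost (E : V → V → Prop) (A Z D : Set V) (g : V → V) (w : V) : Prop :=
  w ∈ D ∧ ∀ x ∈ Dm E A Z D, g x ≠ w

/-- Changing a wave function at one point, towards a lost vertex. -/
theorem wave_update [DecidableEq V] {A₁ : Set V} (h : WaveF E B A Z D g) {s x : V}
    (hs : Lost E A Z D g s)
    (hx : x = s ∨ E s x) (hA : ∀ y ∈ Dm E A₁ Z D, y = x ∨ y ∈ Dm E A Z D) :
    WaveF E B A₁ Z D (Function.update g x s) := by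
  refine ⟨h.notZ, h.notB, fun y hy => ?_, fun y hy => ?_, fun y hy z hz e => ?_, fun y hy hm hst => ?_⟩
  · by_cases e : y = x
    · subst e; simpa using hs.1
    · simpa [e] using h.mem y ((hA y hy).resolve_left e)
  · by_cases e : y = x
    · subst e; simpa using hx
    · simpa [e] using h.adj y ((hA y hy).resolve_left e)
  · by_cases ey : y = x <;> by_cases ez : z = x
    · rw [ey, ez]
    · subst ey
      simp only [Function.update_self, Function.update_of_ne ez] at e
      exact absurd e.symm (hs.2 z ((hA z hz).resolve_left ez))
    · subst ez
      simp only [Function.update_self, Function.update_of_ne ey] at e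
      exact absurd e (hs.2 y ((hA y hy).resolve_left ey))
    · simp only [Function.update_of_ne ez, Function.update_of_ne ey] at e
      exact h.inj y ((hA y hy).resolve_left ey) z ((hA z hz).resolve_left ez) e
  · -- the modified point occurs at most once on a ray
    have : ∃ N, ∀ n, y (N + n) ≠ x := by
      by_cases hex : ∃ n, y n = x
      · obtain ⟨n, hn⟩ := hex
        refine ⟨n + 1, fun m hm' => ?_⟩
        have := hy (hm'.trans hn.symm)
        omega
      · exact ⟨0, fun n hn => hex ⟨_, hn⟩⟩
    obtain ⟨N, hN⟩ := this
    refine h.noray (fun n => y (N + n)) (fun a b hab => Nat.add_left_cancel (hy hab)) (fun n => ?_)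
      (fun n => ?_)
    · exact (hA _ (hm _)).resolve_left (hN n)
    · change y (N + n + 1) = _
      rw [hst, Function.update_of_ne (hN n)]

/-- One step of an alternating path: from `u` forward to `x`, then back along `g`. -/
def AltStep (E : V → V → Prop) (A Z : Set V) (g : V → V) (u u' : V) : Prop :=
  ∃ x, (x = u ∨ E u x) ∧ x ∉ A ∧ x ∉ Z ∧ g x = u'

theorem altStep_mem (h : WaveF E B A Z D g) {u u' : V} (hu : u ∈ D) (hs : AltStep E A Z g u u') :
    u' ∈ D := by
  obtain ⟨x, hx, h1, h2, rfl⟩ := hs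
  exact h.mem x ⟨Rg_of_adj hu hx, h1, h2⟩

theorem altReach_mem (h : WaveF E B A Z D g) {u u' : V} (hu : u ∈ D)
    (hs : Relation.ReflTransGen (AltStep E A Z g) u u') : u' ∈ D := by
  induction hs with
  | refl => exact hu
  | tail _ hst ih => exact altStep_mem h ih hst

/-- The set reached by alternating paths from a subset of a wave is a wave, for any starting set
which blocks the same vertices of its neighbourhood. -/
theorem wave_reach (h : WaveF E B A' Z D g) {S : Set V} (hS : S ⊆ D) {K : Set V}
    (hK : K = {u | ∃ s ∈ S, Relation.ReflTransGen (AltStep E A' Z g) s u})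
    (hA : ∀ y ∈ Rg E K, y ∈ A' → y ∉ Z → y ∈ A) : WaveF E B A Z K g := by
  have hKD : K ⊆ D := by
    intro u hu
    rw [hK] at hu
    obtain ⟨s, hs, hr⟩ := hu
    exact altReach_mem h (hS hs) hr
  have hsub : ∀ x ∈ Dm E A Z K, x ∈ Dm E A' Z D := fun x hx =>
    ⟨Rg_mono hKD hx.1, fun hh => hx.2.1 (hA x hx.1 hh hx.2.2), hx.2.2⟩
  refine ⟨fun x hx => h.notZ x (hKD hx), fun x hx => h.notB x (hKD hx), fun x hx => ?_,
    fun x hx => h.adj x (hsub x hx), fun x hx y hy => h.inj x (hsub x hx) y (hsub y hy),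
    fun y hy hm => h.noray y hy fun n => hsub _ (hm n)⟩
  obtain ⟨u, hu, hux⟩ := hx.1
  have hu' := hu
  rw [hK] at hu' ⊢
  obtain ⟨s, hs, hr⟩ := hu'
  exact ⟨s, hs, hr.tail ⟨x, hux, (hsub x hx).2.1, hx.2.2, rfl⟩⟩

/-- Augmentation along a simple alternating path. -/
theorem aug_seq [DecidableEq V] {A' : Set V} {y : V} (hyA : y ∈ A') :
    ∀ (n : ℕ) (g : V → V) (u : ℕ → V), WaveF E B A' Z D g → Lost E A' Z D g (u 0) →
      (∀ i < n, AltStep E A' Z g (u i) (u (i + 1))) → (∀ i ≤ n, ∀ j ≤ n, u i = u j → i = j) →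
      (y = u n ∨ E (u n) y) →
      ∃ g', WaveF E B (A' \ {y}) Z D g' ∧
        ∀ w, Lost E A' Z D g w → w ≠ u 0 → Lost E (A' \ {y}) Z D g' w := by
  intro n
  induction n with
  | zero =>
    intro g u h hs _ _ hy
    refine ⟨Function.update g y (u 0), wave_update h hs hy fun z hz => ?_, fun w hw hne => ⟨hw.1, ?_⟩⟩
    · by_cases e : z = y
      · exact Or.inl e
      · exact Or.inr ⟨hz.1, fun hh => hz.2.1 ⟨hh, e⟩, hz.2.2⟩
    · intro x hx
      by_cases e : x = y
      · subst e; simpa using hne.symm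
      · rw [Function.update_of_ne e]
        exact hw.2 x ⟨hx.1, fun hh => hx.2.1 ⟨hh, e⟩, hx.2.2⟩
  | succ n ih =>
    intro g u h hs hst hinj hy
    obtain ⟨x, hx, hxA, hxZ, hgx⟩ := hst 0 (Nat.succ_pos n)
    have hxD : x ∈ Dm E A' Z D := ⟨Rg_of_adj hs.1 hx, hxA, hxZ⟩
    have hw1 : WaveF E B A' Z D (Function.update g x (u 0)) :=
      wave_update h hs hx fun z hz => Or.inr hz
    have hl1 : Lost E A' Z D (Function.update g x (u 0)) (u 1) := by
      refine ⟨hgx ▸ h.mem x hxD, fun z hz => ?_⟩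
      by_cases e : z = x
      · subst e
        rw [Function.update_self]
        intro he
        have := hinj 0 (by omega) 1 (by omega) he
        omega
      · rw [Function.update_of_ne e]
        intro he
        exact e (h.inj z hz x hxD (he.trans hgx.symm))
    obtain ⟨g', hg', hlost⟩ := ih (Function.update g x (u 0)) (fun i => u (i + 1)) hw1 hl1
      (fun i hi => by
        obtain ⟨x', hx', h1, h2, h3⟩ := hst (i + 1) (by omega)
        refine ⟨x', hx', h1, h2, ?_⟩
        rw [Function.update_of_ne, h3]
        rintro rfl
        have := hinj (i + 1 + 1) (by omega) 1 (by omega) (h3.symm.trans hgx)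
        omega)
      (fun i hi j hj he => by
        have := hinj (i + 1) (by omega) (j + 1) (by omega) he
        omega) hy
    refine ⟨g', hg', fun w hw hne => hlost w ⟨hw.1, fun z hz => ?_⟩ ?_⟩
    · by_cases e : z = x
      · subst e; simpa using hne.symm
      · rw [Function.update_of_ne e]
        exact hw.2 z hz
    · rintro rfl
      exact hw.2 x hxD hgx

/-- If the web with start `A` is unhindered and a wave for a larger start `A'` loses
`s`, then one vertex of `A' \ A` can be dropped from the start in exchange for `s`. -/
theorem aug {A' : Set V} (hU : Unh E B A Z) (h : WaveF E B A' Z D g) {s : V}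
    (hs : Lost E A' Z D g s) :
    ∃ y ∈ A' \ A, y ∉ Z ∧ y ∈ Rg E D ∧ ∃ g', WaveF E B (A' \ {y}) Z D g' ∧
        ∀ w, Lost E A' Z D g w → w ≠ s → Lost E (A' \ {y}) Z D g' w := by
  classical
  set K : Set V := {u | ∃ t ∈ ({s} : Set V), Relation.ReflTransGen (AltStep E A' Z g) t u} with hK
  have hSD : ({s} : Set V) ⊆ D := by simpa using hs.1
  by_cases hex : ∃ y ∈ Rg E K, y ∈ A' ∧ y ∉ Z ∧ y ∉ A
  · obtain ⟨y, ⟨u, ⟨t, ht, hr⟩, huy⟩, hyA', hyZ, hyA⟩ := hex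
    rw [mem_singleton_iff] at ht
    subst ht
    have huD := altReach_mem h hs.1 hr
    obtain ⟨n, v, h0, hn, hst, hinj⟩ := exists_simple_seq hr
    refine ⟨y, ⟨hyA', hyA⟩, hyZ, Rg_of_adj huD huy, ?_⟩
    have := aug_seq (E := E) (B := B) (Z := Z) (D := D) hyA' n g v h (by rwa [h0]) hst hinj
      (by rwa [hn])
    rwa [h0] at this
  · push Not at hex
    have hw : WaveF E B A Z K g := wave_reach h hSD hK hex
    obtain ⟨x, hx, e⟩ := hU K g hw s ⟨s, rfl, .refl⟩
    refine absurd e (hs.2 x ⟨?_, fun hh => hx.2.1 (hex x hx.1 hh hx.2.2), hx.2.2⟩)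
    refine Rg_mono ?_ hx.1
    rintro u ⟨t, ht, hr⟩
    exact altReach_mem h (hSD ht) hr
end Waves

/-! ### Deleting one more vertex -/
section SafeLink
open Set
variable {V : Type*} {E : V → V → Prop} {B A Z D : Set V} {g : V → V}

/-- Deleting a vertex `z` without hindering the web: a wave survives the deletion,
and its neighbourhood does not shrink. -/
theorem wave_delete_one {z : V} (hU : Unh E B A (insert z Z)) (hz : z ∉ A)
    (h : WaveF E B A Z D g) :
    (∃ g', WaveF E B A (insert z Z) (D \ {z}) g') ∧
      ∀ x ∈ Dm E A (insert z Z) D, x ∈ Rg E (D \ {z}) := by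
  have hsub : ∀ x ∈ Dm E A (insert z Z) D, x ∈ Dm E A Z D ∧ x ≠ z := fun x hx =>
    ⟨⟨hx.1, hx.2.1, fun hh => hx.2.2 (Or.inr hh)⟩, fun hh => hx.2.2 (Or.inl hh)⟩
  have hD1 : ∀ x ∈ D \ {z}, x ∉ insert z Z := fun x hx hh =>
    hh.elim (fun e => hx.2 e) (h.notZ x hx.1)
  have hsub1 : ∀ {A₁}, ∀ x ∈ Dm E A₁ (insert z Z) (D \ {z}), x ∈ Dm E A₁ (insert z Z) D :=
    fun {A₁} x hx => Dm_mono sdiff_subset hx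
  by_cases hzD : z ∈ D
  · have hzDm : z ∈ Dm E A Z D := ⟨subset_Rg hzD, hz, h.notZ z hzD⟩
    by_cases hex : ∃ x ∈ Dm E A (insert z Z) (D \ {z}), g x = z
    · obtain ⟨x1, hx1, hgx1⟩ := hex
      have hx1' := hsub x1 (hsub1 x1 hx1)
      refine ⟨?_, fun x hx => ?_⟩
      · have hw : WaveF E B (insert x1 A) (insert z Z) (D \ {z}) g := by
          have hs : ∀ x ∈ Dm E (insert x1 A) (insert z Z) (D \ {z}), x ∈ Dm E A Z D ∧ x ≠ x1 :=
            fun x hx => ⟨(hsub x (hsub1 x ⟨hx.1, fun hh => hx.2.1 (Or.inr hh), hx.2.2⟩)).1,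
              fun hh => hx.2.1 (Or.inl hh)⟩
          refine ⟨hD1, fun x hx => h.notB x hx.1, fun x hx => ⟨h.mem x (hs x hx).1, fun e => ?_⟩,
            fun x hx => h.adj x (hs x hx).1,
            fun x hx y hy => h.inj x (hs x hx).1 y (hs y hy).1,
            fun y hy hm => h.noray y hy fun n => (hs _ (hm n)).1⟩
          exact (hs x hx).2 (h.inj x (hs x hx).1 x1 hx1'.1 (e.trans hgx1.symm))
        have hl : Lost E (insert x1 A) (insert z Z) (D \ {z}) g (g z) := by
          refine ⟨⟨h.mem z hzDm, fun e => ?_⟩, fun x hx e => ?_⟩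
          · exact hx1'.2 (h.inj x1 hx1'.1 z hzDm (hgx1.trans (Eq.symm e)))
          · have hx2 := hsub x (hsub1 x ⟨hx.1, fun hh => hx.2.1 (Or.inr hh), hx.2.2⟩)
            exact hx2.2 (h.inj x hx2.1 z hzDm e)
        obtain ⟨y, hy, -, -, g', hg', -⟩ := aug hU hw hl
        have hyx : y = x1 := hy.1.resolve_right hy.2
        subst hyx
        have : insert y A \ {y} = A := by
          ext t; constructor
          · rintro ⟨h1, h2⟩; exact h1.resolve_left h2
          · intro ht; exact ⟨Or.inr ht, fun e => hy.2 (e ▸ ht)⟩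
        rw [this] at hg'
        exact ⟨g', hg'⟩
      · by_cases e : g x = z
        · have : x = x1 := h.inj x (hsub x hx).1 x1 hx1'.1 (e.trans hgx1.symm)
          exact this ▸ hx1.1
        · exact Rg_of_adj ⟨h.mem x (hsub x hx).1, e⟩ (h.adj x (hsub x hx).1)
    · push Not at hex
      have hw : WaveF E B A (insert z Z) (D \ {z}) g := by
        refine ⟨hD1, fun x hx => h.notB x hx.1,
          fun x hx => ⟨h.mem x (hsub x (hsub1 x hx)).1, hex x hx⟩,
          fun x hx => h.adj x (hsub x (hsub1 x hx)).1,
          fun x hx y hy => h.inj x (hsub x (hsub1 x hx)).1 y (hsub y (hsub1 y hy)).1,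
          fun y hy hm => h.noray y hy fun n => (hsub _ (hsub1 _ (hm n))).1⟩
      refine ⟨⟨g, hw⟩, fun x hx => ?_⟩
      by_contra hxR
      by_cases e : g x = z
      · obtain ⟨y, hy, hyz⟩ := hU _ _ hw (g z) ⟨h.mem z hzDm, fun e' => (hsub x hx).2
          (h.inj x (hsub x hx).1 z hzDm (e.trans (Eq.symm e')))⟩
        have hy2 := hsub y (hsub1 y hy)
        exact hy2.2 (h.inj y hy2.1 z hzDm hyz)
      · exact hxR (Rg_of_adj ⟨h.mem x (hsub x hx).1, e⟩ (h.adj x (hsub x hx).1))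
  · have e : D \ {z} = D := sdiff_singleton_eq_self hzD
    rw [e]
    refine ⟨⟨g, wave_mono_Z h (subset_insert z Z) (e ▸ hD1)⟩, fun x hx => hx.1⟩

/-- Deleting finitely many vertices, such that each partial deletion leaves the web unhindered. -/
theorem maxD_delete_finite {U : Set V} (hfin : U.Finite) (hUA : ∀ z ∈ U, z ∈ A → z ∈ Z)
    (hU : ∀ W ⊆ U, Unh E B A (Z ∪ W)) :
    maxD E B A Z \ U ⊆ maxD E B A (Z ∪ U) ∧
      ∀ x ∈ Rg E (maxD E B A Z), x ∉ A → x ∉ Z ∪ U → x ∈ Rg E (maxD E B A (Z ∪ U)) := by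
  induction U, hfin using Set.Finite.induction_on with
  | empty => simpa using fun x hx _ _ => hx
  | @insert z U hzU hfin ih =>
    obtain ⟨ih1, ih2⟩ := ih (fun y hy => hUA y (Or.inr hy))
      (fun W hW => hU W (hW.trans (subset_insert z U)))
    by_cases hz : z ∈ Z
    · have e : Z ∪ insert z U = Z ∪ U := by
        rw [union_insert]; exact insert_eq_of_mem (mem_union_left U hz)
      rw [e]
      exact ⟨fun x hx => ih1 ⟨hx.1, fun hh => hx.2 (Or.inr hh)⟩, ih2⟩
    · have hzA : z ∉ A := fun hh => hz (hUA z (Or.inl rfl) hh)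
      obtain ⟨g, hg⟩ := exists_wave_maxD E B A (Z ∪ U)
      have e : Z ∪ insert z U = insert z (Z ∪ U) := union_insert
      rw [e]
      obtain ⟨⟨g', hg'⟩, hR⟩ := wave_delete_one (e ▸ hU _ Subset.rfl) hzA hg
      have hsub := subset_maxD hg'
      refine ⟨fun x hx => hsub ⟨ih1 ⟨hx.1, fun hh => hx.2 (Or.inr hh)⟩, fun hh => hx.2 (Or.inl hh)⟩,
        fun x hx hxA hxZ => ?_⟩
      exact Rg_mono hsub (hR x ⟨ih2 x hx hxA fun hh => hxZ (Or.inr hh), hxA, hxZ⟩)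

/-- A vertex outside the neighbourhood of all waves can be deleted. -/
theorem unh_insert {x : V} (hU : Unh E B A Z) (hx : x ∉ Rg E (maxD E B A Z)) :
    Unh E B A (insert x Z) := by
  intro D g h w hw
  by_contra hex
  push Not at hex
  have hw' : WaveF E B (insert x A) Z D g := by
    refine wave_congr h (fun y hy => ?_) fun y hy hh => h.notZ y hy (Or.inr hh)
    rcases hy with hy | rfl | hy
    · exact Or.inl (Or.inr hy)
    · exact Or.inl (Or.inl rfl)
    · exact Or.inr hy
  have hl : Lost E (insert x A) Z D g w := by
    refine ⟨hw, fun y hy => hex y ⟨hy.1, fun hh => hy.2.1 (Or.inr hh), fun hh => ?_⟩⟩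
    exact hh.elim (fun e => hy.2.1 (Or.inl e)) hy.2.2
  obtain ⟨y, hy, -, hyR, g', hg', -⟩ := aug hU hw' hl
  have hyx : y = x := hy.1.resolve_right hy.2
  subst hyx
  have : insert y A \ {y} = A := by
    ext t; constructor
    · rintro ⟨h1, h2⟩; exact h1.resolve_left h2
    · intro ht; exact ⟨Or.inr ht, fun e => hy.2 (e ▸ ht)⟩
  rw [this] at hg'
  exact hx (Rg_mono (subset_maxD hg') hyR)

/-- `RR P` consists of the vertices that are deleted, or covered by waves, once `P` is deleted. -/
def RR (E : V → V → Prop) (B A Z P : Set V) : Set V :=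
  {x | x ∈ Rg E (maxD E B A (Z ∪ P)) ∨ x ∈ A ∨ x ∈ Z ∨ x ∈ P}

/-- A wave for a deleted set covered by `P` enlarges the maximal wave of `P`, provided the vertices of
`P` it uses have all their out-neighbours covered. -/
theorem dom_wave {P Z₁ : Set V} (hZ : Z ⊆ Z₁) (hZ₁ : Z₁ ⊆ RR E B A Z P)
    (h : WaveF E B A Z₁ D g)
    (hcl : ∀ z ∈ P, z ∈ D → ∀ x, E z x → x ∈ RR E B A Z P) : D \ P ⊆ maxD E B A (Z ∪ P) := by
  classical
  obtain ⟨k, hk⟩ := exists_wave_maxD E B A (Z ∪ P)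
  set M := maxD E B A (Z ∪ P) with hM
  let f : V → V := fun x => if x ∈ Rg E M then k x else g x
  have hcase : ∀ x ∈ Dm E A (Z ∪ P) (M ∪ (D \ P)),
      (x ∈ Rg E M ∧ x ∈ Dm E A (Z ∪ P) M ∧ f x = k x) ∨
      (x ∉ Rg E M ∧ x ∈ Dm E A Z₁ D ∧ f x = g x ∧ g x ∈ D \ P) := by
    intro x hx
    by_cases hxM : x ∈ Rg E M
    · exact Or.inl ⟨hxM, ⟨hxM, hx.2⟩, if_pos hxM⟩
    · refine Or.inr ⟨hxM, ?_⟩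
      have hxRR : x ∉ RR E B A Z P := by
        rintro (h1 | h1 | h1 | h1)
        · exact hxM h1
        · exact hx.2.1 h1
        · exact hx.2.2 (Or.inl h1)
        · exact hx.2.2 (Or.inr h1)
      have hxR : x ∈ Rg E (D \ P) := by
        obtain ⟨u, hu | hu, hux⟩ := hx.1
        · exact absurd ⟨u, hu, hux⟩ hxM
        · exact ⟨u, hu, hux⟩
      have hxD : x ∈ Dm E A Z₁ D := ⟨Rg_mono sdiff_subset hxR, hx.2.1, fun hh => hxRR (hZ₁ hh)⟩
      refine ⟨hxD, if_neg hxM, h.mem x hxD, fun hP => ?_⟩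
      rcases h.adj x hxD with e | e
      · exact hx.2.2 (Or.inr (by rw [e]; exact hP))
      · exact hxRR (hcl _ hP (h.mem x hxD) x e)
  have hw : WaveF E B A (Z ∪ P) (M ∪ (D \ P)) f := by
    refine ⟨?_, ?_, fun x hx => ?_, fun x hx => ?_, fun x hx y hy e => ?_, fun y hy hm hst => ?_⟩
    · rintro x (hx | hx)
      · exact hk.notZ x hx
      · exact fun hh => hh.elim (fun h1 => h.notZ x hx.1 (hZ h1)) hx.2
    · rintro x (hx | hx)
      · exact hk.notB x hx
      · exact h.notB x hx.1
    · rcases hcase x hx with ⟨-, h1, h2⟩ | ⟨-, -, h2, h3⟩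
      · rw [h2]; exact Or.inl (hk.mem x h1)
      · rw [h2]; exact Or.inr h3
    · rcases hcase x hx with ⟨-, h1, h2⟩ | ⟨-, h1, h2, h3⟩
      · rw [h2]; exact hk.adj x h1
      · rw [h2]; exact h.adj x h1
    · rcases hcase x hx with ⟨x0, h1, h2⟩ | ⟨x0, h1, h2, h3⟩ <;>
        rcases hcase y hy with ⟨y0, h1', h2'⟩ | ⟨y0, h1', h2', h3'⟩ <;> rw [h2, h2'] at e
      · exact hk.inj x h1 y h1' e
      · exact absurd (Rg_of_adj (e ▸ hk.mem x h1 : g y ∈ M) (h.adj y h1')) y0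
      · exact absurd (Rg_of_adj (e ▸ hk.mem y h1' : g x ∈ M) (h.adj x h1)) x0
      · exact h.inj x h1 y h1' e
    · by_cases hex : ∃ N, y N ∈ Rg E M
      · obtain ⟨N, hN⟩ := hex
        have hN' : ∀ n, y (N + n) ∈ Rg E M := by
          intro n
          induction n with
          | zero => exact hN
          | succ n ih =>
            rcases hcase _ (hm (N + n)) with ⟨-, h1, h2⟩ | ⟨h0, -⟩
            · rw [← add_assoc, hst, h2]; exact subset_Rg (hk.mem _ h1)
            · exact absurd ih h0
        refine hk.noray (fun n => y (N + n)) (fun a b hab => Nat.add_left_cancel (hy hab))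
          (fun n => ⟨hN' n, (hm _).2⟩) fun n => ?_
        change y (N + n + 1) = _
        rw [hst]; exact if_pos (hN' n)
      · push Not at hex
        refine h.noray y hy (fun n => ?_) fun n => ?_
        · rcases hcase _ (hm n) with ⟨h0, -⟩ | ⟨-, h1, -⟩
          · exact absurd h0 (hex n)
          · exact h1
        · rw [hst]; exact if_neg (hex n)
  exact fun x hx => subset_maxD hw (Or.inr hx)

end SafeLink

/-! ### Linking a single vertex safely -/
section SafeLink2
open Set
variable {V : Type*}

/-- A finite path from `a` to `b` with vertex set contained in `S`, encoded by its edge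
relation `F`. -/
structure IsQ (E : V → V → Prop) (a b : V) (S : Set V) (F : V → V → Prop) : Prop where
  fin : S.Finite
  ha : a ∈ S
  hb : b ∈ S
  left : ∀ u v, F u v → u ∈ S
  right : ∀ u v, F u v → v ∈ S
  edge : ∀ u v, F u v → E u v
  ne_start : ∀ u v, F u v → v ≠ a
  ne_end : ∀ u v, F u v → u ≠ b
  inj_left : ∀ u u' v, F u v → F u' v → u = u'
  inj_right : ∀ u v v', F u v → F u v' → v = v'
  reach : ∀ s ∈ S, Relation.ReflTransGen F a s

theorem exists_isQ {E r : V → V → Prop} {P : Set V} {a b : V} (hr : ∀ u v, r u v → E u v ∧ u ∈ P ∧ v ∈ P)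
    (ha : a ∈ P) (h : Relation.ReflTransGen r a b) : ∃ S F, S ⊆ P ∧ IsQ E a b S F := by
  obtain ⟨n, u, h0, hn, hst, hinj⟩ := exists_simple_seq h
  refine ⟨{x | ∃ i ≤ n, x = u i}, fun x y => ∃ i < n, x = u i ∧ y = u (i + 1), ?_, ?_⟩
  · rintro x ⟨i, hi, rfl⟩
    rcases Nat.eq_zero_or_pos i with rfl | hpos
    · rw [h0]; exact ha
    · have := (hr _ _ (hst (i - 1) (by omega))).2.2
      rwa [Nat.sub_add_cancel hpos] at this
  · constructor
    · refine ((finite_Iic n).image u).subset ?_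
      rintro x ⟨i, hi, rfl⟩
      exact ⟨i, hi, rfl⟩
    · exact ⟨0, Nat.zero_le _, h0.symm⟩
    · exact ⟨n, le_rfl, hn.symm⟩
    · rintro x y ⟨i, hi, rfl, rfl⟩; exact ⟨i, hi.le, rfl⟩
    · rintro x y ⟨i, hi, rfl, rfl⟩; exact ⟨i + 1, hi, rfl⟩
    · rintro x y ⟨i, hi, rfl, rfl⟩; exact (hr _ _ (hst i hi)).1
    · rintro x y ⟨i, hi, rfl, rfl⟩ e
      have := hinj (i + 1) hi 0 (Nat.zero_le _) (e.trans h0.symm)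
      omega
    · rintro x y ⟨i, hi, rfl, rfl⟩ e
      have := hinj i hi.le n le_rfl (e.trans hn.symm)
      omega
    · rintro x x' y ⟨i, hi, rfl, rfl⟩ ⟨j, hj, rfl, e⟩
      have := hinj (i + 1) hi (j + 1) hj e
      have : i = j := by omega
      rw [this]
    · rintro x y y' ⟨i, hi, rfl, rfl⟩ ⟨j, hj, e, rfl⟩
      rw [hinj i hi.le j hj.le e]
    · rintro x ⟨i, hi, rfl⟩
      induction i with
      | zero => rw [h0]
      | succ i ih => exact (ih (by omega)).tail ⟨i, by omega, rfl, rfl⟩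

variable (E : V → V → Prop) (B A Z : Set V) (a : V)

/-- Every vertex of `P` is reachable from `a` inside `P`. -/
def Cn (P : Set V) : Prop :=
  ∀ p ∈ P, Relation.ReflTransGen (fun u v => E u v ∧ u ∈ P ∧ v ∈ P) a p

/-- Sets of candidates for vertices of a safe path from `a`: reachable from `a` inside
the set, and with every finite part deletable without hindering the web. -/
structure SG (P : Set V) : Prop where
  ha : a ∈ P
  onlyA : ∀ p ∈ P, p ∈ A → p = a
  notB : ∀ p ∈ P, p ∉ B
  notZ : ∀ p ∈ P, p ∉ Z
  conn : Cn E a P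
  ind : ∀ F : Set V, F.Finite → F ⊆ P → a ∈ F → Unh E B A (Z ∪ F)

/-- `Q` extends `P` without using vertices of the maximal wave of `P`. -/
def LeP (P Q : Set V) : Prop := P ⊆ Q ∧ ∀ x ∈ maxD E B A (Z ∪ P), x ∉ Q

/-- The vertex `z` needs no further attention: either all its out-neighbours are covered, or it is
used by no wave of a finite part of any extension of `P`. -/
def Settled (P : Set V) (z : V) : Prop :=
  (∀ x, E z x → x ∈ RR E B A Z P) ∨
    ∀ P', SG E B A Z a P' → LeP E B A Z P P' → ∀ F : Set V, F.Finite → F ⊆ P' → a ∈ F → z ∉ F →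
      z ∉ maxD E B A (Z ∪ F)

/-- Waves of finite parts of `P` are waves of `P`, and all vertices of `P` outside `U` are settled. -/
structure Gd (P U : Set V) : Prop where
  sg : SG E B A Z a P
  b1 : ∀ F : Set V, F.Finite → F ⊆ P → a ∈ F → maxD E B A (Z ∪ F) \ P ⊆ maxD E B A (Z ∪ P)
  fin : U.Finite
  settled : ∀ z ∈ P, z ∉ U → Settled E B A Z a P z

variable {E B A Z a}

theorem LeP.maxD_sub {P P' : Set V} (h : LeP E B A Z P P') :
    maxD E B A (Z ∪ P) ⊆ maxD E B A (Z ∪ P') := by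
  obtain ⟨g, hg⟩ := exists_wave_maxD E B A (Z ∪ P)
  refine subset_maxD (wave_mono_Z hg (union_subset_union_right Z h.1) fun x hx hh => ?_)
  exact hh.elim (fun h1 => hg.notZ x hx (Or.inl h1)) (h.2 x hx)

theorem LeP.RR_sub {P P' : Set V} (h : LeP E B A Z P P') : RR E B A Z P ⊆ RR E B A Z P' := by
  rintro x (hx | hx | hx | hx)
  · exact Or.inl (Rg_mono h.maxD_sub hx)
  · exact Or.inr (Or.inl hx)
  · exact Or.inr (Or.inr (Or.inl hx))
  · exact Or.inr (Or.inr (Or.inr (h.1 hx)))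

theorem LeP.refl {P : Set V} : LeP E B A Z P P :=
  ⟨Subset.rfl, fun _ hx hh => maxD_notZ hx (Or.inr hh)⟩

theorem LeP.trans {P P' P'' : Set V} (h : LeP E B A Z P P') (h' : LeP E B A Z P' P'') :
    LeP E B A Z P P'' := ⟨h.1.trans h'.1, fun x hx => h'.2 x (h.maxD_sub hx)⟩

theorem Settled.mono {P P' : Set V} (h : LeP E B A Z P P') {z : V} (hz : Settled E B A Z a P z) :
    Settled E B A Z a P' z := by
  rcases hz with hz | hz
  · exact Or.inl fun x hx => h.RR_sub (hz x hx)
  · exact Or.inr fun P'' h1 h2 => hz P'' h1 (h.trans h2)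

theorem Cn.union {P H : Set V} (hP : Cn E a P) (hH : Cn E a H) : Cn E a (P ∪ H) := by
  rintro p (hp | hp)
  · exact rtg_mono (hP p hp) fun u v h => ⟨h.1, Or.inl h.2.1, Or.inl h.2.2⟩
  · exact rtg_mono (hH p hp) fun u v h => ⟨h.1, Or.inr h.2.1, Or.inr h.2.2⟩

theorem Cn.exists_finite {P F : Set V} (hP : Cn E a P) (ha : a ∈ P) (hF : F.Finite) (hFP : F ⊆ P) :
    ∃ H : Set V, H.Finite ∧ F ⊆ H ∧ H ⊆ P ∧ Cn E a H := by
  induction F, hF using Set.Finite.induction_on with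
  | empty =>
    exact ⟨∅, finite_empty, Subset.rfl, empty_subset P, fun p hp => absurd hp (notMem_empty p)⟩
  | @insert p F _ _ ih =>
    obtain ⟨H, h1, h2, h3, h4⟩ := ih ((subset_insert p F).trans hFP)
    obtain ⟨S, R, hS, hQ⟩ := exists_isQ (fun u v h => h) ha (hP p (hFP (mem_insert p F)))
    refine ⟨H ∪ S, h1.union hQ.fin, insert_subset (Or.inr hQ.hb) (h2.trans subset_union_left),
      union_subset h3 hS, h4.union fun s hs => ?_⟩
    exact rtg_mono (hQ.reach s hs) fun u v h => ⟨hQ.edge u v h, hQ.left u v h, hQ.right u v h⟩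

/-- Within a set with independent finite parts, waves of a finite part survive the
deletion of finitely many further vertices. -/
theorem SG.delete {P F U : Set V} (h : SG E B A Z a P) (hF : F.Finite) (hFP : F ⊆ P) (haF : a ∈ F)
    (hU : U.Finite) (hUP : U ⊆ P) :
    maxD E B A (Z ∪ F) \ U ⊆ maxD E B A (Z ∪ (F ∪ U)) ∧
      ∀ x ∈ Rg E (maxD E B A (Z ∪ F)), x ∉ A → x ∉ Z ∪ (F ∪ U) →
        x ∈ Rg E (maxD E B A (Z ∪ (F ∪ U))) := by
  have := maxD_delete_finite (E := E) (B := B) (A := A) (Z := Z ∪ F) hU (fun z hz hzA => ?_)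
    fun W hW => ?_
  · rwa [union_assoc] at this
  · exact Or.inr ((h.onlyA z (hUP hz) hzA) ▸ haF)
  · rw [union_assoc]
    exact h.ind _ (hF.union (hU.subset hW)) (union_subset hFP (hW.trans hUP)) (Or.inl haF)

theorem Gd.extend {P U H : Set V} (h : Gd E B A Z a P U) (hH : H.Finite)
    (hsg : SG E B A Z a (P ∪ H)) (hle : LeP E B A Z P (P ∪ H)) (hUP : U ⊆ P) :
    Gd E B A Z a (P ∪ H) (U ∪ H) := by
  refine ⟨hsg, fun F hF hFP haF => ?_, h.fin.union hH, fun z hz hzU => ?_⟩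
  · have hUH : U ∪ H ⊆ P ∪ H := union_subset_union_left H hUP
    have hsub := (hsg.delete hF hFP haF (h.fin.union hH) hUH).1
    have hFU : F ∪ (U ∪ H) ⊆ P ∪ H := union_subset hFP hUH
    obtain ⟨g, hg⟩ := exists_wave_maxD E B A (Z ∪ (F ∪ (U ∪ H)))
    have := dom_wave (P := P ∪ H) (Z := Z) subset_union_left (fun x hx => ?_) hg
      fun z hz hzD x hzx => ?_
    · exact fun x hx => this ⟨hsub ⟨hx.1, fun hh => hx.2 (hUH hh)⟩, hx.2⟩
    · rcases hx with hx | hx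
      · exact Or.inr (Or.inr (Or.inl hx))
      · exact Or.inr (Or.inr (Or.inr (hFU hx)))
    · have hzU : z ∉ F ∪ (U ∪ H) := fun hh => hg.notZ z hzD (Or.inr hh)
      have hzP : z ∈ P := hz.resolve_right fun hh => hzU (Or.inr (Or.inr hh))
      rcases h.settled z hzP fun hh => hzU (Or.inr (Or.inl hh)) with hc | hc
      · exact hle.RR_sub (hc x hzx)
      · exact absurd hzD (hc _ hsg hle _ (hF.union (h.fin.union hH)) hFU (Or.inl haF) hzU)
  · exact (h.settled z (hz.resolve_right fun hh => hzU (Or.inr hh)) fun hh => hzU (Or.inl hh)).mono hle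

/-- Adding an uncovered vertex keeps finite parts independent. -/
theorem Gd.ind_insert {P U : Set V} (h : Gd E B A Z a P U) (hUP : U ⊆ P) {x : V}
    (hx : x ∉ RR E B A Z P) (F : Set V) (hF : F.Finite) (hFP : F ⊆ insert x P) (haF : a ∈ F) :
    Unh E B A (Z ∪ F) := by
  by_cases hxF : x ∈ F
  swap
  · exact h.sg.ind F hF (fun y hy => (hFP hy).resolve_left fun e => hxF (e ▸ hy)) haF
  have hax : a ≠ x := fun e => hx (Or.inr (Or.inr (Or.inr (e ▸ h.sg.ha))))
  set F₀ := F \ {x} with hF₀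
  have hF0 : F₀.Finite := hF.subset sdiff_subset
  have hF0P : F₀ ⊆ P := fun y hy => (hFP hy.1).resolve_left hy.2
  have haF0 : a ∈ F₀ := ⟨haF, hax⟩
  have e : Z ∪ F = insert x (Z ∪ F₀) := by
    rw [← union_insert, hF₀, insert_sdiff_singleton, insert_eq_of_mem hxF]
  rw [e]
  refine unh_insert (h.sg.ind F₀ hF0 hF0P haF0) fun hxR => ?_
  have hxA : x ∉ A := fun hh => hx (Or.inr (Or.inl hh))
  have hFU : F₀ ∪ U ⊆ P := union_subset hF0P hUP
  have hxR' := (h.sg.delete hF0 hF0P haF0 h.fin hUP).2 x hxR hxA (by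
    rintro (hh | hh)
    · exact hx (Or.inr (Or.inr (Or.inl hh)))
    · exact hx (Or.inr (Or.inr (Or.inr (hFU hh)))))
  obtain ⟨u, hu, hux⟩ := hxR'
  by_cases huP : u ∈ P
  · have huU : u ∉ F₀ ∪ U := fun hh => maxD_notZ hu (Or.inr hh)
    rcases h.settled u huP fun hh => huU (Or.inr hh) with hc | hc
    · rcases hux with rfl | hux
      · exact hx (Or.inr (Or.inr (Or.inr huP)))
      · exact hx (hc x hux)
    · exact hc P h.sg LeP.refl _ (hF0.union h.fin) hFU (Or.inl haF0) huU hu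
  · exact hx (Or.inl ⟨u, h.b1 _ (hF0.union h.fin) hFU (Or.inl haF0) ⟨hu, huP⟩, hux⟩)

/-- One vertex can be settled by a finite extension. -/
theorem Gd.settle_one {P U : Set V} (h : Gd E B A Z a P U) (hUP : U ⊆ P) (z : V) :
    ∃ P' U', LeP E B A Z P P' ∧ Gd E B A Z a P' U' ∧ U' ⊆ P' ∧ Settled E B A Z a P' z := by
  by_cases hs : Settled E B A Z a P z
  · exact ⟨P, U, LeP.refl, h, hUP, hs⟩
  have hs' := hs
  unfold Settled at hs'
  push Not at hs'
  -- a finite part `F` of an extension whose waves use `z`: adding `F` covers the out-neighbours of `z`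
  obtain ⟨-, P'', hsg, hle, F, hF, hFP, haF, hzF, hzD⟩ := hs'
  obtain ⟨H, hH, hFH, hHP, hcn⟩ := hsg.conn.exists_finite hsg.ha hF hFP
  have hPP : P ∪ H ⊆ P'' := union_subset hle.1 hHP
  have hsg1 : SG E B A Z a (P ∪ H) :=
    ⟨Or.inl h.sg.ha, fun p hp => hsg.onlyA p (hPP hp), fun p hp => hsg.notB p (hPP hp),
      fun p hp => hsg.notZ p (hPP hp), h.sg.conn.union hcn,
      fun F hF hFP haF => hsg.ind F hF (hFP.trans hPP) haF⟩
  have hle1 : LeP E B A Z P (P ∪ H) := ⟨subset_union_left, fun x hx hh => hle.2 x hx (hPP hh)⟩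
  have hg1 := h.extend hH hsg1 hle1 hUP
  have hUH : U ∪ H ⊆ P ∪ H := union_subset_union_left H hUP
  have hFP1 : F ⊆ P ∪ H := hFH.trans subset_union_right
  have hFU : F ∪ (U ∪ H) ⊆ P ∪ H := union_subset hFP1 hUH
  refine ⟨P ∪ H, U ∪ H, hle1, hg1, hUH, Or.inl fun x hzx => ?_⟩
  by_contra hxR
  have hxR' := (hsg1.delete hF hFP1 haF hg1.fin hUH).2 x ⟨z, hzD, Or.inr hzx⟩
    (fun hh => hxR (Or.inr (Or.inl hh))) (by
      rintro (hh | hh)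
      · exact hxR (Or.inr (Or.inr (Or.inl hh)))
      · exact hxR (Or.inr (Or.inr (Or.inr (hFU hh)))))
  obtain ⟨u, hu, hux⟩ := hxR'
  by_cases huP : u ∈ P ∪ H
  · have huU : u ∉ F ∪ (U ∪ H) := fun hh => maxD_notZ hu (Or.inr hh)
    rcases hg1.settled u huP fun hh => huU (Or.inr hh) with hc | hc
    · rcases hux with rfl | hux
      · exact hxR (Or.inr (Or.inr (Or.inr huP)))
      · exact hxR (hc x hux)
    · exact hc _ hsg1 LeP.refl _ (hF.union hg1.fin) hFU (Or.inl haF) huU hu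
  · exact hxR (Or.inl ⟨u, hg1.b1 _ (hF.union hg1.fin) hFU (Or.inl haF) ⟨hu, huP⟩, hux⟩)

/-- Finitely many vertices can be settled one after the other; settledness persists. -/
theorem Gd.settle_finite {P U : Set V} (h : Gd E B A Z a P U) (hUP : U ⊆ P) {W : Set V}
    (hW : W.Finite) (hWP : W ⊆ P) :
    ∃ P' U', LeP E B A Z P P' ∧ Gd E B A Z a P' U' ∧ U' ⊆ P' ∧
      ∀ z ∈ W, Settled E B A Z a P' z := by
  induction W, hW using Set.Finite.induction_on with
  | empty => exact ⟨P, U, LeP.refl, h, hUP, fun z hz => absurd hz (notMem_empty z)⟩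
  | @insert w W _ _ ih =>
    obtain ⟨P1, U1, h1, h2, h3, h4⟩ := ih ((subset_insert w W).trans hWP)
    obtain ⟨P2, U2, k1, k2, k3, k4⟩ := h2.settle_one h3 w
    refine ⟨P2, U2, h1.trans k1, k2, k3, ?_⟩
    rintro z (rfl | hz)
    · exact k4
    · exact (h4 z hz).mono k1

theorem Gd.chain_union {ι : Type*} [Nonempty ι] (P : ι → Set V)
    (hdir : ∀ i j, ∃ k, LeP E B A Z (P i) (P k) ∧ LeP E B A Z (P j) (P k)) (hsg : ∀ i, SG E B A Z a (P i))
    (hb1 : ∀ i, ∀ F : Set V, F.Finite → F ⊆ P i → a ∈ F →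
      maxD E B A (Z ∪ F) \ P i ⊆ maxD E B A (Z ∪ P i))
    (hset : ∀ i, ∀ z ∈ P i, ∃ j, LeP E B A Z (P i) (P j) ∧ Settled E B A Z a (P j) z) :
    Gd E B A Z a (⋃ i, P i) ∅ ∧ ∀ i, LeP E B A Z (P i) (⋃ i, P i) := by
  have hle : ∀ i, LeP E B A Z (P i) (⋃ i, P i) := by
    refine fun i => ⟨subset_iUnion P i, fun x hx hh => ?_⟩
    obtain ⟨j, hj⟩ := mem_iUnion.1 hh
    obtain ⟨k, hk1, hk2⟩ := hdir i j
    exact hk1.2 x hx (hk2.1 hj)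
  have hfin : ∀ F : Set V, F.Finite → F ⊆ ⋃ i, P i → ∃ i, F ⊆ P i := by
    intro F hF hFP
    induction F, hF using Set.Finite.induction_on with
    | empty => exact ⟨Classical.arbitrary ι, empty_subset _⟩
    | @insert w W _ _ ih =>
      obtain ⟨i, hi⟩ := ih ((subset_insert w W).trans hFP)
      obtain ⟨j, hj⟩ := mem_iUnion.1 (hFP (mem_insert w W))
      obtain ⟨k, hk1, hk2⟩ := hdir i j
      exact ⟨k, insert_subset (hk2.1 hj) (hi.trans hk1.1)⟩
  refine ⟨⟨⟨?_, ?_, ?_, ?_, ?_, ?_⟩, ?_, finite_empty, ?_⟩, hle⟩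
  · exact mem_iUnion.2 ⟨Classical.arbitrary ι, (hsg _).ha⟩
  · intro p hp
    obtain ⟨i, hi⟩ := mem_iUnion.1 hp
    exact (hsg i).onlyA p hi
  · intro p hp
    obtain ⟨i, hi⟩ := mem_iUnion.1 hp
    exact (hsg i).notB p hi
  · intro p hp
    obtain ⟨i, hi⟩ := mem_iUnion.1 hp
    exact (hsg i).notZ p hi
  · intro p hp
    obtain ⟨i, hi⟩ := mem_iUnion.1 hp
    exact rtg_mono ((hsg i).conn p hi) fun u v h => ⟨h.1, (hle i).1 h.2.1, (hle i).1 h.2.2⟩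
  · intro F hF hFP haF
    obtain ⟨i, hi⟩ := hfin F hF hFP
    exact (hsg i).ind F hF hi haF
  · intro F hF hFP haF x hx
    obtain ⟨i, hi⟩ := hfin F hF hFP
    exact (hle i).maxD_sub (hb1 i F hF hi haF ⟨hx.1, fun hh => hx.2 ((hle i).1 hh)⟩)
  · intro z hz _
    obtain ⟨i, hi⟩ := mem_iUnion.1 hz
    obtain ⟨j, -, hj⟩ := hset i z hi
    exact hj.mono (hle j)

/-- All vertices can be settled, by `ω` finite extensions. -/
theorem Gd.settle_all {P U : Set V} (h : Gd E B A Z a P U) (hUP : U ⊆ P) :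
    ∃ P', LeP E B A Z P P' ∧ Gd E B A Z a P' ∅ := by
  let S := {p : Set V × Set V // Gd E B A Z a p.1 p.2 ∧ p.2 ⊆ p.1}
  have step : ∀ s : S, ∃ t : S, LeP E B A Z s.1.1 t.1.1 ∧ ∀ z ∈ s.1.1, Settled E B A Z a t.1.1 z := by
    rintro ⟨⟨P, U⟩, hg, hU⟩
    obtain ⟨P', U', h1, h2, h3, h4⟩ := hg.settle_finite hU hg.fin hU
    refine ⟨⟨(P', U'), h2, h3⟩, h1, fun z hz => ?_⟩
    by_cases hzU : z ∈ U
    · exact h4 z hzU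
    · exact (hg.settled z hz hzU).mono h1
  choose f hf1 hf2 using step
  let q : ℕ → S := fun n => f^[n] ⟨(P, U), h, hUP⟩
  have hq : ∀ n, q (n + 1) = f (q n) := fun n => Function.iterate_succ_apply' f n _
  have hq1 : ∀ n, LeP E B A Z (q n).1.1 (q (n + 1)).1.1 := fun n => by rw [hq]; exact hf1 _
  have hmono : ∀ m n, m ≤ n → LeP E B A Z (q m).1.1 (q n).1.1 := by
    intro m n hmn
    induction n, hmn using Nat.le_induction with
    | base => exact LeP.refl
    | succ n _ ih => exact ih.trans (hq1 n)
  obtain ⟨h1, h2⟩ := Gd.chain_union (fun n => (q n).1.1)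
    (fun i j => ⟨max i j, hmono _ _ (le_max_left _ _), hmono _ _ (le_max_right _ _)⟩)
    (fun i => (q i).2.1.sg) (fun i => (q i).2.1.b1)
    (fun i z hz => ⟨i + 1, hq1 i, by rw [hq]; exact hf2 _ z hz⟩)
  exact ⟨_, h2 0, h1⟩

/-- In an unhindered web any single vertex of the starting set can be linked to the target by a path
whose deletion leaves the web unhindered. -/
theorem safe_link (hU : Unh E B A Z) (haA : a ∈ A) (haZ : a ∉ Z) :
    ∃ b S F, IsQ E a b S F ∧ b ∈ B ∧ (∀ s ∈ S, s ∉ Z) ∧ (∀ s ∈ S, s ∈ A → s = a) ∧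
      Unh E B A (Z ∪ S) := by
  have hUa : Unh E B A (Z ∪ {a}) := hU.delete_start (by simpa using haA)
  by_cases haB : a ∈ B
  · refine ⟨a, {a}, fun _ _ => False, ?_, haB, by simpa using haZ, by simp, hUa⟩
    constructor <;> simp [Relation.ReflTransGen.refl]
  by_contra hno
  -- an exit from a settled set would otherwise allow a further extension
  have hexit : ∀ P U, Gd E B A Z a P U → U ⊆ P → ∀ p ∈ P, ∀ x, E p x → x ∉ RR E B A Z P →
      ∃ P', Gd E B A Z a P' ∅ ∧ LeP E B A Z P P' ∧ x ∈ P' := by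
    intro P U h hUP p hp x hpx hx
    have hind := h.ind_insert hUP hx
    have hxP : x ∉ P := fun hh => hx (Or.inr (Or.inr (Or.inr hh)))
    have hxA : x ∉ A := fun hh => hx (Or.inr (Or.inl hh))
    have hxZ : x ∉ Z := fun hh => hx (Or.inr (Or.inr (Or.inl hh)))
    have hreach : Relation.ReflTransGen (fun u v => E u v ∧ u ∈ insert x P ∧ v ∈ insert x P) a x :=
      (rtg_mono (h.sg.conn p hp) fun u v h => ⟨h.1, Or.inr h.2.1, Or.inr h.2.2⟩).tail
        ⟨hpx, Or.inr hp, Or.inl rfl⟩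
    have honlyA : ∀ s ∈ insert x P, s ∈ A → s = a := by
      rintro s (rfl | hs) hsA
      · exact absurd hsA hxA
      · exact h.sg.onlyA s hs hsA
    have hnotZ : ∀ s ∈ insert x P, s ∉ Z := by
      rintro s (rfl | hs)
      · exact hxZ
      · exact h.sg.notZ s hs
    have hxB : x ∉ B := by
      intro hxB
      obtain ⟨S, F, hS, hQ⟩ := exists_isQ (fun u v h => h) (mem_insert_of_mem x h.sg.ha) hreach
      exact hno ⟨x, S, F, hQ, hxB, fun s hs => hnotZ s (hS hs), fun s hs => honlyA s (hS hs),
        hind S hQ.fin hS hQ.ha⟩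
    have hsg : SG E B A Z a (P ∪ {x}) := by
      rw [union_singleton]
      refine ⟨Or.inr h.sg.ha, honlyA, ?_, hnotZ, ?_, hind⟩
      · rintro s (rfl | hs)
        · exact hxB
        · exact h.sg.notB s hs
      · rintro s (rfl | hs)
        · exact hreach
        · exact rtg_mono (h.sg.conn s hs) fun u v h => ⟨h.1, Or.inr h.2.1, Or.inr h.2.2⟩
    have hle : LeP E B A Z P (P ∪ {x}) := by
      refine ⟨subset_union_left, ?_⟩
      rintro y hy (hh | rfl)
      · exact maxD_notZ hy (Or.inr hh)
      · exact hx (Or.inl (subset_Rg hy))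
    obtain ⟨P', h1, h2⟩ := (h.extend (finite_singleton x) hsg hle hUP).settle_all
      (union_subset_union_left _ hUP)
    exact ⟨P', h2, hle.trans h1, h1.1 (Or.inr rfl)⟩
  have hbase : Gd E B A Z a {a} ∅ := by
    refine ⟨⟨rfl, by simp, by simpa using haB, by simpa using haZ, ?_, ?_⟩, ?_, finite_empty, ?_⟩
    · rintro p rfl; exact .refl
    · intro F _ hF haF
      rwa [hF.antisymm (by simpa using haF)]
    · intro F _ hF haF
      rw [hF.antisymm (by simpa using haF)]
      exact sdiff_subset
    · rintro z rfl _
      exact Or.inr fun _ _ _ F _ _ h1 h2 => absurd h1 h2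
  let T := {P : Set V // Gd E B A Z a P ∅}
  obtain ⟨⟨P, hP⟩, hmax⟩ : ∃ m : T, ∀ t : T, LeP E B A Z m.1 t.1 → LeP E B A Z t.1 m.1 := by
    apply exists_maximal_of_chains_bounded (r := fun s t : T => LeP E B A Z s.1 t.1)
    · intro c hc
      rcases c.eq_empty_or_nonempty with rfl | hne
      · exact ⟨⟨_, hbase⟩, by simp⟩
      · have : Nonempty c := hne.to_subtype
        have hdir : ∀ i j : c, ∃ k : c, LeP E B A Z i.1.1 k.1.1 ∧ LeP E B A Z j.1.1 k.1.1 := by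
          intro i j
          by_cases e : i.1 = j.1
          · exact ⟨j, by rw [Subtype.ext e]; exact LeP.refl, LeP.refl⟩
          · rcases hc i.2 j.2 e with h | h
            · exact ⟨j, h, LeP.refl⟩
            · exact ⟨i, LeP.refl, h⟩
        obtain ⟨h1, h2⟩ := Gd.chain_union (fun i : c => i.1.1) hdir
          (fun i => i.1.2.sg) (fun i => i.1.2.b1)
          (fun i z hz => ⟨i, LeP.refl, i.1.2.settled z hz (notMem_empty z)⟩)
        exact ⟨⟨_, h1⟩, fun t ht => h2 ⟨t, ht⟩⟩
    · exact fun h1 h2 => h1.trans h2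
  -- a maximal settled set has no exits, so together with its maximal wave it is a wave losing `a`
  have hclosed : ∀ p ∈ P, ∀ x, E p x → x ∈ RR E B A Z P := by
    intro p hp x hpx
    by_contra hx
    obtain ⟨P', h1, h2, h3⟩ := hexit P ∅ hP (empty_subset _) p hp x hpx hx
    exact hx (Or.inr (Or.inr (Or.inr ((hmax ⟨P', h1⟩ h2).1 h3))))
  classical
  obtain ⟨k, hk⟩ := exists_wave_maxD E B A (Z ∪ P)
  set M := maxD E B A (Z ∪ P) with hM
  let f : V → V := fun x => if x ∈ P then x else k x
  have hcase : ∀ x ∈ Dm E A Z (M ∪ P), (x ∈ P ∧ f x = x) ∨ (x ∈ Dm E A (Z ∪ P) M ∧ f x = k x) := by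
    intro x hx
    by_cases hxP : x ∈ P
    · exact Or.inl ⟨hxP, if_pos hxP⟩
    · refine Or.inr ⟨⟨?_, hx.2.1, fun hh => hh.elim hx.2.2 hxP⟩, if_neg hxP⟩
      obtain ⟨u, hu | hu, hux⟩ := hx.1
      · exact ⟨u, hu, hux⟩
      · rcases hux with rfl | hux
        · exact absurd hu hxP
        · rcases hclosed u hu x hux with h | h | h | h
          · exact h
          · exact absurd h hx.2.1
          · exact absurd h hx.2.2
          · exact absurd h hxP
  have hMP : ∀ x ∈ M, x ∉ P := fun x hx hh => hk.notZ x hx (Or.inr hh)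
  have hw : WaveF E B A Z (M ∪ P) f := by
    refine ⟨?_, ?_, fun x hx => ?_, fun x hx => ?_, fun x hx y hy e => ?_, fun y hy hm hst => ?_⟩
    · rintro x (hx | hx)
      · exact fun hh => hk.notZ x hx (Or.inl hh)
      · exact hP.sg.notZ x hx
    · rintro x (hx | hx)
      · exact hk.notB x hx
      · exact hP.sg.notB x hx
    · rcases hcase x hx with ⟨h1, h2⟩ | ⟨h1, h2⟩ <;> rw [h2]
      · exact Or.inr h1
      · exact Or.inl (hk.mem x h1)
    · rcases hcase x hx with ⟨h1, h2⟩ | ⟨h1, h2⟩ <;> rw [h2]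
      · exact Or.inl rfl
      · exact hk.adj x h1
    · rcases hcase x hx with ⟨h1, h2⟩ | ⟨h1, h2⟩ <;>
        rcases hcase y hy with ⟨h1', h2'⟩ | ⟨h1', h2'⟩ <;> rw [h2, h2'] at e
      · exact e
      · exact absurd h1 (e ▸ hMP _ (hk.mem y h1'))
      · exact absurd h1' (e ▸ hMP _ (hk.mem x h1))
      · exact hk.inj x h1 y h1' e
    · have hc : ∀ n, y n ∈ Dm E A (Z ∪ P) M ∧ f (y n) = k (y n) := by
        intro n
        rcases hcase _ (hm n) with ⟨-, h2⟩ | h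
        · have := hy ((hst n).trans h2)
          omega
        · exact h
      exact hk.noray y hy (fun n => (hc n).1) fun n => by rw [hst, (hc n).2]
  obtain ⟨x, hx, hxa⟩ := hU _ _ hw a (Or.inr hP.sg.ha)
  rcases hcase x hx with ⟨h1, h2⟩ | ⟨h1, h2⟩ <;> rw [h2] at hxa
  · exact hx.2.1 (hxa ▸ haA)
  · exact hMP _ (hk.mem x h1) (hxa ▸ hP.sg.ha)
end SafeLink2

/-! ### Linkings, and the countable case -/
section Link
open Set
variable {V : Type*}

/-- A linkage encoded by its edge relation: a biunique relation `F` along which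
every undeleted vertex of `A` is joined to `B`. -/
structure Linking (E : V → V → Prop) (B A Z : Set V) (F : V → V → Prop) : Prop where
  edge : ∀ u v, F u v → E u v
  leftZ : ∀ u v, F u v → u ∉ Z
  rightZ : ∀ u v, F u v → v ∉ Z
  notA : ∀ u v, F u v → v ∉ A
  inj_left : ∀ u u' v, F u v → F u' v → u = u'
  inj_right : ∀ u v v', F u v → F u v' → v = v'
  reach : ∀ a ∈ A, a ∉ Z → ∃ b ∈ B, Relation.ReflTransGen F a b

variable {E : V → V → Prop} {B A Z D : Set V} {g : V → V}

/-- The backward orbit of a vertex not on a cycle ends in the starting set. -/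
theorem WaveF.orbit_hits (h : WaveF E B A Z D g) {x : V} (hx : x ∈ Rg E D) (hxZ : x ∉ Z)
    (hper : ∀ k, g^[k + 1] x ≠ x) : ∃ n, g^[n] x ∈ A ∧ ∀ i < n, g^[i] x ∈ Dm E A Z D := by
  classical
  have hex : ∃ n, g^[n] x ∉ Dm E A Z D := by
    by_contra hall
    push Not at hall
    by_cases hinj : Function.Injective fun n => g^[n] x
    · exact h.noray _ hinj hall fun n => Function.iterate_succ_apply' g n x
    · have key : ∀ i k, g^[i] x = g^[i + (k + 1)] x → g^[k + 1] x = x := by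
        intro i
        induction i with
        | zero => intro k hk; simpa using hk.symm
        | succ i ih =>
          intro k hk
          refine ih k (h.inj _ (hall _) _ (hall _) ?_)
          rw [← Function.iterate_succ_apply' g, ← Function.iterate_succ_apply' g, hk]
          congr 1; omega
      simp only [Function.Injective, not_forall] at hinj
      obtain ⟨i, j, hij, hne⟩ := hinj
      rcases lt_or_gt_of_ne hne with hlt | hlt
      · exact hper (j - i - 1) (key i _ (by rw [hij]; congr 1; omega))
      · exact hper (i - j - 1) (key j _ (by rw [← hij]; congr 1; omega))
  refine ⟨Nat.find hex, ?_, fun i hi => not_not.1 (Nat.find_min hex hi)⟩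
  have hn := Nat.find_spec hex
  have hlt : ∀ i < Nat.find hex, g^[i] x ∈ Dm E A Z D := fun i hi => not_not.1 (Nat.find_min hex hi)
  generalize Nat.find hex = n at *
  by_contra hA
  apply hn
  rcases Nat.eq_zero_or_pos n with rfl | hpos
  · exact ⟨hx, hA, hxZ⟩
  · obtain ⟨m, rfl⟩ : ∃ m, n = m + 1 := ⟨n - 1, by omega⟩
    have hD : g^[m + 1] x ∈ D := by
      rw [Function.iterate_succ_apply']; exact h.mem _ (hlt m (by omega))
    exact ⟨subset_Rg hD, hA, h.notZ _ hD⟩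

/-- Iterating the safe linking of single vertices. -/
theorem linking_countable (hU : Unh E B A Z) (hA : A.Countable) : ∃ F, Linking E B A Z F := by
  classical
  rcases A.eq_empty_or_nonempty with rfl | hne
  · refine ⟨fun _ _ => False, ?_⟩
    constructor <;> simp
  obtain ⟨f, hf⟩ := hA.exists_eq_range hne
  let S := {p : Set V // Z ⊆ p ∧ Unh E B A p}
  have step : ∀ (s : S) (a : V), ∃ (t : S) (F : V → V → Prop), s.1 ⊆ t.1 ∧
      (∀ u v, F u v → E u v ∧ u ∉ s.1 ∧ v ∉ s.1 ∧ u ∈ t.1 ∧ v ∈ t.1 ∧ v ∉ A) ∧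
      (∀ u u' v, F u v → F u' v → u = u') ∧ (∀ u v v', F u v → F u v' → v = v') ∧
      (a ∈ A → a ∉ s.1 → ∃ b ∈ B, Relation.ReflTransGen F a b) ∧
      (∀ x ∈ A, x ∈ t.1 → x ∉ s.1 → x = a) := by
    intro s a
    by_cases h : a ∈ A ∧ a ∉ s.1
    · obtain ⟨b, Q, F, hQ, hb, h1, h2, h3⟩ := safe_link s.2.2 h.1 h.2
      refine ⟨⟨s.1 ∪ Q, s.2.1.trans subset_union_left, h3⟩, F, subset_union_left, fun u v huv => ?_,
        hQ.inj_left, hQ.inj_right, fun _ _ => ⟨b, hb, hQ.reach b hQ.hb⟩,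
        fun x hx hxt hxs => h2 x (hxt.resolve_left hxs) hx⟩
      have hu := hQ.left u v huv
      have hv := hQ.right u v huv
      exact ⟨hQ.edge u v huv, h1 u hu, h1 v hv, Or.inr hu, Or.inr hv,
        fun hh => hQ.ne_start u v huv (h2 v hv hh)⟩
    · exact ⟨s, fun _ _ => False, Subset.rfl, by simp, by simp, by simp,
        fun h1 h2 => absurd ⟨h1, h2⟩ h, fun x _ h1 h2 => absurd h1 h2⟩
  choose t F hsub hF hl hr hreach honly using step
  let q : ℕ → S := fun n => Nat.rec ⟨Z, Subset.rfl, hU⟩ (fun n s => t s (f n)) n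
  have hq : ∀ n, q (n + 1) = t (q n) (f n) := fun n => rfl
  have hmono : ∀ m n, m ≤ n → (q m).1 ⊆ (q n).1 := by
    intro m n hmn
    induction n, hmn using Nat.le_induction with
    | base => exact Subset.rfl
    | succ n _ ih => exact ih.trans (hsub _ _)
  -- edges of different stages share no vertices
  have hsame : ∀ m n u v u' v', F (q m) (f m) u v → F (q n) (f n) u' v' →
      (u = u' ∨ v = v') → m = n := by
    intro m n u v u' v' h1 h2 h3
    have k1 := hF _ _ _ _ h1
    have k2 := hF _ _ _ _ h2
    rcases lt_trichotomy m n with hmn | hmn | hmn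
    · have hs := hmono (m + 1) n hmn
      rcases h3 with rfl | rfl
      · exact absurd (hs k1.2.2.2.1) k2.2.1
      · exact absurd (hs k1.2.2.2.2.1) k2.2.2.1
    · exact hmn
    · have hs := hmono (n + 1) m hmn
      rcases h3 with rfl | rfl
      · exact absurd (hs k2.2.2.2.1) k1.2.1
      · exact absurd (hs k2.2.2.2.2.1) k1.2.2.1
  refine ⟨fun u v => ∃ n, F (q n) (f n) u v, ?_, ?_, ?_, ?_, ?_, ?_, ?_⟩
  · rintro u v ⟨n, h⟩; exact (hF _ _ _ _ h).1
  · rintro u v ⟨n, h⟩ hu; exact (hF _ _ _ _ h).2.1 ((q n).2.1 hu)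
  · rintro u v ⟨n, h⟩ hu; exact (hF _ _ _ _ h).2.2.1 ((q n).2.1 hu)
  · rintro u v ⟨n, h⟩; exact (hF _ _ _ _ h).2.2.2.2.2
  · rintro u u' v ⟨n, h⟩ ⟨m, h'⟩
    obtain rfl := hsame _ _ _ _ _ _ h h' (Or.inr rfl)
    exact hl _ _ _ _ _ h h'
  · rintro u v v' ⟨n, h⟩ ⟨m, h'⟩
    obtain rfl := hsame _ _ _ _ _ _ h h' (Or.inl rfl)
    exact hr _ _ _ _ _ h h'
  · intro a haA haZ
    have hex : ∃ n, f n = a := by rw [hf] at haA; exact haA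
    have hn := Nat.find_spec hex
    have hmin : ∀ m < Nat.find hex, f m ≠ a := fun m hm => Nat.find_min hex hm
    generalize Nat.find hex = n at *
    have hnot : ∀ m ≤ n, a ∉ (q m).1 := by
      intro m hm
      induction m with
      | zero => exact haZ
      | succ m ih =>
        intro h
        exact hmin m (by omega) (honly _ _ a haA h (ih (by omega))).symm
    obtain ⟨b, hb, hab⟩ := hreach (q n) (f n) (hn ▸ haA) (hn ▸ hnot n le_rfl)
    rw [hn] at hab
    exact ⟨b, hb, rtg_mono hab fun u v h => ⟨n, by rwa [hn]⟩⟩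
end Link

/-! ### Regular index orders and large sets of indices -/
section Idx
open Set Cardinal
universe u

/-- A well-order behaving like the initial ordinal of the uncountable regular cardinal `κ`. -/
structure RegIdx (κ : Cardinal.{u}) (ι : Type u) [LinearOrder ι] : Prop where
  unc : ℵ₀ < κ
  reg : κ.IsRegular
  card : #ι = κ
  seg : ∀ i : ι, #(Iio i) < κ
  bdd : ∀ s : Set ι, #s < κ → ∃ b, ∀ i ∈ s, i < b

theorem regIdx_ord {κ : Cardinal.{u}} (h : κ.IsRegular) (hu : ℵ₀ < κ) :
    RegIdx κ κ.ord.ToType := by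
  refine ⟨hu, h, mk_ord_toType κ, fun i => mk_Iio_toType_ord_lt i, fun s hs => ?_⟩
  by_contra hno
  push Not at hno
  have hc : IsCofinal s := fun a => hno a
  have := Order.cof_le hc
  rw [Ordinal.cof_toType, h.cof_ord] at this
  exact absurd hs (not_lt.2 this)

variable {κ : Cardinal.{u}} {ι V : Type u} [LinearOrder ι]

namespace RegIdx
theorem small_countable (hκ : RegIdx κ ι) {s : Set V} (hs : s.Countable) : #s < κ :=
  lt_of_le_of_lt (mk_le_aleph0_iff.2 hs.to_subtype) hκ.unc

theorem small_finite (hκ : RegIdx κ ι) {s : Set V} (hs : s.Finite) : #s < κ := hκ.small_countable hs.countable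

theorem small_union (hκ : RegIdx κ ι) {s t : Set V} (hs : #s < κ) (ht : #t < κ) : #(s ∪ t : Set V) < κ :=
  lt_of_le_of_lt (mk_union_le s t) (add_lt_of_lt hκ.unc.le hs ht)

theorem small_biUnion (hκ : RegIdx κ ι) {W : Type u} {s : Set W} {t : W → Set V} (hs : #s < κ)
    (ht : ∀ a ∈ s, #(t a) < κ) : #(⋃ a ∈ s, t a : Set V) < κ :=
  (card_biUnion_lt_iff_forall_of_isRegular (t := fun a _ => t a) hκ.reg hs).2 ht

theorem small_iUnion (hκ : RegIdx κ ι) {W : Type u} {t : W → Set V} (hs : #W < κ)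
    (ht : ∀ a, #(t a) < κ) : #(⋃ a, t a : Set V) < κ :=
  (card_iUnion_lt_iff_forall_of_isRegular hκ.reg hs).2 ht

theorem small_iUnion_nat (hκ : RegIdx κ ι) {t : ℕ → Set V} (ht : ∀ a, #(t a) < κ) : #(⋃ a, t a : Set V) < κ := by
  have h := hκ.small_iUnion (W := ULift.{u} ℕ) (t := fun n => t n.down)
    (by simpa using hκ.unc) (fun a => ht _)
  refine lt_of_le_of_lt (mk_le_mk_of_subset ?_) h
  intro x hx
  obtain ⟨n, hn⟩ := mem_iUnion.1 hx
  exact mem_iUnion.2 ⟨⟨n⟩, hn⟩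

theorem bdd_image (hκ : RegIdx κ ι) {W : Type u} {s : Set W} (hs : #s < κ) (f : W → ι) : ∃ b, ∀ x ∈ s, f x < b := by
  obtain ⟨b, hb⟩ := hκ.bdd (f '' s) (lt_of_le_of_lt mk_image_le hs)
  exact ⟨b, fun x hx => hb _ ⟨x, hx, rfl⟩⟩

theorem exists_gt (hκ : RegIdx κ ι) (i : ι) : ∃ j, i < j := by
  obtain ⟨b, hb⟩ := hκ.bdd {i} (hκ.small_finite (finite_singleton i))
  exact ⟨b, hb i rfl⟩

theorem seg_le (hκ : RegIdx κ ι) (i : ι) : #(Iic i) < κ := by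
  rw [← Iio_union_right]
  exact hκ.small_union (hκ.seg i) (hκ.small_finite (finite_singleton i))

theorem nonempty_idx (hκ : RegIdx κ ι) : Nonempty ι := by
  obtain ⟨b, -⟩ := hκ.bdd ∅ (hκ.small_finite finite_empty)
  exact ⟨b⟩

end RegIdx

/-- Indices closed under `f`. -/
def Cl (f : ι → ι) : Set ι := {γ | (∃ β, β < γ) ∧ ∀ β < γ, f β < γ}

/-- A set of indices is large if it contains all indices closed under some function; the large
sets generate the closed unbounded filter. -/
def Lrg (S : Set ι) : Prop := ∃ f : ι → ι, Cl f ⊆ S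

theorem Lrg.mono {S T : Set ι} (h : Lrg S) (hST : S ⊆ T) : Lrg T := by
  obtain ⟨f, hf⟩ := h; exact ⟨f, hf.trans hST⟩

theorem Lrg.inter {S T : Set ι} (hS : Lrg S) (hT : Lrg T) : Lrg (S ∩ T) := by
  obtain ⟨f, hf⟩ := hS
  obtain ⟨g, hg⟩ := hT
  refine ⟨fun i => max (f i) (g i), fun γ hγ => ⟨hf ⟨hγ.1, fun β hβ => ?_⟩, hg ⟨hγ.1, fun β hβ => ?_⟩⟩⟩
  · exact lt_of_le_of_lt (le_max_left _ _) (hγ.2 β hβ)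
  · exact lt_of_le_of_lt (le_max_right _ _) (hγ.2 β hβ)

/-- Being a limit index. -/
def Lim (γ : ι) : Prop := (∃ β, β < γ) ∧ ∀ β < γ, ∃ β', β < β' ∧ β' < γ

theorem lrg_lim (hκ : RegIdx κ ι) : Lrg {γ : ι | Lim γ} := by
  choose f hf using hκ.exists_gt
  exact ⟨f, fun γ hγ => ⟨hγ.1, fun β hβ => ⟨f β, hf β, hγ.2 β hβ⟩⟩⟩

theorem exists_least_gt_seq [WellFoundedLT ι] (hκ : RegIdx κ ι) {s : ℕ → ι} : ∃ γ, (∀ n, s n < γ) ∧ ∀ β < γ, ∃ n, β ≤ s n := by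
  have hne : {γ | ∀ n, s n < γ}.Nonempty := by
    obtain ⟨b, hb⟩ := hκ.bdd (range s) (hκ.small_countable (countable_range s))
    exact ⟨b, fun n => hb _ ⟨n, rfl⟩⟩
  refine ⟨wellFounded_lt.min _ hne, WellFounded.min_mem wellFounded_lt _ hne, fun β hβ => ?_⟩
  by_contra hno
  push Not at hno
  exact WellFounded.not_lt_min wellFounded_lt (s := {γ | ∀ n, s n < γ}) hno hβ

theorem cl_unbdd [WellFoundedLT ι] (hκ : RegIdx κ ι) (f : ι → ι) (δ : ι) : ∃ γ ∈ Cl f, δ < γ := by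
  -- each step dominates `f` on the whole segment below
  have hst : ∀ i : ι, ∃ j, i < j ∧ ∀ β ≤ i, f β < j := by
    intro i
    obtain ⟨b, hb⟩ := hκ.bdd_image (hκ.seg_le i) f
    obtain ⟨c, hc⟩ := hκ.exists_gt i
    exact ⟨max b c, lt_of_lt_of_le hc (le_max_right _ _),
      fun β hβ => lt_of_lt_of_le (hb β hβ) (le_max_left _ _)⟩
  choose nx h1 h2 using hst
  obtain ⟨γ, ha, hb⟩ := exists_least_gt_seq hκ (s := fun n => nx^[n] δ)
  refine ⟨γ, ⟨⟨δ, ha 0⟩, fun β hβ => ?_⟩, ha 0⟩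
  obtain ⟨n, hn⟩ := hb β hβ
  refine lt_trans (h2 _ β hn) ?_
  have := ha (n + 1)
  simpa only [Function.iterate_succ_apply'] using this

theorem Lrg.unbdd [WellFoundedLT ι] (hκ : RegIdx κ ι) {S : Set ι} (hS : Lrg S) (δ : ι) : ∃ γ ∈ S, δ < γ := by
  obtain ⟨f, hf⟩ := hS
  obtain ⟨γ, hγ, h⟩ := cl_unbdd hκ f δ
  exact ⟨γ, hf hγ, h⟩

/-- Diagonal intersections of large sets are large. -/
theorem Lrg.diag (hκ : RegIdx κ ι) {X : ι → Set V} (hX : ∀ i, #(X i) < κ) (hmono : ∀ i j, i ≤ j → X i ⊆ X j)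
    (S : V → Set ι) (hS : ∀ v, Lrg (S v)) : Lrg {γ | ∀ β < γ, ∀ v ∈ X β, γ ∈ S v} := by
  choose f hf using hS
  have hst : ∀ i : ι, ∃ j, ∀ v ∈ X i, ∀ β ≤ i, f v β < j := by
    intro i
    have : ∀ v, ∃ b, ∀ β ≤ i, f v β < b := fun v => hκ.bdd_image (hκ.seg_le i) (f v)
    choose b hb using this
    obtain ⟨c, hc⟩ := hκ.bdd_image (hX i) b
    exact ⟨c, fun v hv β hβ => (hb v β hβ).trans (hc v hv)⟩
  choose F hF using hst
  refine ⟨F, fun γ hγ β hβ v hv => hf v ⟨hγ.1, fun δ hδ => ?_⟩⟩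
  refine (hF (max β δ) v (hmono _ _ (le_max_left _ _) hv) δ (le_max_right _ _)).trans ?_
  exact hγ.2 _ (max_lt hβ hδ)

/-- Injective choice from unbounded sets of indices. -/
theorem exists_inj_choice [WellFoundedLT ι] (hκ : RegIdx κ ι) {P : Set V} (hP : #P ≤ κ) (S : V → Set ι)
    (hS : ∀ v ∈ P, ∀ δ, ∃ γ ∈ S v, δ < γ) :
    ∃ β : V → ι, (∀ v ∈ P, β v ∈ S v) ∧ ∀ v ∈ P, ∀ w ∈ P, β v = β w → v = w := by
  classical
  obtain ⟨e⟩ : Nonempty (P ↪ ι) := by rw [← hκ.card] at hP; exact hP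
  have hcard : ∀ v : P, #{w : P | e w < e v} < κ := by
    intro v
    refine lt_of_le_of_lt ?_ (hκ.seg (e v))
    exact ⟨⟨fun w => ⟨e w.1, w.2⟩, fun w w' h =>
      Subtype.ext (e.injective (Subtype.ext_iff.1 h))⟩⟩
  have hex : ∀ (v : P) (b : P → ι), ∃ γ ∈ S v.1, ∀ w : P, e w < e v → b w < γ := by
    intro v b
    obtain ⟨c, hc⟩ := hκ.bdd_image (hcard v) b
    obtain ⟨γ, hγ, h⟩ := hS v.1 v.2 c
    exact ⟨γ, hγ, fun w hw => (hc w hw).trans h⟩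
  choose nx h1 h2 using hex
  have hwf : WellFounded fun w v : P => e w < e v := InvImage.wf e wellFounded_lt
  let β : P → ι := hwf.fix fun v ih => nx v fun w => if h : e w < e v then ih w h else e v
  have hβ : ∀ v, β v = nx v fun w => if e w < e v then β w else e v := by
    intro v
    change hwf.fix _ v = _
    rw [hwf.fix_eq]
    congr 1
  have hlt : ∀ w v, e w < e v → β w < β v := by
    intro w v h
    have := h2 v (fun w => if e w < e v then β w else e v) w h
    rw [hβ v]
    beta_reduce at this
    rwa [if_pos h] at this
  refine ⟨fun v => if h : v ∈ P then β ⟨v, h⟩ else hκ.nonempty_idx.some, fun v hv => ?_, fun v hv w hw h => ?_⟩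
  · beta_reduce
    rw [dif_pos hv, hβ]; exact h1 ⟨v, hv⟩ _
  · beta_reduce at h
    rw [dif_pos hv, dif_pos hw] at h
    by_contra hne
    have hne' : e ⟨v, hv⟩ ≠ e ⟨w, hw⟩ := fun h => hne (by simpa using e.injective h)
    rcases lt_or_gt_of_ne hne' with h' | h'
    · exact (hlt _ _ h').ne h
    · exact (hlt _ _ h').ne h.symm

theorem cl_closed {f : ι → ι} {γ : ι} (h : ∀ β < γ, ∃ γ' ∈ Cl f, β < γ' ∧ γ' ≤ γ) (h0 : ∃ β, β < γ) :
    γ ∈ Cl f := by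
  refine ⟨h0, fun β hβ => ?_⟩
  obtain ⟨γ', hc, h1, h2⟩ := h β hβ
  exact lt_of_lt_of_le (hc.2 β h1) h2

end Idx

/-! ### Ladders -/
section LadderSec
open Set Cardinal
universe u
variable {κ : Cardinal.{u}} {ι V : Type u} [LinearOrder ι]
variable {E : V → V → Prop} {B A : Set V}

/-- The maximal wave set after adding `X` to the starting set. -/
def LD (E : V → V → Prop) (B A X : Set V) : Set V := maxD E B (A ∪ X) ∅

/-- The domain of the maximal wave for the starting set `A ∪ X`. -/
def LDm (E : V → V → Prop) (B A X : Set V) : Set V := Dm E (A ∪ X) ∅ (LD E B A X)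

/-- The graph of the wave function `g` on its domain. -/
def Gr (E : V → V → Prop) (B A : Set V) (g : V → V) (X : Set V) (x w : V) : Prop :=
  x ∈ LDm E B A X ∧ g x = w

theorem mem_LDm {X : Set V} {x : V} : x ∈ LDm E B A X ↔ x ∈ Rg E (LD E B A X) ∧ x ∉ A ∧ x ∉ X := by
  simp only [LDm, Dm, mem_ofPred_eq, mem_union, not_or, mem_empty_iff_false, not_false_eq_true, and_true]

theorem LD_mono {X Y : Set V} (h : X ⊆ Y) : LD E B A X ⊆ LD E B A Y :=
  maxD_mono (union_subset_union_right A h)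

/-- A continuous chain of small sets `X i`, with one function `g` which is a wave function for all
the maximal waves belonging to the starting sets `A ∪ X i`. -/
structure Ladder (κ : Cardinal.{u}) (E : V → V → Prop) (B A : Set V) (X : ι → Set V) (g : V → V) :
    Prop where
  small : ∀ i, #(X i) < κ
  mono : ∀ i j, i ≤ j → X i ⊆ X j
  cont : ∀ i, Lim i → ∀ x ∈ X i, ∃ j < i, x ∈ X j
  wave : ∀ i, WaveF E B (A ∪ X i) ∅ (LD E B A (X i)) g

theorem WaveF.congr_fun {Z D : Set V} {g g' : V → V} (h : WaveF E B A Z D g)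
    (he : ∀ x ∈ Dm E A Z D, g' x = g x) : WaveF E B A Z D g' := by
  refine ⟨h.notZ, h.notB, fun x hx => ?_, fun x hx => ?_, fun x hx y hy e => ?_, fun y hy hm hst => ?_⟩
  · rw [he x hx]; exact h.mem x hx
  · rw [he x hx]; exact h.adj x hx
  · rw [he x hx, he y hy] at e; exact h.inj x hx y hy e
  · exact h.noray y hy hm fun n => by rw [hst, he _ (hm n)]

/-- Ladders closed under any operation `Ψ` on the levels constructed so far exist. -/
theorem exists_ladder [WellFoundedLT ι] (hκ : RegIdx κ ι)
    (Ψ : ι → Set V → (V → V → Prop) → Set V → Set V) :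
    ∃ (X : ι → Set V) (g : V → V), Ladder κ E B A X g ∧
      ∀ i j k, i ≤ j → j < k → #(Ψ i (X i) (Gr E B A g (X i)) (X j)) < κ →
        Ψ i (X i) (Gr E B A g (X i)) (X j) ⊆ X k := by
  classical
  choose h hh using fun S : Set V => exists_wave_maxD E B (A ∪ S) ∅
  -- the graph of the wave function at level `i`, in terms of the levels up to `i` only
  let G : (ι → Set V) → ι → V → V → Prop := fun X i x w => x ∈ LDm E B A (X i) ∧ ∃ j ≤ i,
    x ∈ Rg E (LD E B A (X j)) ∧ (∀ k < j, x ∉ Rg E (LD E B A (X k))) ∧ h (X j) x = w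
  have hG : ∀ X X' i, (∀ j ≤ i, X j = X' j) → G X i = G X' i := by
    intro X X' i he
    funext x w
    have : ∀ (Y Y' : ι → Set V), (∀ j ≤ i, Y j = Y' j) → G Y i x w → G Y' i x w := by
      rintro Y Y' he ⟨h1, j, hj, h2, h3, h4⟩
      refine ⟨he i le_rfl ▸ h1, j, hj, he j hj ▸ h2, fun k hk => he k (hk.le.trans hj) ▸ h3 k hk, he j hj ▸ h4⟩
    exact propext ⟨this X X' he, this X' X fun j hj => (he j hj).symm⟩
  let Ψ' : ι → Set V → (V → V → Prop) → Set V → Set V := fun i a b c =>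
    if #(Ψ i a b c) < κ then Ψ i a b c else ∅
  have hΨ' : ∀ i a b c, #(Ψ' i a b c) < κ := by
    intro i a b c
    by_cases hc : #(Ψ i a b c) < κ
    · simp only [Ψ', if_pos hc]; exact hc
    · simp only [Ψ', if_neg hc]; exact hκ.small_finite finite_empty
  let body : ι → (ι → Set V) → Set V := fun k X =>
    ⋃ j ∈ Iio k, (X j ∪ ⋃ i ∈ Iic j, Ψ' i (X i) (G X i) (X j))
  let hwf : WellFounded ((· < ·) : ι → ι → Prop) := wellFounded_lt
  let X : ι → Set V := hwf.fix fun k ih => body k fun j => if hj : j < k then ih j hj else ∅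
  have hX : ∀ k, X k = body k X := by
    intro k
    have h1 : X k = body k fun j => if j < k then X j else ∅ := by
      change hwf.fix _ k = _
      rw [hwf.fix_eq]
      congr 1
    rw [h1]
    simp only [body]
    refine iUnion₂_congr fun j hj => ?_
    have hj' : j < k := hj
    rw [if_pos hj']
    congr 1
    refine iUnion₂_congr fun i hi => ?_
    have hi' : i ≤ j := hi
    rw [if_pos (hi'.trans_lt hj'), hG _ X i fun l hl => if_pos ((hl.trans hi').trans_lt hj')]
  have hmem : ∀ k x, x ∈ X k ↔ ∃ j < k, x ∈ X j ∨ ∃ i ≤ j, x ∈ Ψ' i (X i) (G X i) (X j) := by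
    intro k x
    rw [hX]
    simp only [body, mem_iUnion, mem_union, mem_Iio, mem_Iic, exists_prop]
  have hmono : ∀ i j, i ≤ j → X i ⊆ X j := by
    intro i j hij
    rcases hij.lt_or_eq with hij | rfl
    · exact fun x hx => (hmem j x).2 ⟨i, hij, Or.inl hx⟩
    · exact Subset.rfl
  have hsmall : ∀ i, #(X i) < κ := by
    intro i
    induction i using hwf.induction with
    | _ i ih =>
      rw [hX]
      refine hκ.small_biUnion (hκ.seg i) fun j hj => hκ.small_union (ih j hj) ?_
      exact hκ.small_biUnion (hκ.seg_le j) fun l _ => hΨ' _ _ _ _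
  have hcont : ∀ i, Lim i → ∀ x ∈ X i, ∃ j < i, x ∈ X j := by
    intro i hi x hx
    obtain ⟨j, hj, h⟩ := (hmem i x).1 hx
    obtain ⟨j', hj', hj'i⟩ := hi.2 j hj
    exact ⟨j', hj'i, (hmem j' x).2 ⟨j, hj', h⟩⟩
  let g : V → V := compg E (fun i => LD E B A (X i)) fun i => h (X i)
  have hgr : ∀ i, Gr E B A g (X i) = G X i := by
    intro i
    funext x w
    apply propext
    constructor
    · rintro ⟨h1, h2⟩
      obtain ⟨j, hj, hm⟩ := exists_least_index (fun i => LD E B A (X i))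
        (Rg_mono (subset_iUnion (fun i => LD E B A (X i)) i) h1.1)
      refine ⟨h1, j, not_lt.1 fun hlt => hm i hlt h1.1, hj, hm, ?_⟩
      rw [← h2, ← compg_spec (fun i => LD E B A (X i)) (fun i => h (X i)) hj hm]
    · rintro ⟨h1, j, hj, h2, h3, h4⟩
      refine ⟨h1, ?_⟩
      rw [← h4, ← compg_spec (fun i => LD E B A (X i)) (fun i => h (X i)) h2 h3]
  refine ⟨X, g, ⟨hsmall, hmono, hcont, fun i => ?_⟩, fun i j k hij hjk hc x hx => ?_⟩
  · have hc := wave_comp (E := E) (B := B) (Z := ∅) (A := A ∪ X i) (fun j : Iic i => A ∪ X j)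
      (fun j : Iic i => LD E B A (X j))
      (fun j : Iic i => h (X j)) (fun j => union_subset_union_right A (hmono j i j.2)) fun j => hh (X j)
    have hU : (⋃ j : Iic i, LD E B A (X j)) = LD E B A (X i) := by
      apply subset_antisymm
      · exact iUnion_subset fun j => LD_mono (hmono j i j.2)
      · exact subset_iUnion (fun j : Iic i => LD E B A (X j)) ⟨i, le_rfl⟩
    rw [hU] at hc
    refine hc.congr_fun fun x hx => ?_
    obtain ⟨j, hj, hm⟩ := exists_least_index (fun i => LD E B A (X i))
        (Rg_mono (subset_iUnion (fun i => LD E B A (X i)) i) hx.1)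
    have hji : j ≤ i := not_lt.1 fun hlt => hm i hlt hx.1
    rw [compg_spec (fun j : Iic i => LD E B A (X j)) (fun j : Iic i => h (X j)) (i := ⟨j, hji⟩) hj
      fun k hk => hm k hk]
    exact compg_spec (fun i => LD E B A (X i)) (fun i => h (X i)) hj hm
  · refine (hmem k x).2 ⟨j, hjk, Or.inr ⟨i, hij, ?_⟩⟩
    rw [← hgr]
    simp only [Ψ', if_pos hc]
    exact hx

end LadderSec

/-! ### Blocks and closed ladders -/
section Closed
open Set Cardinal
universe u
variable {κ : Cardinal.{u}} {ι V : Type u} [LinearOrder ι]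
variable {E : V → V → Prop} {B A : Set V}

/-- The vertices on which the maximal wave for `A ∪ X` ends. -/
def Tm (E : V → V → Prop) (B A X : Set V) : Set V :=
  {x | (x ∈ Rg E (LD E B A X) ∨ x ∈ A ∨ x ∈ X) ∧ x ∉ LD E B A X}

/-- Deleting the maximal wave leaves a web all of whose waves are empty. -/
theorem unh_level (X : Set V) : Unh E B (Tm E B A X) (LD E B A X) := by
  classical
  intro D' g' hw w hwD
  exfalso
  obtain ⟨g, hg⟩ := exists_wave_maxD E B (A ∪ X) ∅
  change WaveF E B (A ∪ X) ∅ (LD E B A X) g at hg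
  suffices h : WaveF E B (A ∪ X) ∅ (LD E B A X ∪ D')
      (fun x => if x ∈ Rg E (LD E B A X) then g x else g' x) from
    hw.notZ w hwD (subset_maxD h (Or.inr hwD))
  have h1 : ∀ x ∈ Dm E (A ∪ X) ∅ (LD E B A X ∪ D'), x ∈ Rg E (LD E B A X) →
      x ∈ Dm E (A ∪ X) ∅ (LD E B A X) := fun x hx hr => ⟨hr, hx.2⟩
  have h2 : ∀ x ∈ Dm E (A ∪ X) ∅ (LD E B A X ∪ D'), x ∉ Rg E (LD E B A X) →
      x ∈ Dm E (Tm E B A X) (LD E B A X) D' := by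
    rintro x ⟨⟨u, hu, hux⟩, hA, -⟩ hr
    refine ⟨?_, fun hT => ?_, fun hD => hr (subset_Rg hD)⟩
    · rcases hu with hu | hu
      · exact absurd ⟨u, hu, hux⟩ hr
      · exact ⟨u, hu, hux⟩
    · rcases hT.1 with h | h | h
      · exact hr h
      · exact hA (Or.inl h)
      · exact hA (Or.inr h)
  refine ⟨fun _ _ h => h, ?_, fun x hx => ?_, fun x hx => ?_, fun x hx y hy e => ?_, fun y hy hm hst => ?_⟩
  · rintro x (hx | hx)
    · exact hg.notB x hx
    · exact hw.notB x hx
  · by_cases hr : x ∈ Rg E (LD E B A X)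
    · simp only [if_pos hr]; exact Or.inl (hg.mem x (h1 x hx hr))
    · simp only [if_neg hr]; exact Or.inr (hw.mem x (h2 x hx hr))
  · by_cases hr : x ∈ Rg E (LD E B A X)
    · simp only [if_pos hr]; exact hg.adj x (h1 x hx hr)
    · simp only [if_neg hr]; exact hw.adj x (h2 x hx hr)
  · by_cases hrx : x ∈ Rg E (LD E B A X) <;> by_cases hry : y ∈ Rg E (LD E B A X) <;>
      simp only [if_pos, if_neg, hrx, hry, not_false_eq_true] at e
    · exact hg.inj x (h1 x hx hrx) y (h1 y hy hry) e
    · exact absurd (e ▸ hg.mem x (h1 x hx hrx)) (hw.notZ _ (hw.mem y (h2 y hy hry)))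
    · exact absurd (e ▸ hg.mem y (h1 y hy hry)) (hw.notZ _ (hw.mem x (h2 x hx hrx)))
    · exact hw.inj x (h2 x hx hrx) y (h2 y hy hry) e
  · by_cases hex : ∃ N, y N ∈ Rg E (LD E B A X)
    · obtain ⟨N, hN⟩ := hex
      have hall : ∀ n, y (N + n) ∈ Rg E (LD E B A X) := by
        intro n
        induction n with
        | zero => exact hN
        | succ n ih =>
          have := hst (N + n)
          rw [if_pos ih] at this
          rw [← add_assoc, this]
          exact subset_Rg (hg.mem _ (h1 _ (hm _) ih))
      refine hg.noray (fun n => y (N + n)) (fun a b h => Nat.add_left_cancel (hy h))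
        (fun n => h1 _ (hm _) (hall n)) fun n => ?_
      have := hst (N + n)
      rw [if_pos (hall n)] at this
      exact this
    · push Not at hex
      refine hw.noray y hy (fun n => h2 _ (hm _) (hex n)) fun n => ?_
      rw [hst, if_neg (hex n)]

/-- A simple alternating path from the set `S` to `v`: forward along `u i → x i`, back along
`G` to `u (i + 1)`, leaving `S` immediately, and with the last step `u n → v`. -/
structure IsBlk (E G : V → V → Prop) (S : Set V) (v : V) (n : ℕ) (x u : ℕ → V) : Prop where
  start : u 0 ∈ S
  off : ∀ i ≤ n, 0 < i → u i ∉ S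
  adj : ∀ i < n, x i = u i ∨ E (u i) (x i)
  gr : ∀ i < n, G (x i) (u (i + 1))
  last : v = u n ∨ E (u n) v
  inj : ∀ i ≤ n, ∀ j ≤ n, u i = u j → i = j

/-- One alternating step: forward along `E`, back along `G`. -/
def AStep (E G : V → V → Prop) (w w' : V) : Prop := ∃ x, (x = w ∨ E w x) ∧ G x w'

theorem exists_isBlk {G : V → V → Prop} {S : Set V} {a c v : V} (ha : a ∈ S)
    (h : Relation.ReflTransGen (AStep E G) a c) (hv : v = c ∨ E c v) :
    ∃ n x u, IsBlk E G S v n x u := by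
  classical
  have : Nonempty V := ⟨a⟩
  obtain ⟨n, u, h0, hn, hst, hinj⟩ := exists_simple_seq h
  choose! x hx1 hx2 using hst
  set m := Nat.findGreatest (fun k => u k ∈ S) n with hm
  have hmn : m ≤ n := Nat.findGreatest_le n
  have hmS : u m ∈ S := Nat.findGreatest_spec (P := fun k => u k ∈ S) (Nat.zero_le n) (h0 ▸ ha)
  refine ⟨n - m, fun i => x (m + i), fun i => u (m + i), hmS, fun i hi hpos hS => ?_, fun i hi => ?_,
    fun i hi => ?_, ?_, fun i hi j hj e => ?_⟩
  · exact Nat.findGreatest_is_greatest (P := fun k => u k ∈ S) (show m < m + i by omega) (by omega) hS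
  · exact hx1 _ (by omega)
  · exact hx2 (m + i) (by omega)
  · have : m + (n - m) = n := by omega
    rw [this, hn]; exact hv
  · have := hinj _ (show m + i ≤ n by omega) _ (show m + j ≤ n by omega) e
    omega

/-- Forward step along a track. -/
def Fw (G : V → V → Prop) (a b : V) : Prop := G b a

/-- The forward track of `w`. -/
def Fo (G : V → V → Prop) (w : V) : Set V := {y | Relation.ReflTransGen (Fw G) w y}

/-- The track of `w` never leaves the wave, and `w` lies on no cycle. -/
def Dead (G : V → V → Prop) (X D : Set V) (w : V) : Prop :=
  w ∈ D ∧ w ∉ X ∧ Fo G w ⊆ D ∧ ∀ y, G w y → y ∉ Fo G w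

/-- Blocks from `a` to `v` avoid any given small set. -/
def Wide (κ : Cardinal.{u}) (E G : V → V → Prop) (a v : V) : Prop :=
  ∀ S : Set V, #S < κ → ∃ n x u, IsBlk E G {a} v n x u ∧ ∀ i < n, x i ∉ S

/-- A safe path from `p`, after deletion of the maximal wave for `A ∪ X`. -/
def SafeQ (E : V → V → Prop) (B A X : Set V) (p b : V) (S : Set V) (F : V → V → Prop) : Prop :=
  IsQ E p b S F ∧ b ∈ B ∧ (∀ s ∈ S, s ∉ LD E B A X) ∧ (∀ s ∈ S, s ∈ Tm E B A X → s = p) ∧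
    Unh E B (Tm E B A X) (LD E B A X ∪ S)

/-- A ladder whose levels absorb the following objects belonging to earlier levels: predecessors and
successors along tracks (`back`, `forth`); a dead vertex, if there is one, with alternating paths
from its track to the vertices of the level (`dead`); a small set meeting all blocks between
a pair that is not wide (`narrow`), and one block for each wide pair (`wide`); safe paths from
vertices on which the maximal wave ends (`safe`); the set `Mf (X i)`; and the seed `Sd i`. -/
structure CLadder (κ : Cardinal.{u}) (E : V → V → Prop) (B A : Set V) (Mf : Set V → Set V)
    (Sd : ι → Set V) (X : ι → Set V) (g : V → V) : Prop extends Ladder κ E B A X g where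
  back : ∀ i j k, i ≤ j → j < k → ∀ x ∈ X j, x ∈ LDm E B A (X i) → g x ∈ X k
  forth : ∀ i j k, i ≤ j → j < k → ∀ x, g x ∈ X j → x ∈ LDm E B A (X i) → x ∈ X k
  dead : ∀ i, (∃ w, Dead (Gr E B A g (X i)) (X i) (LD E B A (X i)) w) →
    ∃ w, Dead (Gr E B A g (X i)) (X i) (LD E B A (X i)) w ∧ (∀ k, i < k → w ∈ X k) ∧
      ∀ v ∈ X i, (∃ a ∈ Fo (Gr E B A g (X i)) w, ∃ c,
        Relation.ReflTransGen (AStep E (Gr E B A g (X i))) a c ∧ (v = c ∨ E c v)) →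
        ∃ n x u, IsBlk E (Gr E B A g (X i)) (Fo (Gr E B A g (X i)) w) v n x u ∧
          ∀ k, i < k → ∀ l < n, x l ∈ X k
  narrow : ∀ i j k, i ≤ j → j < k → ∀ a ∈ X j, ∀ v ∈ X j, ¬ Wide κ E (Gr E B A g (X i)) a v →
    ∀ n x u, IsBlk E (Gr E B A g (X i)) {a} v n x u → ∃ l < n, x l ∈ X k
  wide : ∀ i, ∀ a ∈ X i, ∀ v ∈ X i, Wide κ E (Gr E B A g (X i)) a v →
    ∃ n x u, IsBlk E (Gr E B A g (X i)) {a} v n x u ∧ (∀ l < n, x l ∉ X i) ∧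
      ∀ k, i < k → ∀ l < n, x l ∈ X k
  safe : ∀ i j, i ≤ j → ∀ p ∈ X j, p ∈ Tm E B A (X i) → ∃ b S F, SafeQ E B A (X i) p b S F ∧
    ∀ k, j < k → S ⊆ X k
  mf : ∀ i k, i < k → Mf (X i) ⊆ X k
  seed : ∀ i k, i < k → Sd i ⊆ X k

/-- Closed ladders exist, since each closure operation adds fewer than `κ` vertices. -/
theorem exists_cladder [WellFoundedLT ι] (hκ : RegIdx κ ι) (Mf : Set V → Set V) (Sd : ι → Set V)
    (hMf : ∀ X : Set V, #X < κ → #(Mf X) < κ) (hSd : ∀ i, #(Sd i) < κ) :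
    ∃ (X : ι → Set V) (g : V → V), CLadder κ E B A Mf Sd X g := by
  classical
  have h2 : ∀ (X : Set V) (G : V → V → Prop), ∃ S : Set V, #X < κ → #S < κ ∧
      ((∃ w, Dead G X (LD E B A X) w) → ∃ w, Dead G X (LD E B A X) w ∧ w ∈ S ∧
        ∀ v ∈ X, (∃ a ∈ Fo G w, ∃ c,
          Relation.ReflTransGen (AStep E G) a c ∧ (v = c ∨ E c v)) →
          ∃ n x u, IsBlk E G (Fo G w) v n x u ∧ ∀ l < n, x l ∈ S) := by
    intro X G
    by_cases h : ∃ w, Dead G X (LD E B A X) w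
    · obtain ⟨w, hw⟩ := h
      have hb : ∀ v, ∃ S : Set V, S.Finite ∧ ((∃ a ∈ Fo G w, ∃ c,
          Relation.ReflTransGen (AStep E G) a c ∧ (v = c ∨ E c v)) →
          ∃ n x u, IsBlk E G (Fo G w) v n x u ∧ ∀ l < n, x l ∈ S) := by
        intro v
        by_cases hv : ∃ a ∈ Fo G w, ∃ c, Relation.ReflTransGen (AStep E G) a c ∧ (v = c ∨ E c v)
        · obtain ⟨a, ha, c, hac, hcv⟩ := hv
          obtain ⟨n, x, u, hb⟩ := exists_isBlk ha hac hcv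
          exact ⟨x '' Iio n, (finite_Iio n).image x, fun _ => ⟨n, x, u, hb, fun l hl => ⟨l, hl, rfl⟩⟩⟩
        · exact ⟨∅, finite_empty, fun h => absurd h hv⟩
      choose S hS1 hS2 using hb
      refine ⟨{w} ∪ ⋃ v ∈ X, S v, fun hX => ⟨hκ.small_union (hκ.small_finite (finite_singleton w))
        (hκ.small_biUnion hX fun v _ => hκ.small_finite (hS1 v)), fun _ => ⟨w, hw, Or.inl rfl, fun v hv hr => ?_⟩⟩⟩
      obtain ⟨n, x, u, hb, hl⟩ := hS2 v hr
      exact ⟨n, x, u, hb, fun l hln => Or.inr (mem_biUnion hv (hl l hln))⟩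
    · exact ⟨∅, fun _ => ⟨hκ.small_finite finite_empty, fun h' => absurd h' h⟩⟩
  have h3 : ∀ (X : Set V) (G : V → V → Prop) (a v : V), ∃ S : Set V, #X < κ → #S < κ ∧
      (¬ Wide κ E G a v → ∀ n x u, IsBlk E G {a} v n x u → ∃ l < n, x l ∈ S) ∧
      (Wide κ E G a v → ∃ n x u, IsBlk E G {a} v n x u ∧ (∀ l < n, x l ∉ X) ∧ ∀ l < n, x l ∈ S) := by
    intro X G a v
    by_cases h : Wide κ E G a v
    · by_cases hX : #X < κ
      · obtain ⟨n, x, u, hb, hl⟩ := h X hX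
        exact ⟨x '' Iio n, fun _ => ⟨hκ.small_finite ((finite_Iio n).image x), fun h' => absurd h h',
          fun _ => ⟨n, x, u, hb, hl, fun l hl => ⟨l, hl, rfl⟩⟩⟩⟩
      · exact ⟨∅, fun h => absurd h hX⟩
    · have h' := h
      simp only [Wide] at h'
      push Not at h'
      obtain ⟨S, hS, h'⟩ := h'
      exact ⟨S, fun _ => ⟨hS, fun _ => h', fun hw => absurd hw h⟩⟩
  have h4 : ∀ (X : Set V) (p : V), ∃ S : Set V, S.Finite ∧
      (p ∈ Tm E B A X → ∃ b F, SafeQ E B A X p b S F) := by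
    intro X p
    by_cases h : p ∈ Tm E B A X
    · obtain ⟨b, S, F, hQ⟩ := safe_link (unh_level X) h h.2
      exact ⟨S, hQ.1.fin, fun _ => ⟨b, F, hQ⟩⟩
    · exact ⟨∅, finite_empty, fun h' => absurd h' h⟩
  choose K2 hK2 using h2
  choose K3 hK3 using h3
  choose K4 hK4 hK4' using h4
  obtain ⟨X, g, hL, hcl⟩ := exists_ladder (E := E) (B := B) (A := A) hκ fun i X G Y =>
    Mf X ∪ (Sd i ∪ ({w | ∃ x ∈ Y, G x w} ∪ ({x | ∃ w ∈ Y, G x w} ∪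
      (K2 X G ∪ ((⋃ a ∈ Y, ⋃ v ∈ Y, K3 X G a v) ∪ ⋃ p ∈ Y, K4 X p)))))
  have hcl' : ∀ i j k, i ≤ j → j < k → _ := fun i j k hij hjk => hcl i j k hij hjk (by
    refine hκ.small_union (hMf _ (hL.small i)) (hκ.small_union (hSd i) (hκ.small_union ?_ (hκ.small_union ?_
      (hκ.small_union (hK2 _ _ (hL.small i)).1 (hκ.small_union ?_ ?_)))))
    · refine lt_of_le_of_lt ?_ (hL.small j)
      refine (mk_le_mk_of_subset (t := g '' X j) ?_).trans mk_image_le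
      rintro w ⟨x, hx, -, rfl⟩
      exact ⟨x, hx, rfl⟩
    · refine lt_of_le_of_lt ?_ (hL.small j)
      refine ⟨⟨fun x => ⟨g x.1, ?_⟩, fun x y hxy => ?_⟩⟩
      · obtain ⟨w, hw, -, e⟩ := x.2
        rw [e]; exact hw
      · obtain ⟨w, hw, hx, e⟩ := x.2
        obtain ⟨w', hw', hy, e'⟩ := y.2
        exact Subtype.ext ((hL.wave i).inj _ hx _ hy (Subtype.ext_iff.1 hxy))
    · exact hκ.small_biUnion (hL.small j) fun a _ => hκ.small_biUnion (hL.small j) fun v _ =>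
        (hK3 _ _ a v (hL.small i)).1
    · exact hκ.small_biUnion (hL.small j) fun p _ => hκ.small_finite (hK4 _ p))
  have c1 : ∀ i k, i < k → Mf (X i) ⊆ X k := fun i k hik x hx => hcl' i i k le_rfl hik (Or.inl hx)
  have c2 : ∀ i k, i < k → Sd i ⊆ X k := fun i k hik x hx => hcl' i i k le_rfl hik (Or.inr (Or.inl hx))
  have c5 : ∀ i k, i < k → K2 (X i) (Gr E B A g (X i)) ⊆ X k := fun i k hik x hx =>
    hcl' i i k le_rfl hik (Or.inr (Or.inr (Or.inr (Or.inr (Or.inl hx)))))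
  have c6 : ∀ i j k, i ≤ j → j < k → ∀ a ∈ X j, ∀ v ∈ X j, K3 (X i) (Gr E B A g (X i)) a v ⊆ X k :=
    fun i j k hij hjk a ha v hv x hx =>
      hcl' i j k hij hjk (Or.inr (Or.inr (Or.inr (Or.inr (Or.inr (Or.inl
        (mem_biUnion ha (mem_biUnion hv hx))))))))
  have c7 : ∀ i j k, i ≤ j → j < k → ∀ p ∈ X j, K4 (X i) p ⊆ X k :=
    fun i j k hij hjk p hp x hx =>
      hcl' i j k hij hjk (Or.inr (Or.inr (Or.inr (Or.inr (Or.inr (Or.inr (mem_biUnion hp hx)))))))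
  refine ⟨X, g, ⟨hL, fun i j k hij hjk x hx hd => ?_, fun i j k hij hjk x hx hd => ?_, fun i hd => ?_,
    fun i j k hij hjk a ha v hv hw n x u hb => ?_, fun i a ha v hv hw => ?_, fun i j hij p hp hT => ?_,
    c1, c2⟩⟩
  · exact hcl' i j k hij hjk (Or.inr (Or.inr (Or.inl ⟨x, hx, hd, rfl⟩)))
  · exact hcl' i j k hij hjk (Or.inr (Or.inr (Or.inr (Or.inl ⟨g x, hx, hd, rfl⟩))))
  · obtain ⟨w, h1, h2, h3⟩ := (hK2 (X i) (Gr E B A g (X i)) (hL.small i)).2 hd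
    refine ⟨w, h1, fun k hk => c5 i k hk h2, fun v hv hr => ?_⟩
    obtain ⟨n, x, u, hb, hl⟩ := h3 v hv hr
    exact ⟨n, x, u, hb, fun k hk l hln => c5 i k hk (hl l hln)⟩
  · obtain ⟨l, hl, hx⟩ := (hK3 (X i) (Gr E B A g (X i)) a v (hL.small i)).2.1 hw n x u hb
    exact ⟨l, hl, c6 i j k hij hjk a ha v hv hx⟩
  · obtain ⟨n, x, u, hb, h1, h2⟩ := (hK3 (X i) (Gr E B A g (X i)) a v (hL.small i)).2.2 hw
    exact ⟨n, x, u, hb, h1, fun k hk l hl => c6 i i k le_rfl hk a ha v hv (h2 l hl)⟩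
  · obtain ⟨b, F, hQ⟩ := hK4' (X i) p hT
    exact ⟨b, _, F, hQ, fun k hk => c7 i j k hij hk p hp⟩

end Closed

/-! ### Closed indices of a ladder -/
section Cstar
open Set Cardinal
universe u
variable {κ : Cardinal.{u}} {ι V : Type u} [LinearOrder ι]
variable {E : V → V → Prop} {B A : Set V} {Mf : Set V → Set V} {Sd : ι → Set V}
  {X : ι → Set V} {g : V → V}

/-- Limit indices at which no vertex of `X i` enters the maximal wave at a later stage. -/
def Cst (E : V → V → Prop) (B A : Set V) (X : ι → Set V) : Set ι :=
  {i | Lim i ∧ ∀ x ∈ X i, ∀ j, x ∈ LD E B A (X j) → ∃ k < i, x ∈ LD E B A (X k)}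

theorem lrg_gt (δ : ι) : Lrg {i | δ < i} := by
  refine ⟨fun _ => δ, fun γ hγ => ?_⟩
  obtain ⟨β, hβ⟩ := hγ.1
  exact hγ.2 β hβ

theorem lrg_cst (hκ : RegIdx κ ι) (hL : Ladder κ E B A X g) : Lrg (Cst E B A X) := by
  have h : ∀ v, Lrg {i : ι | ∀ j, v ∈ LD E B A (X j) → ∃ k < i, v ∈ LD E B A (X k)} := by
    intro v
    by_cases hv : ∃ j, v ∈ LD E B A (X j)
    · obtain ⟨j, hj⟩ := hv
      exact (lrg_gt j).mono fun i hi _ _ => ⟨j, hi, hj⟩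
    · exact ⟨id, fun i _ j hj => absurd ⟨j, hj⟩ hv⟩
  refine ((lrg_lim hκ).inter (Lrg.diag hκ hL.small hL.mono _ h)).mono ?_
  rintro i ⟨hi, hd⟩
  refine ⟨hi, fun x hx => ?_⟩
  obtain ⟨j, hj, hxj⟩ := hL.cont i hi x hx
  exact hd j hj x hxj

namespace CLadder

theorem mem_of_lim (hL : CLadder κ E B A Mf Sd X g) {i j : ι} (hi : Lim i) (hj : j < i) {x : V} (hx : x ∈ X i) :
    ∃ k, j ≤ k ∧ k < i ∧ x ∈ X k := by
  obtain ⟨k, hk, hxk⟩ := hL.cont i hi x hx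
  exact ⟨max j k, le_max_left _ _, max_lt hj hk, hL.mono _ _ (le_max_right _ _) hxk⟩

theorem g_mem (hL : CLadder κ E B A Mf Sd X g) {i j : ι} (hi : Lim i) {x : V} (hx : x ∈ LDm E B A (X j)) (hxi : x ∈ X i) : g x ∈ X i := by
  have hji : j < i := by
    by_contra h
    exact (mem_LDm.1 hx).2.2 (hL.mono _ _ (not_lt.1 h) hxi)
  obtain ⟨k, hjk, hki, hxk⟩ := hL.mem_of_lim hi hji hxi
  obtain ⟨l, hkl, hli⟩ := hi.2 k hki
  exact hL.mono _ _ hli.le (hL.back j k l hjk hkl x hxk hx)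

theorem of_g_mem (hL : CLadder κ E B A Mf Sd X g) {i j : ι} (hi : i ∈ Cst E B A X) {x : V} (hx : x ∈ LDm E B A (X j))
    (hxi : g x ∈ X i) : x ∈ X i := by
  have key : ∀ j < i, x ∈ LDm E B A (X j) → x ∈ X i := by
    intro j hji hx
    obtain ⟨k, hjk, hki, hxk⟩ := hL.mem_of_lim hi.1 hji hxi
    obtain ⟨l, hkl, hli⟩ := hi.1.2 k hki
    exact hL.mono _ _ hli.le (hL.forth j k l hjk hkl x hxk hx)
  rcases lt_or_ge j i with hji | hij
  · exact key j hji hx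
  · obtain ⟨k, hki, hk⟩ := hi.2 _ hxi j ((hL.wave j).mem x hx)
    refine key k hki (mem_LDm.2 ⟨Rg_of_adj hk ((hL.wave j).adj x hx), (mem_LDm.1 hx).2.1, fun h => ?_⟩)
    exact (mem_LDm.1 hx).2.2 (hL.mono _ _ (hki.le.trans hij) h)

/-- A closed level contains a whole track or nothing of it. -/
theorem g_mem_iff (hL : CLadder κ E B A Mf Sd X g) {i j : ι} (hi : i ∈ Cst E B A X) {x : V} (hx : x ∈ LDm E B A (X j)) :
    g x ∈ X i ↔ x ∈ X i :=
  ⟨hL.of_g_mem hi hx, hL.g_mem hi.1 hx⟩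

theorem LD_of_mem (hL : CLadder κ E B A Mf Sd X g) {i j : ι} (hi : i ∈ Cst E B A X) {x : V} (hx : x ∈ X i)
    (hj : x ∈ LD E B A (X j)) : x ∈ LD E B A (X i) := by
  obtain ⟨k, hk, h⟩ := hi.2 x hx j hj
  exact LD_mono (hL.mono _ _ hk.le) h

/-- A tracked vertex belongs to the domain at every closed level containing its predecessor in
the wave but not in the chain. -/
theorem lift (hL : CLadder κ E B A Mf Sd X g) {i j : ι} (hi : i ∈ Cst E B A X) {x : V} (hx : x ∈ LDm E B A (X j))
    (hD : g x ∈ LD E B A (X i)) (hX : g x ∉ X i) : x ∈ LDm E B A (X i) :=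
  mem_LDm.2 ⟨Rg_of_adj hD ((hL.wave j).adj x hx), (mem_LDm.1 hx).2.1,
    fun h => hX (hL.g_mem hi.1 hx h)⟩

theorem g_inj (hL : CLadder κ E B A Mf Sd X g) {i j : ι} {x y : V} (hx : x ∈ LDm E B A (X i)) (hy : y ∈ LDm E B A (X j))
    (e : g x = g y) : x = y := by
  have key : ∀ i j, i ≤ j → ∀ x y, x ∈ LDm E B A (X i) → y ∈ LDm E B A (X j) → g x = g y → x = y := by
    intro i j hij x y hx hy e
    refine (hL.wave i).inj x hx y (mem_LDm.2 ⟨Rg_of_adj (e ▸ (hL.wave i).mem x hx)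
      ((hL.wave j).adj y hy), (mem_LDm.1 hy).2.1, fun h => (mem_LDm.1 hy).2.2 (hL.mono _ _ hij h)⟩) e
  rcases le_total i j with h | h
  · exact key i j h x y hx hy e
  · exact (key j i h y x hy hx e.symm).symm

theorem blk_mem (hL : CLadder κ E B A Mf Sd X g) {i : ι} {S : Set V} {v : V} {n : ℕ} {x u : ℕ → V} (hS : S ⊆ LD E B A (X i))
    (hb : IsBlk E (Gr E B A g (X i)) S v n x u) : ∀ l ≤ n, u l ∈ LD E B A (X i) := by
  intro l hl
  rcases Nat.eq_zero_or_pos l with rfl | hpos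
  · exact hS hb.start
  · obtain ⟨l, rfl⟩ : ∃ k, l = k + 1 := ⟨l - 1, by omega⟩
    obtain ⟨h1, h2⟩ := hb.gr l (by omega)
    rw [← h2]
    exact (hL.wave i).mem _ h1

theorem blk_off (hL : CLadder κ E B A Mf Sd X g) {i : ι} (hi : i ∈ Cst E B A X) {S : Set V} {v : V} {n : ℕ} {x u : ℕ → V}
    (hb : IsBlk E (Gr E B A g (X i)) S v n x u) :
    (∀ l < n, x l ∉ X i) ∧ ∀ l ≤ n, 0 < l → u l ∉ X i := by
  refine ⟨fun l hl => (mem_LDm.1 (hb.gr l hl).1).2.2, fun l hl hpos h => ?_⟩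
  obtain ⟨l, rfl⟩ : ∃ k, l = k + 1 := ⟨l - 1, by omega⟩
  obtain ⟨h1, h2⟩ := hb.gr l (by omega)
  rw [← h2] at h
  exact (mem_LDm.1 h1).2.2 (hL.of_g_mem hi h1 h)

/-- A block starting in the lower maximal wave stays in it. -/
theorem blk_down (hL : CLadder κ E B A Mf Sd X g) {i j : ι} (hij : i ≤ j) {a v : V} (ha : a ∈ LD E B A (X i)) {n : ℕ} {x u : ℕ → V}
    (hb : IsBlk E (Gr E B A g (X j)) {a} v n x u) : IsBlk E (Gr E B A g (X i)) {a} v n x u := by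
  have key : ∀ l ≤ n, u l ∈ LD E B A (X i) ∧ ∀ k < l, Gr E B A g (X i) (x k) (u (k + 1)) := by
    intro l
    induction l with
    | zero =>
      intro _
      have := hb.start
      rw [mem_singleton_iff] at this
      exact ⟨this ▸ ha, by simp⟩
    | succ l ih =>
      intro hl
      obtain ⟨h1, h2⟩ := ih (by omega)
      obtain ⟨h3, h4⟩ := hb.gr l (by omega)
      have h5 : x l ∈ LDm E B A (X i) := mem_LDm.2 ⟨Rg_of_adj h1 (hb.adj l (by omega)),
        (mem_LDm.1 h3).2.1, fun h => (mem_LDm.1 h3).2.2 (hL.mono _ _ hij h)⟩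
      refine ⟨h4 ▸ (hL.wave i).mem _ h5, fun k hk => ?_⟩
      rcases Nat.lt_succ_iff_lt_or_eq.1 hk with h | rfl
      · exact h2 k h
      · exact ⟨h5, h4⟩
  exact ⟨hb.start, hb.off, hb.adj, fun l hl => (key n le_rfl).2 l hl, hb.last, hb.inj⟩

theorem blk_up (hL : CLadder κ E B A Mf Sd X g) {i j : ι} (hij : i ≤ j) {S : Set V} {v : V} {n : ℕ} {x u : ℕ → V}
    (hb : IsBlk E (Gr E B A g (X i)) S v n x u) (hx : ∀ l < n, x l ∉ X j) :
    IsBlk E (Gr E B A g (X j)) S v n x u :=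
  ⟨hb.start, hb.off, hb.adj, fun l hl => ⟨mem_LDm.2 ⟨Rg_mono (LD_mono (hL.mono _ _ hij))
    (mem_LDm.1 (hb.gr l hl).1).1, (mem_LDm.1 (hb.gr l hl).1).2.1, hx l hl⟩, (hb.gr l hl).2⟩,
    hb.last, hb.inj⟩

/-- Wideness does not depend on the level: the levels are small, so blocks can avoid them. -/
theorem wide_iff (hL : CLadder κ E B A Mf Sd X g) (hκ : RegIdx κ ι) {i j : ι} (hij : i ≤ j) {a v : V} (ha : a ∈ LD E B A (X i)) :
    Wide κ E (Gr E B A g (X j)) a v ↔ Wide κ E (Gr E B A g (X i)) a v := by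
  constructor
  · intro h S hS
    obtain ⟨n, x, u, hb, hx⟩ := h S hS
    exact ⟨n, x, u, hL.blk_down hij ha hb, hx⟩
  · intro h S hS
    obtain ⟨n, x, u, hb, hx⟩ := h (S ∪ X j) (hκ.small_union hS (hL.small j))
    exact ⟨n, x, u, hL.blk_up hij hb fun l hl h => hx l hl (Or.inr h), fun l hl h => hx l hl (Or.inl h)⟩

end CLadder

/-- The set of indices of the layers of the ladder containing `y`, recorded by the closed
index preceding them. -/
def Foot (E : V → V → Prop) (B A : Set V) (X : ι → Set V) (i : ι) (y : V) : Prop :=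
  y ∉ X i ∧ ∀ k ∈ Cst E B A X, i < k → y ∈ X k

theorem Foot.unique {i j : ι} (hi : i ∈ Cst E B A X) (hj : j ∈ Cst E B A X) {y : V}
    (h : Foot E B A X i y) (h' : Foot E B A X j y) : i = j := by
  rcases lt_trichotomy i j with hij | hij | hij
  · exact absurd (h.2 j hj hij) h'.1
  · exact hij
  · exact absurd (h'.2 i hi hij) h.1

theorem CLadder.foot_g (hL : CLadder κ E B A Mf Sd X g) {i j : ι} (hi : i ∈ Cst E B A X) {x : V}
    (hx : x ∈ LDm E B A (X j)) : Foot E B A X i (g x) ↔ Foot E B A X i x := by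
  unfold Foot
  rw [hL.g_mem_iff hi hx]
  refine and_congr_right fun _ => forall_congr' fun k => forall_congr' fun hk => ?_
  rw [hL.g_mem_iff hk hx]

/-- Gluing modifications on disjoint blocks into a partial predecessor function. -/
theorem surgery {J V : Type*} {E : V → V → Prop} {D Q : Set V} (g₀ : V → V) (dom val : J → Set V)
    (m : J → V → V)
    (hdisj : ∀ j j' y, y ∈ dom j → y ∈ dom j' → j = j')
    (hvdisj : ∀ j j' t, t ∈ val j → t ∈ val j' → j = j')
    (hm : ∀ j, ∀ y ∈ dom j, y ∈ Q → m j y ∈ val j ∧ m j y ∈ D ∧ (y = m j y ∨ E (m j y) y))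
    (hminj : ∀ j, ∀ y ∈ dom j, ∀ y' ∈ dom j, m j y = m j y' → y = y')
    (h0 : ∀ y ∈ Q, (∀ j, y ∉ dom j) → g₀ y ∈ D ∧ (y = g₀ y ∨ E (g₀ y) y) ∧ ∀ j, g₀ y ∉ val j)
    (h0inj : ∀ y ∈ Q, ∀ y' ∈ Q, (∀ j, y ∉ dom j) → (∀ j, y' ∉ dom j) → g₀ y = g₀ y' → y = y') :
    ∃ f : V → V, (∀ j, ∀ y ∈ dom j, f y = m j y) ∧ (∀ y, (∀ j, y ∉ dom j) → f y = g₀ y) ∧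
      (∀ y ∈ Q, f y ∈ D) ∧ (∀ y ∈ Q, y = f y ∨ E (f y) y) ∧
      ∀ y ∈ Q, ∀ y' ∈ Q, f y = f y' → y = y' := by
  classical
  have hex : ∃ f : V → V, (∀ j, ∀ y ∈ dom j, f y = m j y) ∧ (∀ y, (∀ j, y ∉ dom j) → f y = g₀ y) := by
    refine ⟨fun y => if h : ∃ j, y ∈ dom j then m h.choose y else g₀ y, fun j y hy => ?_, fun y hy => ?_⟩
    · have h : ∃ j, y ∈ dom j := ⟨j, hy⟩
      beta_reduce
      rw [dif_pos h, hdisj _ _ y h.choose_spec hy]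
    · beta_reduce
      rw [dif_neg (by rintro ⟨j, hj⟩; exact hy j hj)]
  obtain ⟨f, hf1, hf2⟩ := hex
  have hc : ∀ y, (∃ j, y ∈ dom j) ∨ ∀ j, y ∉ dom j := fun y => by
    by_cases h : ∃ j, y ∈ dom j
    · exact Or.inl h
    · push Not at h; exact Or.inr h
  refine ⟨f, hf1, hf2, fun y hy => ?_, fun y hy => ?_, fun y hy y' hy' e => ?_⟩
  · rcases hc y with ⟨j, hj⟩ | h
    · rw [hf1 j y hj]; exact (hm j y hj hy).2.1
    · rw [hf2 y h]; exact (h0 y hy h).1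
  · rcases hc y with ⟨j, hj⟩ | h
    · rw [hf1 j y hj]; exact (hm j y hj hy).2.2
    · rw [hf2 y h]; exact (h0 y hy h).2.1
  · rcases hc y with ⟨j, hj⟩ | h <;> rcases hc y' with ⟨j', hj'⟩ | h'
    · rw [hf1 j y hj, hf1 j' y' hj'] at e
      have : j = j' := hvdisj _ _ _ (hm j y hj hy).1 (e ▸ (hm j' y' hj' hy').1)
      subst this
      exact hminj j y hj y' hj' e
    · rw [hf1 j y hj, hf2 y' h'] at e
      exact absurd (e ▸ (hm j y hj hy).1) ((h0 y' hy' h').2.2 j)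
    · rw [hf2 y h, hf1 j' y' hj'] at e
      exact absurd (e ▸ (hm j' y' hj' hy').1) ((h0 y hy h).2.2 j')
    · rw [hf2 y h, hf2 y' h'] at e
      exact h0inj y hy y' hy' h h' e

end Cstar

/-! ### Tracks eventually leave the maximal waves -/
section Lad
open Set Cardinal
universe u
variable {κ : Cardinal.{u}} {ι V : Type u} [LinearOrder ι]
variable {E : V → V → Prop} {B A : Set V} {Mf : Set V → Set V} {Sd : ι → Set V}
  {X : ι → Set V} {g : V → V}

/-- The predecessor function obtained by rerouting along a block: `x i ↦ u i`, `v ↦ u n`,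
and the identity elsewhere. -/
theorem exists_blkmap {n : ℕ} {x u : ℕ → V} {v : V} (hx : ∀ i < n, ∀ j < n, x i = x j → i = j)
    (hv : ∀ i < n, v ≠ x i) :
    ∃ m : V → V, (∀ i < n, m (x i) = u i) ∧ m v = u n ∧ ∀ y, (∀ i < n, y ≠ x i) → y ≠ v → m y = y := by
  classical
  refine ⟨fun y => if h : ∃ i < n, y = x i then u h.choose else if y = v then u n else y,
    fun i hi => ?_, ?_, fun y hy hyv => ?_⟩
  · have h : ∃ j < n, x i = x j := ⟨i, hi, rfl⟩
    beta_reduce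
    rw [dif_pos h]
    exact congrArg u (hx i hi _ h.choose_spec.1 h.choose_spec.2).symm
  · beta_reduce
    rw [dif_neg (by rintro ⟨i, hi, e⟩; exact hv i hi e), if_pos rfl]
  · beta_reduce
    rw [dif_neg (by rintro ⟨i, hi, e⟩; exact hy i hi e), if_neg hyv]

theorem IsBlk.x_inj {X : Set V} {S : Set V} {v : V} {n : ℕ} {x u : ℕ → V}
    (hb : IsBlk E (Gr E B A g X) S v n x u) : ∀ i < n, ∀ j < n, x i = x j → i = j := by
  intro i hi j hj e
  have h1 := (hb.gr i hi).2
  have h2 := (hb.gr j hj).2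
  rw [e, h2] at h1
  have := hb.inj _ (by omega) _ (by omega) h1
  omega

theorem Dead.no_cycle {X D : Set V} {w : V} (h : Dead (Gr E B A g X) X D w) {c : V}
    (hc : c ∈ Fo (Gr E B A g X) w) : ¬ Relation.TransGen (Fw (Gr E B A g X)) c c := by
  have key : ¬ Relation.TransGen (Fw (Gr E B A g X)) w w := by
    intro hw
    obtain ⟨y, h1, h2⟩ := Relation.TransGen.tail'_iff.1 hw
    exact h.2.2.2 y h2 h1
  induction hc with
  | refl => exact key
  | tail h1 h2 ih =>
    intro hc
    obtain ⟨y, h3, h4⟩ := Relation.TransGen.tail'_iff.1 hc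
    refine ih ?_
    have : y = _ := h4.2.symm.trans h2.2
    subst this
    exact Relation.TransGen.head' h2 h3

/-- Unless the web is hindered, at almost all levels every track leaves the maximal wave. -/
theorem CLadder.lrg_no_dead [WellFoundedLT ι] (hκ : RegIdx κ ι) (hL : CLadder κ E B A Mf Sd X g)
    (hU : Unh E B A ∅) :
    Lrg {i | ∀ w, ¬ Dead (Gr E B A g (X i)) (X i) (LD E B A (X i)) w} := by
  classical
  by_contra hno
  -- suppose that dead vertices occur on a stationary set `Φ` of indices
  let Φ : Set ι := {α | α ∈ Cst E B A X ∧ ∃ w, Dead (Gr E B A g (X α)) (X α) (LD E B A (X α)) w}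
  have hΦ : ∀ S, Lrg S → ∃ α ∈ S, α ∈ Φ := by
    intro S hS
    by_contra hc
    push Not at hc
    refine hno ((hS.inter (lrg_cst hκ hL.toLadder)).mono ?_)
    rintro i ⟨hi, hc'⟩ w hw
    exact hc i hi ⟨hc', w, hw⟩
  have hex : ∀ α, ∃ w, α ∈ Φ → Dead (Gr E B A g (X α)) (X α) (LD E B A (X α)) w ∧ (∀ k, α < k → w ∈ X k) ∧
      ∀ v ∈ X α, (∃ a ∈ Fo (Gr E B A g (X α)) w, ∃ c,
        Relation.ReflTransGen (AStep E (Gr E B A g (X α))) a c ∧ (v = c ∨ E c v)) →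
        ∃ n x u, IsBlk E (Gr E B A g (X α)) (Fo (Gr E B A g (X α)) w) v n x u ∧
          ∀ k, α < k → ∀ l < n, x l ∈ X k := by
    intro α
    by_cases h : α ∈ Φ
    · obtain ⟨w, hw⟩ := hL.dead α h.2
      exact ⟨w, fun _ => hw⟩
    · obtain ⟨β, -, -, w, -⟩ := hΦ univ ⟨id, fun _ _ => trivial⟩
      exact ⟨w, fun h' => absurd h' h⟩
  choose w hw using hex
  have hwd : ∀ α ∈ Φ, Dead (Gr E B A g (X α)) (X α) (LD E B A (X α)) (w α) := fun α h => (hw α h).1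
  -- the vertices reached by alternating paths from the track of the dead vertex `w α`
  let Rc : ι → Set V := fun α => {c | ∃ a ∈ Fo (Gr E B A g (X α)) (w α),
    Relation.ReflTransGen (AStep E (Gr E B A g (X α))) a c}
  have hFoRc : ∀ α, Fo (Gr E B A g (X α)) (w α) ⊆ Rc α := fun α a ha => ⟨a, ha, .refl⟩
  have hRcD : ∀ α ∈ Φ, Rc α ⊆ LD E B A (X α) := by
    rintro α hα c ⟨a, ha, hac⟩
    rcases Relation.ReflTransGen.cases_tail hac with rfl | ⟨b, -, y, -, h1, h2⟩
    · exact (hwd α hα).2.2.1 ha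
    · rw [← h2]; exact (hL.wave α).mem _ h1
  have hFoFoot : ∀ α ∈ Φ, ∀ y ∈ Fo (Gr E B A g (X α)) (w α), Foot E B A X α y := by
    intro α hα y hy
    induction hy with
    | refl => exact ⟨(hwd α hα).2.1, fun k _ hk => (hw α hα).2.1 k hk⟩
    | tail h1 h2 ih =>
      refine (hL.foot_g hα.1 h2.1).1 ?_
      rw [h2.2]; exact ih
  have hRcX : ∀ α ∈ Φ, ∀ y ∈ Rc α, y ∉ X α := by
    rintro α hα c ⟨a, ha, hac⟩
    rcases Relation.ReflTransGen.cases_tail hac with rfl | ⟨b, -, y, -, h1, h2⟩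
    · exact (hFoFoot α hα _ ha).1
    · rw [← h2]
      exact fun h => (mem_LDm.1 h1).2.2 (hL.of_g_mem hα.1 h1 h)
  -- `Sk α` is the boundary of `Rc α` in `X α`; popular vertices lie in it for stationarily many `α`
  let Sk : ι → Set V := fun α => {v | v ∈ X α ∧ v ∉ A ∧ v ∈ Rg E (Rc α)}
  let Pop : Set V := {v | ∀ S, Lrg S → ∃ α ∈ S, α ∈ Φ ∧ v ∈ Sk α}
  have hS : ∀ v, ∃ S : Set ι, Lrg S ∧ (v ∉ Pop → ∀ α ∈ S, α ∈ Φ → v ∉ Sk α) := by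
    intro v
    by_cases h : v ∈ Pop
    · exact ⟨univ, ⟨id, fun _ _ => trivial⟩, fun h' => absurd h h'⟩
    · have h' := h
      simp only [Pop, mem_ofPred_eq] at h'
      push Not at h'
      obtain ⟨S, hS, h'⟩ := h'
      exact ⟨S, hS, fun _ => h'⟩
  choose S hS1 hS2 using hS
  -- by diagonal intersection, for almost all `α` the boundary consists of popular vertices
  let Δ : Set ι := {γ | ∀ β < γ, ∀ v ∈ X β, γ ∈ S v}
  have hΔ : Lrg Δ := Lrg.diag hκ hL.small hL.mono S hS1
  let Φ2 : Set ι := {α | α ∈ Φ ∧ α ∈ Δ}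
  have hSkPop : ∀ α ∈ Φ2, Sk α ⊆ Pop := by
    rintro α ⟨hα, hαΔ⟩ v hv
    by_contra hp
    obtain ⟨β, hβ, hvβ⟩ := hL.cont α hα.1.1 v hv.1
    exact hS2 v hp α (hαΔ β hβ v hvβ) hα hv
  obtain ⟨αs, hαsΔ, hαsΦ⟩ := hΦ Δ hΔ
  have hαs : αs ∈ Φ2 := ⟨hαsΦ, hαsΔ⟩
  have hPcard : #Pop ≤ κ := by
    have hsub : Pop ⊆ ⋃ i, X i := by
      intro v hv
      obtain ⟨α, -, -, h⟩ := hv univ ⟨id, fun _ _ => trivial⟩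
      exact mem_iUnion.2 ⟨α, h.1⟩
    refine (mk_le_mk_of_subset hsub).trans ((mk_iUnion_le _).trans ?_)
    rw [hκ.card]
    refine (mul_le_mul_right (ciSup_le' fun i => (hL.small i).le) _).trans ?_
    rw [mul_eq_self hκ.unc.le]
  -- each popular vertex gets an index `β v` of its own, so that different reroutings are disjoint
  obtain ⟨β, hβ, hβinj⟩ := exists_inj_choice hκ hPcard (fun v => {α | α ∈ Φ2 ∧ αs < α ∧ v ∈ Sk α}) (by
    intro v hv δ
    obtain ⟨α, ⟨⟨h1, h2⟩, h3⟩, h4, h5⟩ := hv _ ((hΔ.inter (lrg_gt αs)).inter (lrg_gt δ))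
    exact ⟨α, ⟨⟨h4, h1⟩, h2, h5⟩, h3⟩)
  -- `Ds` becomes a wave for `A`: only the vertices of `Sg` lack a predecessor, and these are
  -- supplied by rerouting along a block ending in the track of `w (β v)`
  let Ds : Set V := {c | ∃ α ∈ Φ2, c ∈ Rc α}
  let Q : Set V := Dm E A ∅ Ds
  let Good : ι → V → Prop := fun α y => α ∈ Φ2 ∧ y ∈ Rg E (Rc α) ∧ y ∉ A ∧ y ∉ X α
  have hGoodDm : ∀ α y, Good α y → y ∈ LDm E B A (X α) := fun α y h =>
    mem_LDm.2 ⟨Rg_mono (hRcD α h.1.1) h.2.1, h.2.2.1, h.2.2.2⟩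
  have hGoodg : ∀ α y, Good α y → g y ∈ Rc α := by
    intro α y h
    obtain ⟨c, ⟨a, ha, hac⟩, hcy⟩ := h.2.1
    exact ⟨a, ha, hac.tail ⟨y, hcy, hGoodDm α y h, rfl⟩⟩
  let Sg : Set V := {y | y ∈ Q ∧ ∀ α, ¬ Good α y}
  have hSgPop : Sg ⊆ Pop := by
    rintro y ⟨⟨⟨c, ⟨α, hα, hc⟩, hcy⟩, hA, -⟩, hng⟩
    refine hSkPop α hα ⟨?_, hA, c, hc, hcy⟩
    by_contra hX
    exact hng α ⟨hα, ⟨c, hc, hcy⟩, hA, hX⟩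
  have hDsSg : ∀ y ∈ Ds, y ∉ A → ∃ α, Good α y := fun y ⟨α, hα, hy⟩ hA =>
    ⟨α, hα, subset_Rg hy, hA, hRcX α hα.1 y hy⟩
  -- the blocks
  have hblk : ∀ v, ∃ n x u, v ∈ Sg → IsBlk E (Gr E B A g (X (β v))) (Fo (Gr E B A g (X (β v))) (w (β v))) v n x u ∧
      ∀ k, β v < k → ∀ l < n, x l ∈ X k := by
    intro v
    by_cases hv : v ∈ Sg
    · obtain ⟨h1, h2, h3, h4, c, ⟨a, ha, hac⟩, hcv⟩ := hβ v (hSgPop hv)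
      obtain ⟨n, x, u, hb⟩ := (hw _ h1.1).2.2 v h3 ⟨a, ha, c, hac, hcv⟩
      exact ⟨n, x, u, fun _ => hb⟩
    · exact ⟨0, fun _ => v, fun _ => v, fun h => absurd h hv⟩
  choose n x u hbk using hblk
  have hb := fun v hv => (hbk v hv).1
  have hβΦ2 : ∀ v ∈ Sg, β v ∈ Φ2 := fun v hv => (hβ v (hSgPop hv)).1
  have hβΦ : ∀ v ∈ Sg, β v ∈ Φ := fun v hv => (hβΦ2 v hv).1
  have hvX : ∀ v ∈ Sg, v ∈ X (β v) := fun v hv => (hβ v (hSgPop hv)).2.2.1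
  have huRc : ∀ v ∈ Sg, ∀ i ≤ n v, u v i ∈ Rc (β v) := by
    intro v hv i hi
    induction i with
    | zero => exact hFoRc _ (hb v hv).start
    | succ i ih =>
      obtain ⟨a, ha, hac⟩ := ih (by omega)
      exact ⟨a, ha, hac.tail ⟨x v i, (hb v hv).adj i hi, (hb v hv).gr i hi⟩⟩
  have hxGood : ∀ v ∈ Sg, ∀ i < n v, Good (β v) (x v i) := fun v hv i hi =>
    ⟨hβΦ2 v hv, ⟨_, huRc v hv i hi.le, (hb v hv).adj i hi⟩, (mem_LDm.1 ((hb v hv).gr i hi).1).2.1,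
      (mem_LDm.1 ((hb v hv).gr i hi).1).2.2⟩
  have hxFoot : ∀ v ∈ Sg, ∀ i < n v, Foot E B A X (β v) (x v i) := fun v hv i hi =>
    ⟨(hxGood v hv i hi).2.2.2, fun k _ hk => (hbk v hv).2 k hk i hi⟩
  have huFoot : ∀ v ∈ Sg, ∀ i ≤ n v, Foot E B A X (β v) (u v i) := by
    intro v hv i hi
    rcases Nat.eq_zero_or_pos i with rfl | hpos
    · exact hFoFoot _ (hβΦ v hv) _ (hb v hv).start
    · obtain ⟨i, rfl⟩ : ∃ k, i = k + 1 := ⟨i - 1, by omega⟩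
      obtain ⟨h1, h2⟩ := (hb v hv).gr i (by omega)
      rw [← h2]
      exact (hL.foot_g (hβΦ v hv).1 h1).2 (hxFoot v hv i (by omega))
  have htr : ∀ α ∈ Φ2, ∀ c ∈ Fo (Gr E B A g (X α)) (w α), ∀ y, Relation.TransGen (Fw (Gr E B A g (X α))) c y →
      y ∈ Fo (Gr E B A g (X α)) (w α) ∧ Good α y ∧ g y ∈ Fo (Gr E B A g (X α)) (w α) := by
    intro α hα c hc y hy
    obtain ⟨z, h1, h2⟩ := Relation.TransGen.tail'_iff.1 hy
    have hz : z ∈ Fo (Gr E B A g (X α)) (w α) := Relation.ReflTransGen.trans hc h1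
    have hy' : y ∈ Fo (Gr E B A g (X α)) (w α) := Relation.ReflTransGen.tail hz h2
    exact ⟨hy', ⟨hα, subset_Rg (hFoRc α hy'), (mem_LDm.1 h2.1).2.1, (mem_LDm.1 h2.1).2.2⟩, h2.2.symm ▸ hz⟩
  have hm0 : ∀ v, ∃ m : V → V, v ∈ Sg → (∀ i < n v, m (x v i) = u v i) ∧ m v = u v (n v) ∧
      ∀ y, (∀ i < n v, y ≠ x v i) → y ≠ v → m y = y := by
    intro v
    by_cases hv : v ∈ Sg
    · obtain ⟨m, hm⟩ := exists_blkmap (u := u v) (hb v hv).x_inj (v := v) fun i hi e =>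
        hv.2 (β v) (by have := hxGood v hv i hi; rwa [← e] at this)
      exact ⟨m, fun _ => hm⟩
    · exact ⟨id, fun h => absurd h hv⟩
  choose m hm using hm0
  -- the places of the modifications; `none` stands for the track of `w αs`, whose vertices become
  -- fixed points of the new function, so that `w αs` gets lost
  let dom : Option Sg → Set V := fun o => match o with
    | none => {y | Relation.TransGen (Fw (Gr E B A g (X αs))) (w αs) y}
    | some v => {y | (∃ i < n v.1, y = x v.1 i) ∨ y = v.1 ∨
        Relation.TransGen (Fw (Gr E B A g (X (β v.1)))) (u v.1 0) y}
  let val : Option Sg → Set V := fun o => match o with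
    | none => {y | Relation.TransGen (Fw (Gr E B A g (X αs))) (w αs) y}
    | some v => {y | (∃ i ≤ n v.1, y = u v.1 i) ∨
        Relation.TransGen (Fw (Gr E B A g (X (β v.1)))) (u v.1 0) y}
  let mm : Option Sg → V → V := fun o => match o with
    | none => id
    | some v => m v.1
  let bb : Option Sg → ι := fun o => match o with
    | none => αs
    | some v => β v.1
  have hbbC : ∀ o, bb o ∈ Cst E B A X := by
    rintro (_ | v)
    · exact hαs.1.1
    · exact (hβΦ _ v.2).1
  have hbbinj : ∀ o o', bb o = bb o' → o = o' := by
    rintro (_ | v) (_ | v') e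
    · rfl
    · exact absurd e (hβ _ (hSgPop v'.2)).2.1.ne
    · exact absurd e.symm (hβ _ (hSgPop v.2)).2.1.ne
    · rw [Subtype.ext (hβinj _ (hSgPop v.2) _ (hSgPop v'.2) e)]
  have hvalFoot : ∀ o, ∀ t ∈ val o, Foot E B A X (bb o) t := by
    rintro (_ | v) t ht
    · exact hFoFoot _ hαs.1 _ (htr αs hαs _ .refl t ht).1
    · rcases ht with ⟨i, hi, rfl⟩ | ht
      · exact huFoot _ v.2 i hi
      · exact hFoFoot _ (hβΦ _ v.2) _ (htr _ (hβΦ2 _ v.2) _ (hb _ v.2).start t ht).1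
  have hdomFoot : ∀ o, ∀ y ∈ dom o, y ∉ Sg → Foot E B A X (bb o) y := by
    rintro (_ | v) t ht hSg
    · exact hFoFoot _ hαs.1 _ (htr αs hαs _ .refl t ht).1
    · rcases ht with ⟨i, hi, rfl⟩ | rfl | ht
      · exact hxFoot _ v.2 i hi
      · exact absurd v.2 hSg
      · exact hFoFoot _ (hβΦ _ v.2) _ (htr _ (hβΦ2 _ v.2) _ (hb _ v.2).start t ht).1
  have hdomSg : ∀ o, ∀ y ∈ dom o, y ∈ Sg → ∃ v, o = some v ∧ y = v.1 := by
    rintro (_ | v) t ht hSg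
    · exact absurd (htr αs hαs _ .refl t ht).2.1 (hSg.2 _)
    · rcases ht with ⟨i, hi, rfl⟩ | rfl | ht
      · exact absurd (hxGood _ v.2 i hi) (hSg.2 _)
      · exact ⟨v, rfl, rfl⟩
      · exact absurd (htr _ (hβΦ2 _ v.2) _ (hb _ v.2).start t ht).2.1 (hSg.2 _)
  -- values on the tail of a track
  have hmtr : ∀ v : Sg, ∀ y, Relation.TransGen (Fw (Gr E B A g (X (β v.1)))) (u v.1 0) y → m v.1 y = y := by
    intro v y hy
    obtain ⟨h1, h2, h3⟩ := htr _ (hβΦ2 _ v.2) _ (hb _ v.2).start y hy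
    refine (hm v.1 v.2).2.2 y (fun i hi e => ?_) fun e => v.2.2 _ (e ▸ h2)
    refine (hb _ v.2).off (i + 1) hi (by omega) ?_
    rw [← ((hb _ v.2).gr i hi).2, ← e]; exact h3
  have huSep : ∀ v : Sg, ∀ i ≤ n v.1, ¬ Relation.TransGen (Fw (Gr E B A g (X (β v.1)))) (u v.1 0) (u v.1 i) := by
    intro v i hi hy
    rcases Nat.eq_zero_or_pos i with rfl | hpos
    · exact (hwd _ (hβΦ _ v.2)).no_cycle (hb _ v.2).start hy
    · exact (hb _ v.2).off i hi hpos (htr _ (hβΦ2 _ v.2) _ (hb _ v.2).start _ hy).1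
  have hnoSg : ∀ y ∈ Q, (∀ j, y ∉ dom j) → ∃ α, Good α y := by
    intro y hy hj
    by_contra hc
    push Not at hc
    exact hj (some ⟨y, hy, hc⟩) (Or.inr (Or.inl rfl))
  obtain ⟨f, hf1, hf2, hf3, hf4, hf5⟩ := surgery (E := E) (D := Ds) (Q := Q) g dom val mm
    (by
      intro o o' y hy hy'
      by_cases hSg : y ∈ Sg
      · obtain ⟨v, rfl, e⟩ := hdomSg o y hy hSg
        obtain ⟨v', rfl, e'⟩ := hdomSg o' y hy' hSg
        rw [Subtype.ext (e.symm.trans e')]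
      · exact hbbinj _ _ (Foot.unique (hbbC o) (hbbC o') (hdomFoot o y hy hSg) (hdomFoot o' y hy' hSg)))
    (fun o o' t ht ht' => hbbinj _ _ (Foot.unique (hbbC o) (hbbC o') (hvalFoot o t ht) (hvalFoot o' t ht')))
    (by
      rintro (_ | v) y hy hyQ
      · exact ⟨hy, ⟨αs, hαs, hFoRc _ (htr αs hαs _ .refl y hy).1⟩, Or.inl rfl⟩
      · rcases hy with ⟨i, hi, rfl⟩ | rfl | hy
        · change m v.1 _ ∈ _ ∧ m v.1 _ ∈ _ ∧ (_ = m v.1 _ ∨ E (m v.1 _) _)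
          rw [(hm _ v.2).1 i hi]
          exact ⟨Or.inl ⟨i, hi.le, rfl⟩, ⟨_, hβΦ2 _ v.2, huRc _ v.2 i hi.le⟩, (hb _ v.2).adj i hi⟩
        · change m v.1 _ ∈ _ ∧ m v.1 _ ∈ _ ∧ (_ = m v.1 _ ∨ E (m v.1 _) _)
          rw [(hm _ v.2).2.1]
          exact ⟨Or.inl ⟨_, le_rfl, rfl⟩, ⟨_, hβΦ2 _ v.2, huRc _ v.2 _ le_rfl⟩, (hb _ v.2).last⟩
        · change m v.1 _ ∈ _ ∧ m v.1 _ ∈ _ ∧ (_ = m v.1 _ ∨ E (m v.1 _) _)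
          rw [hmtr v y hy]
          exact ⟨Or.inr hy, ⟨_, hβΦ2 _ v.2, hFoRc _ (htr _ (hβΦ2 _ v.2) _ (hb _ v.2).start y hy).1⟩, Or.inl rfl⟩)
    (by
      rintro (_ | v) y hy y' hy' e
      · exact e
      · change m v.1 _ = m v.1 _ at e
        have hval : ∀ y ∈ dom (some v), (∃ i ≤ n v.1, m v.1 y = u v.1 i ∧ ((∃ _ : i < n v.1, y = x v.1 i) ∨ i = n v.1 ∧ y = v.1)) ∨
            (Relation.TransGen (Fw (Gr E B A g (X (β v.1)))) (u v.1 0) y ∧ m v.1 y = y) := by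
          rintro y (⟨i, hi, rfl⟩ | rfl | hy)
          · exact Or.inl ⟨i, hi.le, (hm _ v.2).1 i hi, Or.inl ⟨hi, rfl⟩⟩
          · exact Or.inl ⟨_, le_rfl, (hm _ v.2).2.1, Or.inr ⟨rfl, rfl⟩⟩
          · exact Or.inr ⟨hy, hmtr v y hy⟩
        rcases hval y hy with ⟨i, hi, h1, h2⟩ | ⟨h1, h2⟩ <;> rcases hval y' hy' with ⟨j, hj, h3, h4⟩ | ⟨h3, h4⟩
        · have := (hb _ v.2).inj i hi j hj (h1.symm.trans (e.trans h3))
          subst this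
          rcases h2 with ⟨h2, rfl⟩ | ⟨h2, rfl⟩ <;> rcases h4 with ⟨h4, rfl⟩ | ⟨h4, rfl⟩
          · rfl
          · omega
          · omega
          · rfl
        · exact absurd (show Relation.TransGen (Fw (Gr E B A g (X (β v.1)))) (u v.1 0) (u v.1 i) by
            rw [← h1, e, h4]; exact h3) (huSep v i hi)
        · exact absurd (show Relation.TransGen (Fw (Gr E B A g (X (β v.1)))) (u v.1 0) (u v.1 j) by
            rw [← h3, ← e, h2]; exact h1) (huSep v j hj)
        · rw [← h2, e, h4])
    (by
      intro y hy hj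
      obtain ⟨α, hα⟩ := hnoSg y hy hj
      have hDmy := hGoodDm α y hα
      refine ⟨⟨α, hα.1, hGoodg α y hα⟩, (hL.wave α).adj y hDmy, ?_⟩
      -- the successor of a track vertex is again on the track
      have hstep : ∀ γ ∈ Φ2, ∀ c ∈ Fo (Gr E B A g (X γ)) (w γ), g y = c → Fw (Gr E B A g (X γ)) c y := by
        intro γ hγ c hc e
        exact ⟨hL.lift hγ.1.1 hDmy (e ▸ (hwd γ hγ.1).2.2.1 hc) (e ▸ (hFoFoot γ hγ.1 _ hc).1), e⟩
      rintro (_ | v) hv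
      · exact hj none (Relation.TransGen.tail hv (hstep αs hαs _ (htr αs hαs _ .refl _ hv).1 rfl))
      · rcases hv with ⟨i, hi, e⟩ | hv
        · rcases Nat.eq_zero_or_pos i with rfl | hpos
          · exact hj (some v) (Or.inr (Or.inr (Relation.TransGen.single
              (hstep _ (hβΦ2 _ v.2) _ (hb _ v.2).start e))))
          · obtain ⟨i, rfl⟩ : ∃ k, i = k + 1 := ⟨i - 1, by omega⟩
            obtain ⟨h1, h2⟩ := (hb _ v.2).gr i (by omega)
            exact hj (some v) (Or.inl ⟨i, by omega, hL.g_inj hDmy h1 (e.trans h2.symm)⟩)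
        · exact hj (some v) (Or.inr (Or.inr (Relation.TransGen.tail hv (hstep _ (hβΦ2 _ v.2) _
            (htr _ (hβΦ2 _ v.2) _ (hb _ v.2).start _ hv).1 rfl)))))
    (by
      intro y hy y' hy' hj hj' e
      obtain ⟨α, hα⟩ := hnoSg y hy hj
      obtain ⟨α', hα'⟩ := hnoSg y' hy' hj'
      exact hL.g_inj (hGoodDm α y hα) (hGoodDm α' y' hα') e)
  have hwave : WaveF E B A ∅ Ds f := by
    refine ⟨fun _ _ => notMem_empty _, ?_, hf3, hf4, hf5, ?_⟩
    · rintro c ⟨α, hα, hc⟩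
      exact (hL.wave α).notB c (hRcD α hα.1 hc)
    · intro y0 hy0 hyQ0 hyf0
      obtain ⟨y, hy, hyQ, hyf, hyG⟩ : ∃ y : ℕ → V, Function.Injective y ∧ (∀ k, y k ∈ Q) ∧
          (∀ k, y (k + 1) = f (y k)) ∧ ∀ k, y k ∉ Sg := by
        refine ⟨fun k => y0 (k + 1), fun a b h => Nat.succ_injective (hy0 h), fun k => hyQ0 _, fun k => hyf0 _, fun k h => ?_⟩
        obtain ⟨α, hα⟩ := hDsSg (y0 (k + 1)) (hyf0 k ▸ hf3 _ (hyQ0 k)) (hyQ0 _).2.1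
        exact h.2 α hα
      have hne : ∀ k, f (y k) ≠ y k := fun k e => by
        have := hy ((hyf k).trans e); omega
      have hbase : ∀ k, (∀ o, y k ∉ dom o) → ∀ γ ∈ Cst E B A X, Foot E B A X γ (y k) → Foot E B A X γ (y (k + 1)) := by
        intro k hk γ hγ hF
        obtain ⟨α, hα⟩ := hnoSg _ (hyQ k) hk
        rw [hyf, hf2 _ hk]
        exact (hL.foot_g hγ (hGoodDm _ _ hα)).2 hF
      -- from some point on the orbit follows `g`
      obtain ⟨N, hN⟩ : ∃ N, ∀ k, N ≤ k → ∀ o, y k ∉ dom o := by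
        by_cases hall : ∀ k o, y k ∉ dom o
        · exact ⟨0, fun k _ => hall k⟩
        · push Not at hall
          obtain ⟨N, o, hNo⟩ := hall
          have hdomval : ∀ k o', y k ∈ dom o' → ∃ v : Sg, o' = some v ∧ ∃ i < n v.1, y k = x v.1 i := by
            rintro k (_ | v) hk
            · exact absurd (hf1 none _ hk) (hne k)
            · rcases hk with h | h | h
              · exact ⟨v, rfl, h⟩
              · exact absurd (h ▸ v.2) (hyG k)
              · refine absurd ?_ (hne k)
                rw [hf1 (some v) _ (Or.inr (Or.inr h))]; exact hmtr v _ h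
          have hFall : ∀ k, Foot E B A X (bb o) (y (N + k)) := by
            intro k
            induction k with
            | zero => exact hdomFoot o _ hNo (hyG _)
            | succ k ih =>
              by_cases hk : ∀ o', y (N + k) ∉ dom o'
              · exact hbase _ hk _ (hbbC o) ih
              · push Not at hk
                obtain ⟨o', ho'⟩ := hk
                have : o' = o := hbbinj _ _ (Foot.unique (hbbC _) (hbbC _) (hdomFoot o' _ ho' (hyG _)) ih)
                subst this
                obtain ⟨v, rfl, i, hi, e⟩ := hdomval _ _ ho'
                rw [← add_assoc, hyf, hf1 (some v) _ ho', e]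
                change Foot E B A X _ (m v.1 _)
                rw [(hm _ v.2).1 i hi]
                exact huFoot _ v.2 i hi.le
          obtain ⟨v, rfl, -⟩ := hdomval _ _ hNo
          have hfin : {k | ∃ i < n v.1, y k = x v.1 i}.Finite := by
            refine Set.Finite.of_finite_image (f := y) (((finite_Iio (n v.1)).image (x v.1)).subset ?_) hy.injOn
            rintro _ ⟨k, ⟨i, hi, e⟩, rfl⟩
            exact ⟨i, hi, e.symm⟩
          obtain ⟨M, hM⟩ := hfin.bddAbove
          refine ⟨max N (M + 1), fun k hk o' ho' => ?_⟩
          obtain ⟨j, rfl⟩ : ∃ j, k = N + j := ⟨k - N, by omega⟩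
          have : o' = some v := hbbinj _ _ (Foot.unique (hbbC o') (hbbC (some v)) (hdomFoot o' _ ho' (hyG _)) (hFall j))
          subst this
          obtain ⟨v', e, h⟩ := hdomval (N + j) (some v) ho'
          obtain rfl := Option.some_inj.1 e
          have : N + j ≤ M := hM h
          omega
      obtain ⟨α, hα⟩ := hnoSg _ (hyQ N) (hN N le_rfl)
      have hall : ∀ k, Good α (y (N + k)) := by
        intro k
        induction k with
        | zero => exact hα
        | succ k ih =>
          have h1 := hGoodg α _ ih
          rw [← hf2 _ (hN (N + k) (by omega)), ← hyf] at h1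
          exact ⟨hα.1, subset_Rg h1, (hyQ _).2.1, hRcX α hα.1.1 _ h1⟩
      refine (hL.wave α).noray (fun k => y (N + k)) (fun a b h => by have := hy h; omega)
        (fun k => hGoodDm α _ (hall k)) fun k => ?_
      rw [← hf2 _ (hN (N + k) (by omega)), ← hyf]; rfl
  obtain ⟨y, hyQ, hyw⟩ := hU Ds f hwave (w αs) ⟨αs, hαs, hFoRc _ Relation.ReflTransGen.refl⟩
  by_cases hj : ∀ o, y ∉ dom o
  · obtain ⟨α, hα⟩ := hnoSg y hyQ hj
    rw [hf2 _ hj] at hyw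
    refine hj none (Relation.TransGen.single ⟨hL.lift hαs.1.1 (hGoodDm α y hα) ?_ ?_, hyw⟩)
    · rw [hyw]; exact (hwd _ hαs.1).1
    · rw [hyw]; exact (hwd _ hαs.1).2.1
  · push Not at hj
    obtain ⟨o, ho⟩ := hj
    have hFw : Foot E B A X αs (w αs) := hFoFoot _ hαs.1 _ Relation.ReflTransGen.refl
    rcases o with _ | v
    · have e : y = w αs := (hf1 none _ ho).symm.trans hyw
      exact (hwd _ hαs.1).no_cycle Relation.ReflTransGen.refl (e ▸ ho : w αs ∈ dom none)
    · have hv : w αs ∈ val (some v) := by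
        rw [← hyw]
        rcases ho with ⟨i, hi, rfl⟩ | rfl | ho
        · rw [hf1 (some v) _ (Or.inl ⟨i, hi, rfl⟩)]
          exact Or.inl ⟨i, hi.le, (hm _ v.2).1 i hi⟩
        · rw [hf1 (some v) _ (Or.inr (Or.inl rfl))]
          exact Or.inl ⟨_, le_rfl, (hm _ v.2).2.1⟩
        · rw [hf1 (some v) _ (Or.inr (Or.inr ho))]
          have e : mm (some v) y = y := hmtr v y ho
          rw [e]
          exact Or.inr ho
      have := Foot.unique (hbbC none) (hbbC (some v)) hFw (hvalFoot (some v) _ hv)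
      exact absurd (hbbinj none (some v) this) (by simp)

end Lad

/-! ### The web between two levels -/
section Step
open Set Cardinal
universe u
variable {κ : Cardinal.{u}} {ι V : Type u} [LinearOrder ι]
variable {E : V → V → Prop} {B A : Set V} {Mf : Set V → Set V} {Sd : ι → Set V}
  {X : ι → Set V} {g : V → V}

/-- The edges of the web between two levels: those of `E` together with the virtual edges
given by wide pairs at the upper level `X`. -/
def SE (κ : Cardinal.{u}) (E : V → V → Prop) (B A : Set V) (g : V → V) (X : Set V) (a v : V) : Prop :=
  E a v ∨ (a ≠ v ∧ a ∈ LD E B A X ∧ Wide κ E (Gr E B A g X) a v)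

/-- Alternating reachability between vertices of a closed level, outside that level, yields
a wide pair. -/
theorem CLadder.wide_of_reach (hκ : RegIdx κ ι) (hL : CLadder κ E B A Mf Sd X g) {i : ι}
    (hi : i ∈ Cst E B A X) {a c v : V} (ha : a ∈ X i) (haD : a ∈ LD E B A (X i)) (hv : v ∈ X i)
    (hac : Relation.ReflTransGen (AStep E (Gr E B A g (X i))) a c) (hcv : v = c ∨ E c v) :
    Wide κ E (Gr E B A g (X i)) a v := by
  by_contra hw
  obtain ⟨k, hk, hka⟩ := hi.2 a ha i haD
  obtain ⟨k1, hkk1, hk1, hak⟩ := hL.mem_of_lim hi.1 hk ha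
  obtain ⟨k2, hkk2, hk2, hvk⟩ := hL.mem_of_lim hi.1 hk1 hv
  have haD2 : a ∈ LD E B A (X k2) := LD_mono (hL.mono _ _ (hkk1.trans hkk2)) hka
  obtain ⟨n, x, u, hb⟩ := exists_isBlk (mem_singleton a) hac hcv
  rw [hL.wide_iff hκ hk2.le haD2] at hw
  obtain ⟨l, hl, hxl⟩ := hL.narrow k2 k2 i le_rfl hk2 a (hL.mono _ _ hkk2 hak) v hvk hw n x u
    (hL.blk_down hk2.le haD2 hb)
  exact (mem_LDm.1 (hb.gr l hl).1).2.2 hxl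

/-- The web between two levels is unhindered, if the web above the lower level is. -/
theorem CLadder.unh_step [WellFoundedLT ι] (hκ : RegIdx κ ι) (hL : CLadder κ E B A Mf Sd X g)
    {i : ι} (hi : i ∈ Cst E B A X) {D₀ T₀ X₀ S : Set V}
    (hcov : ∀ x, x ∈ A ∨ x ∈ Rg E D₀ ∨ x ∈ X₀ → x ∈ T₀ ∨ x ∈ D₀)
    (hU : Unh E B T₀ (D₀ ∪ S)) (hS : S ⊆ X i) :
    Unh (SE κ E B A g (X i)) ((X i \ (D₀ ∪ X₀ ∪ S)) \ LD E B A (X i)) ((X i \ (D₀ ∪ X₀ ∪ S)) ∩ T₀)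
      (X i \ (D₀ ∪ X₀ ∪ S))ᶜ := by
  classical
  intro Dl h hw s hs
  by_contra hlost
  push Not at hlost
  have hDV : ∀ x ∈ Dl, x ∈ X i \ (D₀ ∪ X₀ ∪ S) := fun x hx => not_not.1 (hw.notZ x hx)
  have hDX : ∀ x ∈ Dl, x ∈ X i := fun x hx => (hDV x hx).1
  have hDD : ∀ x ∈ Dl, x ∈ LD E B A (X i) := fun x hx => by
    by_contra hc
    exact hw.notB x hx ⟨hDV x hx, hc⟩
  -- the vertices reached from `Dl` by alternating paths outside the level; `O \ D₀` will be
  -- a wave which loses the same vertex as `Dl`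
  let O : Set V := {c | ∃ a ∈ Dl, Relation.ReflTransGen (AStep E (Gr E B A g (X i))) a c}
  have hOD : ∀ c ∈ O, c ∈ LD E B A (X i) := by
    rintro c ⟨a, ha, hac⟩
    rcases Relation.ReflTransGen.cases_tail hac with rfl | ⟨b, -, y, -, h1, h2⟩
    · exact hDD _ ha
    · rw [← h2]; exact (hL.wave i).mem _ h1
  have hOX : ∀ c ∈ O, c ∈ X i → c ∈ Dl := by
    rintro c ⟨a, ha, hac⟩ hX
    rcases Relation.ReflTransGen.cases_tail hac with rfl | ⟨b, -, y, -, h1, h2⟩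
    · exact ha
    · rw [← h2] at hX
      exact absurd (hL.of_g_mem hi h1 hX) (mem_LDm.1 h1).2.2
  have hDlO : Dl ⊆ O := fun a ha => ⟨a, ha, .refl⟩
  have hOstep : ∀ c ∈ O, ∀ y, (y = c ∨ E c y) → y ∈ LDm E B A (X i) → g y ∈ O := by
    rintro c ⟨a, ha, hac⟩ y hcy hy
    exact ⟨a, ha, hac.tail ⟨y, hcy, hy, rfl⟩⟩
  let D : Set V := O \ D₀
  let Q : Set V := Dm E T₀ (D₀ ∪ S) D
  have hQ : ∀ x ∈ Q, x ∉ A ∧ x ∉ Rg E D₀ ∧ x ∉ X₀ := by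
    rintro x ⟨-, hT, hZ⟩
    have : ¬ (x ∈ A ∨ x ∈ Rg E D₀ ∨ x ∈ X₀) := fun h => (hcov x h).elim hT fun h => hZ (Or.inl h)
    push Not at this
    exact this
  have hQout : ∀ x ∈ Q, x ∉ X i → x ∈ LDm E B A (X i) ∧ g x ∈ O := by
    rintro x hx hX
    obtain ⟨c, hc, hcx⟩ := hx.1
    have : x ∈ LDm E B A (X i) := mem_LDm.2 ⟨⟨c, hOD c hc.1, hcx⟩, (hQ x hx).1, hX⟩
    exact ⟨this, hOstep c hc.1 x hcx this⟩
  have hQin : ∀ x ∈ Q, x ∈ X i → x ∈ Dm (SE κ E B A g (X i)) ((X i \ (D₀ ∪ X₀ ∪ S)) ∩ T₀)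
      (X i \ (D₀ ∪ X₀ ∪ S))ᶜ Dl := by
    intro x hx hX
    refine ⟨?_, fun h => hx.2.1 h.2, fun h => h ⟨hX, ?_⟩⟩
    · obtain ⟨c, ⟨⟨a, ha, hac⟩, -⟩, hcx⟩ := hx.1
      refine ⟨a, ha, ?_⟩
      by_cases hax : a = x
      · exact Or.inl hax.symm
      · exact Or.inr (Or.inr ⟨hax, hDD a ha, hL.wide_of_reach hκ hi (hDX a ha) (hDD a ha) hX hac hcx⟩)
    · rintro ((h | h) | h)
      · exact hx.2.2 (Or.inl h)
      · exact (hQ x hx).2.2 h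
      · exact hx.2.2 (Or.inr h)
  -- vertices whose predecessor is joined to them by a virtual edge only
  let P : Set V := {x | x ∈ Q ∧ x ∈ X i ∧ ¬ (x = h x ∨ E (h x) x)}
  have hPw : ∀ x ∈ P, Wide κ E (Gr E B A g (X i)) (h x) x := by
    rintro x ⟨hx, hX, hn⟩
    rcases hw.adj x (hQin x hx hX) with e | e | e
    · exact absurd (Or.inl e) hn
    · exact absurd (Or.inr e) hn
    · exact e.2.2
  -- every virtual edge is replaced by a block in a layer of its own above the level
  obtain ⟨β, hβ, hβinj⟩ := exists_inj_choice hκ (P := P)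
    (((mk_le_mk_of_subset fun x hx => hx.2.1).trans_lt (hL.small i)).le)
    (fun _ => {δ | δ ∈ Cst E B A X ∧ i < δ}) (by
    intro v hv δ
    obtain ⟨α, ⟨h1, h2⟩, h3⟩ := ((lrg_cst hκ hL.toLadder).inter (lrg_gt i)).unbdd hκ δ
    exact ⟨α, ⟨h1, h2⟩, h3⟩)
  have hblk : ∀ v, ∃ n x u, v ∈ P → IsBlk E (Gr E B A g (X i)) {h v} v n x u ∧
      ∀ l < n, Foot E B A X (β v) (x l) := by
    intro v
    by_cases hv : v ∈ P
    · have hlt := (hβ v hv).2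
      have hd := hw.mem v (hQin v hv.1 hv.2.1)
      obtain ⟨n, x, u, hb, h1, h2⟩ := hL.wide (β v) (h v) (hL.mono _ _ hlt.le (hDX _ hd)) v
        (hL.mono _ _ hlt.le hv.2.1) ((hL.wide_iff hκ hlt.le (hDD _ hd)).2 (hPw v hv))
      exact ⟨n, x, u, fun _ => ⟨hL.blk_down hlt.le (hDD _ hd) hb, fun l hl =>
        ⟨h1 l hl, fun k _ hk => h2 k hk l hl⟩⟩⟩
    · exact ⟨0, fun _ => v, fun _ => v, fun h => absurd h hv⟩
  choose n x u hbk using hblk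
  have hb := fun v hv => (hbk v hv).1
  have hxF := fun v hv => (hbk v hv).2
  have hβC : ∀ v ∈ P, β v ∈ Cst E B A X := fun v hv => (hβ v hv).1
  have hFX : ∀ v ∈ P, ∀ y, Foot E B A X (β v) y → y ∉ X i := fun v hv y hy h =>
    hy.1 (hL.mono _ _ (hβ v hv).2.le h)
  have hhD : ∀ v ∈ P, h v ∈ Dl := fun v hv => hw.mem v (hQin v hv.1 hv.2.1)
  have hu0 : ∀ v ∈ P, u v 0 = h v := fun v hv => (hb v hv).start
  have huF : ∀ v ∈ P, ∀ l ≤ n v, 0 < l → Foot E B A X (β v) (u v l) := by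
    intro v hv l hl hpos
    obtain ⟨l, rfl⟩ : ∃ k, l = k + 1 := ⟨l - 1, by omega⟩
    obtain ⟨h1, h2⟩ := (hb v hv).gr l (by omega)
    rw [← h2]
    exact (hL.foot_g (hβC v hv) h1).2 (hxF v hv l (by omega))
  have huO : ∀ v ∈ P, ∀ l ≤ n v, u v l ∈ O := by
    intro v hv l hl
    induction l with
    | zero => rw [hu0 v hv]; exact hDlO (hhD v hv)
    | succ l ih =>
      obtain ⟨h1, h2⟩ := (hb v hv).gr l (by omega)
      rw [← h2]
      exact hOstep _ (ih (by omega)) _ ((hb v hv).adj l (by omega)) h1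
  have hnpos : ∀ v ∈ P, 0 < n v := by
    intro v hv
    rcases Nat.eq_zero_or_pos (n v) with e | e
    · have := (hb v hv).last
      rw [e, hu0 v hv] at this
      exact absurd this hv.2.2
    · exact e
  have hm0 : ∀ v, ∃ m : V → V, v ∈ P → (∀ l < n v, m (x v l) = u v l) ∧ m v = u v (n v) := by
    intro v
    by_cases hv : v ∈ P
    · obtain ⟨m, hm⟩ := exists_blkmap (u := u v) (hb v hv).x_inj (v := v) fun l hl e =>
        hFX v hv _ (hxF v hv l hl) (by rw [← e]; exact hv.2.1)
      exact ⟨m, fun _ => ⟨hm.1, hm.2.1⟩⟩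
    · exact ⟨id, fun h => absurd h hv⟩
  choose m hm using hm0
  let g₀ : V → V := fun y => if y ∈ X i then h y else g y
  have hg1 : ∀ y ∈ X i, g₀ y = h y := fun y hy => if_pos hy
  have hg2 : ∀ y, y ∉ X i → g₀ y = g y := fun y hy => if_neg hy
  have hgO : ∀ y ∈ Q, y ∉ X i → g y ∉ X i := fun y hy hX hg =>
    hX (hL.of_g_mem hi (hQout y hy hX).1 hg)
  let dom : P → Set V := fun v => {y | (∃ l < n v.1, y = x v.1 l) ∨ y = v.1}
  let val : P → Set V := fun v => {y | ∃ l ≤ n v.1, y = u v.1 l}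
  have hDout : ∀ c ∈ O, ∀ y ∈ Q, (y = c ∨ E c y) → c ∈ D := fun c hc y hy hcy =>
    ⟨hc, fun h => (hQ y hy).2.1 ⟨c, h, hcy⟩⟩
  have hmval : ∀ v : P, ∀ y ∈ dom v, m v.1 y ∈ val v := by
    rintro v y (⟨l, hl, rfl⟩ | rfl)
    · exact ⟨l, hl.le, (hm _ v.2).1 l hl⟩
    · exact ⟨_, le_rfl, (hm _ v.2).2⟩
  obtain ⟨f, hf1, hf2, hf3, hf4, hf5⟩ := surgery (E := E) (D := D) (Q := Q) g₀ dom val (fun v => m v.1)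
    (by
      rintro v v' y (⟨l, hl, rfl⟩ | rfl) (⟨l', hl', e⟩ | e)
      · exact Subtype.ext (hβinj _ v.2 _ v'.2 (Foot.unique (hβC _ v.2) (hβC _ v'.2) (hxF _ v.2 l hl)
          (e ▸ hxF _ v'.2 l' hl')))
      · exact absurd (e ▸ v'.2.2.1) (hFX _ v.2 _ (hxF _ v.2 l hl))
      · exact absurd (e ▸ v.2.2.1) (hFX _ v'.2 _ (hxF _ v'.2 l' hl'))
      · exact Subtype.ext e)
    (by
      rintro v v' t ⟨l, hl, rfl⟩ ⟨l', hl', e⟩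
      rcases Nat.eq_zero_or_pos l with rfl | hpos <;> rcases Nat.eq_zero_or_pos l' with rfl | hpos'
      · rw [hu0 _ v.2, hu0 _ v'.2] at e
        exact Subtype.ext (hw.inj _ (hQin _ v.2.1 v.2.2.1) _ (hQin _ v'.2.1 v'.2.2.1) e)
      · rw [hu0 _ v.2] at e
        exact absurd (e ▸ hDX _ (hhD _ v.2)) (hFX _ v'.2 _ (huF _ v'.2 l' hl' hpos'))
      · rw [hu0 _ v'.2] at e
        exact absurd (e ▸ hDX _ (hhD _ v'.2)) (hFX _ v.2 _ (huF _ v.2 l hl hpos))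
      · exact Subtype.ext (hβinj _ v.2 _ v'.2 (Foot.unique (hβC _ v.2) (hβC _ v'.2) (huF _ v.2 l hl hpos)
          (e ▸ huF _ v'.2 l' hl' hpos'))))
    (by
      rintro v y hy hyQ
      refine ⟨hmval v y hy, ?_⟩
      rcases hy with ⟨l, hl, rfl⟩ | rfl
      · beta_reduce
        rw [(hm _ v.2).1 l hl]
        exact ⟨hDout _ (huO _ v.2 l hl.le) _ hyQ ((hb _ v.2).adj l hl), (hb _ v.2).adj l hl⟩
      · beta_reduce
        rw [(hm _ v.2).2]
        exact ⟨hDout _ (huO _ v.2 _ le_rfl) _ hyQ (hb _ v.2).last, (hb _ v.2).last⟩)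
    (by
      rintro v y (⟨l, hl, rfl⟩ | rfl) y' (⟨l', hl', rfl⟩ | rfl) e <;> beta_reduce at e
      · rw [(hm _ v.2).1 l hl, (hm _ v.2).1 l' hl'] at e
        rw [(hb _ v.2).inj l hl.le l' hl'.le e]
      · rw [(hm _ v.2).1 l hl, (hm _ v.2).2] at e
        exact absurd ((hb _ v.2).inj l hl.le _ le_rfl e) hl.ne
      · rw [(hm _ v.2).1 l' hl', (hm _ v.2).2] at e
        exact absurd ((hb _ v.2).inj _ le_rfl l' hl'.le e).symm hl'.ne
      · rfl)
    (by
      intro y hy hj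
      by_cases hX : y ∈ X i
      · rw [hg1 y hX]
        have hreal : y = h y ∨ E (h y) y := by
          by_contra hc
          exact hj ⟨y, hy, hX, hc⟩ (Or.inr rfl)
        refine ⟨hDout _ (hDlO (hw.mem y (hQin y hy hX))) y hy hreal, hreal, ?_⟩
        rintro v ⟨l, hl, e⟩
        rcases Nat.eq_zero_or_pos l with rfl | hpos
        · rw [hu0 _ v.2] at e
          exact hj v (Or.inr (hw.inj _ (hQin y hy hX) _ (hQin _ v.2.1 v.2.2.1) e))
        · exact hFX _ v.2 _ (huF _ v.2 l hl hpos) (e ▸ hDX _ (hw.mem y (hQin y hy hX)))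
      · rw [hg2 y hX]
        obtain ⟨h1, h2⟩ := hQout y hy hX
        have ha := (hL.wave i).adj y h1
        refine ⟨hDout _ h2 y hy ha, ha, ?_⟩
        rintro v ⟨l, hl, e⟩
        rcases Nat.eq_zero_or_pos l with rfl | hpos
        · rw [hu0 _ v.2] at e
          exact hgO y hy hX (e ▸ hDX _ (hhD _ v.2))
        · obtain ⟨l, rfl⟩ : ∃ k, l = k + 1 := ⟨l - 1, by omega⟩
          obtain ⟨h3, h4⟩ := (hb _ v.2).gr l (by omega)
          exact hj v (Or.inl ⟨l, by omega, hL.g_inj h1 h3 (e.trans h4.symm)⟩))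
    (by
      intro y hy y' hy' hj hj' e
      by_cases hX : y ∈ X i <;> by_cases hX' : y' ∈ X i
      · rw [hg1 y hX, hg1 y' hX'] at e
        exact hw.inj _ (hQin y hy hX) _ (hQin y' hy' hX') e
      · rw [hg1 y hX, hg2 y' hX'] at e
        exact absurd (e ▸ hDX _ (hw.mem _ (hQin y hy hX))) (hgO y' hy' hX')
      · rw [hg2 y hX, hg1 y' hX'] at e
        exact absurd (e ▸ hDX _ (hw.mem _ (hQin y' hy' hX'))) (hgO y hy hX)
      · rw [hg2 y hX, hg2 y' hX'] at e
        exact hL.g_inj (hQout y hy hX).1 (hQout y' hy' hX').1 e)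
  -- how `f` acts on the vertices inside and outside the level
  have hfv : ∀ v : P, f v.1 = u v.1 (n v.1) := fun v => by
    rw [hf1 v _ (Or.inr rfl)]; exact (hm _ v.2).2
  have hfreal : ∀ y ∈ Q, y ∈ X i → y ∉ P → f y = h y := by
    intro y hy hX hP
    rw [hf2 y, hg1 y hX]
    rintro v (⟨l, hl, rfl⟩ | rfl)
    · exact hFX _ v.2 _ (hxF _ v.2 l hl) hX
    · exact hP v.2
  have hfout : ∀ y ∈ Q, y ∉ X i → f y = g y ∨ ∃ v : P, ∃ l < n v.1, y = x v.1 l ∧ f y = u v.1 l := by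
    intro y hy hX
    by_cases hj : ∀ v, y ∉ dom v
    · exact Or.inl ((hf2 y hj).trans (hg2 y hX))
    · push Not at hj
      obtain ⟨v, hv⟩ := hj
      rcases hv with ⟨l, hl, rfl⟩ | rfl
      · refine Or.inr ⟨v, l, hl, rfl, ?_⟩
        rw [hf1 v _ (Or.inl ⟨l, hl, rfl⟩)]; exact (hm _ v.2).1 l hl
      · exact absurd v.2.2.1 hX
  have hfoot : ∀ y ∈ Q, y ∉ X i → ∀ v : P, Foot E B A X (β v.1) y →
      Foot E B A X (β v.1) (f y) ∨ f y = h v.1 := by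
    intro y hy hX v hF
    rcases hfout y hy hX with e | ⟨v', l, hl, rfl, e⟩
    · rw [e]
      exact Or.inl ((hL.foot_g (hβC _ v.2) (hQout y hy hX).1).2 hF)
    · have : v' = v := Subtype.ext (hβinj _ v'.2 _ v.2
        (Foot.unique (hβC _ v'.2) (hβC _ v.2) (hxF _ v'.2 l hl) hF))
      subst this
      rw [e]
      rcases Nat.eq_zero_or_pos l with rfl | hpos
      · exact Or.inr (hu0 _ v'.2)
      · exact Or.inl (huF _ v'.2 l hl.le hpos)
  have hwave : WaveF E B T₀ (D₀ ∪ S) D f := by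
    refine ⟨?_, fun c hc => (hL.wave i).notB c (hOD c hc.1), hf3, hf4, hf5, ?_⟩
    · rintro c ⟨hc, hc0⟩ (h' | h')
      · exact hc0 h'
      · exact (hDV c (hOX c hc (hS h'))).2 (Or.inr h')
    · intro y hy hyQ hyf
      by_cases hinf : {k | y k ∈ X i}.Infinite
      · -- the visits to the level form an orbit of `h`
        have hnext : ∀ k, y k ∈ X i → ∀ m', (∀ j < m', y (k + 1 + j) ∉ X i) → y (k + 1 + m') ∈ X i →
            y (k + 1 + m') = h (y k) := by
          intro k hk m' hm' hlast
          by_cases hP : y k ∈ P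
          · have key : ∀ m', (∀ j < m', y (k + 1 + j) ∉ X i) →
                Foot E B A X (β (y k)) (y (k + 1 + m')) ∨ y (k + 1 + m') = h (y k) := by
              intro m'
              induction m' with
              | zero =>
                intro _
                left
                rw [add_zero, hyf, hfv ⟨y k, hP⟩]
                exact huF _ hP _ le_rfl (hnpos _ hP)
              | succ m' ih =>
                intro hm'
                have ho := hm' m' (by omega)
                rcases ih fun j hj => hm' j (by omega) with hF | e
                · have := hfoot _ (hyQ _) ho ⟨y k, hP⟩ hF
                  rw [← hyf] at this
                  exact this
                · exact absurd (e ▸ hDX _ (hhD _ hP)) ho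
            exact (key m' hm').resolve_left fun hF => hFX _ hP _ hF hlast
          · have hr := hfreal _ (hyQ k) hk hP
            rcases Nat.eq_zero_or_pos m' with rfl | hpos
            · rw [add_zero, hyf, hr]
            · refine absurd ?_ (hm' 0 hpos)
              rw [add_zero, hyf, hr]
              exact hDX _ (hw.mem _ (hQin _ (hyQ k) hk))
        let p : ℕ → Prop := fun k => y k ∈ X i
        have hpm : ∀ k, y (Nat.nth p k) ∈ X i := fun k => Nat.nth_mem_of_infinite hinf k
        have hsm : StrictMono (Nat.nth p) := Nat.nth_strictMono hinf
        refine hw.noray (fun k => y (Nat.nth p k)) (fun a b e => hsm.injective (hy e))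
          (fun k => hQin _ (hyQ _) (hpm k)) fun k => ?_
        have hlt := hsm (Nat.lt_succ_self k)
        obtain ⟨d, hd⟩ : ∃ d, Nat.nth p (k + 1) = Nat.nth p k + 1 + d := ⟨_, (Nat.add_sub_of_le hlt).symm⟩
        have h1 := hpm (k + 1)
        rw [hd] at h1
        beta_reduce
        rw [hd]
        refine hnext _ (hpm k) d (fun j hj hX => ?_) h1
        have h2 : Nat.nth p (Nat.count p (Nat.nth p k + 1 + j)) = Nat.nth p k + 1 + j := Nat.nth_count hX
        have h3 : k < Nat.count p (Nat.nth p k + 1 + j) := hsm.lt_iff_lt.1 (by omega)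
        have h4 : Nat.count p (Nat.nth p k + 1 + j) < k + 1 := hsm.lt_iff_lt.1 (by omega)
        omega
      · rw [Set.not_infinite] at hinf
        obtain ⟨M, hM⟩ := hinf.bddAbove
        obtain ⟨z, hz, hzQ, hzf, hzX⟩ : ∃ z : ℕ → V, Function.Injective z ∧ (∀ k, z k ∈ Q) ∧
            (∀ k, z (k + 1) = f (z k)) ∧ ∀ k, z k ∉ X i := by
          refine ⟨fun k => y (M + 1 + k), fun a b e => by have := hy e; omega, fun k => hyQ _,
            fun k => hyf _, fun k hk => ?_⟩
          have : M + 1 + k ≤ M := hM hk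
          omega
        obtain ⟨N, hN⟩ : ∃ N, ∀ k, N ≤ k → f (z k) = g (z k) := by
          by_cases hall : ∃ N, ∃ v : P, ∃ l < n v.1, z N = x v.1 l
          · obtain ⟨N, v, l, hl, e⟩ := hall
            have hF : ∀ k, Foot E B A X (β v.1) (z (N + k)) := by
              intro k
              induction k with
              | zero => rw [add_zero, e]; exact hxF _ v.2 l hl
              | succ k ih =>
                rw [← add_assoc, hzf]
                refine (hfoot _ (hzQ _) (hzX _) v ih).resolve_right fun e => hzX (N + k + 1) ?_
                rw [hzf, e]; exact hDX _ (hhD _ v.2)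
            have hfin : {k | ∃ l < n v.1, z k = x v.1 l}.Finite := by
              refine Set.Finite.of_finite_image (f := z) (((finite_Iio (n v.1)).image (x v.1)).subset ?_) hz.injOn
              rintro _ ⟨k, ⟨l, hl, e⟩, rfl⟩
              exact ⟨l, hl, e.symm⟩
            obtain ⟨M', hM'⟩ := hfin.bddAbove
            refine ⟨max N (M' + 1), fun k hk => (hfout _ (hzQ k) (hzX k)).resolve_right ?_⟩
            rintro ⟨v', l', hl', e', -⟩
            obtain ⟨j, rfl⟩ : ∃ j, k = N + j := ⟨k - N, by omega⟩
            have : v' = v := Subtype.ext (hβinj _ v'.2 _ v.2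
              (Foot.unique (hβC _ v'.2) (hβC _ v.2) (e' ▸ hxF _ v'.2 l' hl') (hF j)))
            subst this
            have : N + j ≤ M' := hM' ⟨l', hl', e'⟩
            omega
          · push Not at hall
            exact ⟨0, fun k _ => (hfout _ (hzQ k) (hzX k)).resolve_right fun ⟨v, l, hl, e, _⟩ =>
              hall k v l hl e⟩
        refine (hL.wave i).noray (fun k => z (N + k)) (fun a b e => by have := hz e; omega)
          (fun k => (hQout _ (hzQ _) (hzX _)).1) fun k => ?_
        rw [← hN (N + k) (by omega), ← hzf]; rfl
  obtain ⟨y, hyQ, e⟩ := hU D f hwave s ⟨hDlO hs, fun h => (hDV s hs).2 (Or.inl (Or.inl h))⟩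
  by_cases hX : y ∈ X i
  · by_cases hP : y ∈ P
    · rw [hfv ⟨y, hP⟩] at e
      exact hFX _ hP _ (huF _ hP _ le_rfl (hnpos _ hP)) (e ▸ hDX s hs)
    · rw [hfreal y hyQ hX hP] at e
      exact hlost y (hQin y hyQ hX) e
  · rcases hfout y hyQ hX with e' | ⟨v, l, hl, -, e'⟩
    · exact hgO y hyQ hX (e' ▸ e ▸ hDX s hs)
    · rw [e'] at e
      rcases Nat.eq_zero_or_pos l with rfl | hpos
      · rw [hu0 _ v.2] at e
        exact hlost _ (hQin _ v.2.1 v.2.2.1) e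
      · exact hFX _ v.2 _ (huF _ v.2 l hl.le hpos) (e ▸ hDX s hs)

end Step

/-! ### Partial linkages inside a level -/
section State
open Set Cardinal
universe u
variable {κ : Cardinal.{u}} {V : Type u}
variable {E : V → V → Prop} {B A : Set V}

/-- `Rk B X D F Q n x`: following real edges `F` and virtual edges `Q` from `x` one arrives in
the target, or at a loose end outside `D`; `n` counts the virtual edges, and one for a loose end. -/
inductive Rk (B X D : Set V) (F Q : V → V → Prop) : ℕ → V → Prop
  | tgt (b : V) : b ∈ B → Rk B X D F Q 0 b
  | perm (b : V) : b ∈ X → b ∉ D → (∀ v, ¬ F b v) → (∀ v, ¬ Q b v) → Rk B X D F Q 1 b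
  | real (n : ℕ) (a v : V) : F a v → Rk B X D F Q n v → Rk B X D F Q n a
  | virt (n : ℕ) (a v : V) : Q a v → Rk B X D F Q n v → Rk B X D F Q (n + 1) a

/-- A partial linkage of the vertices of `A` inside the level `X`, with real edges `F` and
virtual edges `Q`, the latter standing for wide pairs. -/
structure PL (κ : Cardinal.{u}) (E : V → V → Prop) (B A X D : Set V) (G F Q : V → V → Prop) : Prop where
  edge : ∀ u v, F u v → E u v
  left : ∀ u v, F u v → u ∈ X
  right : ∀ u v, F u v → v ∈ X
  notA : ∀ u v, F u v → v ∉ A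
  vleft : ∀ u v, Q u v → u ∈ X
  vright : ∀ u v, Q u v → v ∈ X
  vD : ∀ u v, Q u v → u ∈ D
  vne : ∀ u v, Q u v → u ≠ v
  vE : ∀ u v, Q u v → ¬ E u v
  vW : ∀ u v, Q u v → Wide κ E G u v
  vA : ∀ u v, Q u v → v ∉ A
  injl : ∀ u u' v, F u v ∨ Q u v → F u' v ∨ Q u' v → u = u'
  injr : ∀ u v v', F u v ∨ Q u v → F u v' ∨ Q u v' → v = v'
  rkA : ∀ a ∈ A, a ∈ X → ∃ n, Rk B X D F Q n a
  rkQ : ∀ u v, Q u v → ∃ n, Rk B X D F Q n v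

/-- The vertices which still have to be treated: the starts of virtual edges and the loose ends. -/
def Opn (B X D : Set V) (F Q : V → V → Prop) (t : V) : Prop :=
  t ∈ X ∧ ((∃ z, Q t z) ∨ (t ∉ B ∧ t ∉ D ∧ (∀ v, ¬ F t v) ∧ ∀ v, ¬ Q t v))

/-- The second partial linkage extends the first one. -/
structure Ext (B X D : Set V) (F Q : V → V → Prop) (X' D' : Set V) (F' Q' : V → V → Prop) : Prop where
  sub : ∀ u v, F u v → F' u v
  out : ∀ t ∈ X, ((∀ v, F t v ↔ F' t v) ∧ ∀ v, Q t v ↔ Q' t v) ∨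
    ∀ n, Rk B X D F Q n t → ∃ m < n, Rk B X' D' F' Q' m t
  rk : ∀ n x, Rk B X D F Q n x → ∃ m ≤ n, Rk B X' D' F' Q' m x
  old : ∀ t ∈ X, ∀ v, Q' t v → Q t v

theorem Ext.trans {X D X' D' X'' D'' : Set V} {F Q F' Q' F'' Q'' : V → V → Prop} (hX : X ⊆ X')
    (h : Ext B X D F Q X' D' F' Q') (h' : Ext B X' D' F' Q' X'' D'' F'' Q'') :
    Ext B X D F Q X'' D'' F'' Q'' := by
  refine ⟨fun u v e => h'.sub u v (h.sub u v e), fun t ht => ?_, fun n x hn => ?_,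
    fun t ht v hv => h.old t ht v (h'.old t (hX ht) v hv)⟩
  · rcases h.out t ht with h1 | h1
    · rcases h'.out t (hX ht) with h2 | h2
      · exact Or.inl ⟨fun v => (h1.1 v).trans (h2.1 v), fun v => (h1.2 v).trans (h2.2 v)⟩
      · refine Or.inr fun n hn => ?_
        obtain ⟨m, hm, hr⟩ := h.rk n t hn
        obtain ⟨m', hm', hr'⟩ := h2 m hr
        exact ⟨m', by omega, hr'⟩
    · refine Or.inr fun n hn => ?_
      obtain ⟨m, hm, hr⟩ := h1 n hn
      obtain ⟨m', hm', hr'⟩ := h'.rk m t hr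
      exact ⟨m', by omega, hr'⟩
  · obtain ⟨m, hm, hr⟩ := h.rk n x hn
    obtain ⟨m', hm', hr'⟩ := h'.rk m x hr
    exact ⟨m', by omega, hr'⟩

theorem Rk.of_reach {X D : Set V} {F Q N : V → V → Prop} (hN : ∀ u v, N u v → F u v) {n : ℕ} {x y : V}
    (h : Relation.ReflTransGen N x y) (hy : Rk B X D F Q n y) : Rk B X D F Q n x := by
  induction h using Relation.ReflTransGen.head_induction_on with
  | refl => exact hy
  | head h _ ih => exact Rk.real _ _ _ (hN _ _ h) ih

/-- Combining a partial linkage inside `X` with new real edges `N` and with a linking `l` of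
the web between the levels, where the vertex `t` is treated. -/
theorem PL.glue {X D T S X' D' : Set V} {G G' F Q N l : V → V → Prop} {t : V}
    (hP : PL κ E B A X D G F Q) (hX : X ⊆ X') (hD : D ⊆ D') (hDB : ∀ x ∈ D, x ∉ B)
    (hXD : ∀ x ∈ X, x ∉ D → x ∉ D')
    (hcov : ∀ x, x ∈ A ∨ x ∈ X → x ∈ T ∨ x ∈ D)
    (hW : ∀ a v, a ∈ D → Wide κ E G a v → Wide κ E G' a v)
    (hNE : ∀ u v, N u v → E u v ∧ u ∈ X' ∧ v ∈ X' ∧ v ∉ A)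
    (hNl : ∀ u u' v, N u v → N u' v → u = u') (hNr : ∀ u v v', N u v → N u v' → v = v')
    (hNt : ∀ u v, N u v → u ∈ D ∪ X ∪ S)
    (hNX : ∀ u v, N u v → u ∈ X → u = t ∧ Opn B X D F Q t)
    (hNh : ∀ u v, N u v → v ∈ T ∨ v ∈ D ∪ X ∪ S)
    (hNX' : ∀ u v, N u v → v ∈ X → Q t v)
    (hNA : ∀ a ∈ A, a ∈ X' → a ∉ X → ∃ y, Relation.ReflTransGen N a y ∧
      (y ∈ B ∨ (y ∈ X' \ (D ∪ X ∪ S) ∧ y ∈ T) ∨ Q t y))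
    (hNo : Opn B X D F Q t → ∃ y, Relation.ReflTransGen N t y ∧ (y ∈ B ∨ Q t y))
    (hl : ∀ u v, l u v → (E u v ∨ (u ≠ v ∧ Wide κ E G' u v)) ∧ u ∈ X' \ (D ∪ X ∪ S) ∧
      v ∈ X' \ (D ∪ X ∪ S) ∧ v ∉ T ∧ u ∈ D')
    (hll : ∀ u u' v, l u v → l u' v → u = u') (hlr : ∀ u v v', l u v → l u v' → v = v')
    (hle : ∀ u v, l u v → ∃ b ∈ X' \ (D ∪ X ∪ S), b ∉ D' ∧ Relation.ReflTransGen l v b)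
    (hls : ∀ s ∈ X' \ (D ∪ X ∪ S), s ∈ T → ∃ b ∈ X' \ (D ∪ X ∪ S), b ∉ D' ∧ Relation.ReflTransGen l s b) :
    ∃ F' Q', PL κ E B A X' D' G' F' Q' ∧ Ext B X D F Q X' D' F' Q' ∧
      (Opn B X D F Q t → ∀ n, Rk B X D F Q n t → ∃ m < n, Rk B X' D' F' Q' m t) := by
  let F' : V → V → Prop := fun u v => F u v ∨ N u v ∨ (l u v ∧ E u v)
  let Q' : V → V → Prop := fun u v => (Q u v ∧ u ≠ t) ∨ (l u v ∧ ¬ E u v)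
  -- the three kinds of edges do not meet
  have lX : ∀ u v, l u v → u ∉ X ∧ v ∉ X := fun u v h =>
    ⟨fun hh => (hl u v h).2.1.2 (Or.inl (Or.inr hh)), fun hh => (hl u v h).2.2.1.2 (Or.inl (Or.inr hh))⟩
  have FQX : ∀ u v, F u v ∨ Q u v → u ∈ X ∧ v ∈ X := fun u v h =>
    h.elim (fun h => ⟨hP.left u v h, hP.right u v h⟩) (fun h => ⟨hP.vleft u v h, hP.vright u v h⟩)
  -- classification of new edges
  have cls : ∀ u v, F' u v ∨ Q' u v → (F u v ∨ (Q u v ∧ u ≠ t)) ∨ N u v ∨ l u v := by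
    rintro u v ((h | h | h) | (h | h))
    · exact Or.inl (Or.inl h)
    · exact Or.inr (Or.inl h)
    · exact Or.inr (Or.inr h.1)
    · exact Or.inl (Or.inr h)
    · exact Or.inr (Or.inr h.1)
  have cFQ : ∀ u v, F u v ∨ (Q u v ∧ u ≠ t) → F u v ∨ Q u v := fun u v h => h.imp_right fun h => h.1
  -- an open vertex has no real edge leaving it
  have onF : Opn B X D F Q t → ∀ v, ¬ F t v := by
    rintro ⟨-, ⟨z, hz⟩ | h⟩ v hv
    · have := hP.injr t v z (Or.inl hv) (Or.inr hz)
      exact hP.vE t z hz (this ▸ hP.edge t v hv)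
    · exact h.2.2.1 v hv
  have xFN : ∀ u v v', (F u v ∨ (Q u v ∧ u ≠ t)) → N u v' → False := by
    intro u v v' h h'
    obtain ⟨rfl, ho⟩ := hNX u v' h' (FQX u v (cFQ u v h)).1
    rcases h with h | h
    · exact onF ho v h
    · exact h.2 rfl
  have xFN' : ∀ u u' v, (F u v ∨ (Q u v ∧ u ≠ t)) → N u' v → False := by
    intro u u' v h h'
    have hq := hNX' u' v h' (FQX u v (cFQ u v h)).2
    have e := hP.injl u t v (cFQ u v h) (Or.inr hq)
    rcases h with h | h
    · exact hP.vE t v hq (e ▸ hP.edge u v h)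
    · exact h.2 e
  have xFl : ∀ u v v', (F u v ∨ (Q u v ∧ u ≠ t)) → l u v' → False :=
    fun u v v' h h' => (lX u v' h').1 (FQX u v (cFQ u v h)).1
  have xFl' : ∀ u u' v, (F u v ∨ (Q u v ∧ u ≠ t)) → l u' v → False :=
    fun u u' v h h' => (lX u' v h').2 (FQX u v (cFQ u v h)).2
  have xNl : ∀ u v v', N u v → l u v' → False :=
    fun u v v' h h' => (hl u v' h').2.1.2 (hNt u v h)
  have xNl' : ∀ u u' v, N u v → l u' v → False :=
    fun u u' v h h' => (hNh u v h).elim (hl u' v h').2.2.2.1 (hl u' v h').2.2.1.2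
  have lF' : ∀ u v, l u v → F' u v ∨ Q' u v := by
    intro u v h
    by_cases he : E u v
    · exact Or.inl (Or.inr (Or.inr ⟨h, he⟩))
    · exact Or.inr (Or.inr ⟨h, he⟩)
  -- loose ends of `l`
  have rkend : ∀ b ∈ X' \ (D ∪ X ∪ S), b ∉ D' → Rk B X' D' F' Q' 1 b := by
    intro b hb hbD
    have key : ∀ v, ¬ (F' b v ∨ Q' b v) := by
      intro v h
      rcases cls b v h with h | h | h
      · exact hb.2 (Or.inl (Or.inr (FQX b v (cFQ b v h)).1))
      · exact hb.2 (hNt b v h)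
      · exact hbD (hl b v h).2.2.2.2
    exact Rk.perm b hb.1 hbD (fun v h => key v (Or.inl h)) fun v h => key v (Or.inr h)
  have rkl : ∀ b v, Relation.ReflTransGen l v b → (∃ n, Rk B X' D' F' Q' n b) → ∃ n, Rk B X' D' F' Q' n v := by
    intro b v h hb
    induction h using Relation.ReflTransGen.head_induction_on with
    | refl => exact hb
    | head h _ ih =>
      obtain ⟨n, hn⟩ := ih
      rcases lF' _ _ h with h | h
      · exact ⟨n, Rk.real _ _ _ h hn⟩
      · exact ⟨n + 1, Rk.virt _ _ _ h hn⟩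
  have hNF : ∀ u v, N u v → F' u v := fun u v h => Or.inr (Or.inl h)
  -- monotonicity of ranks
  have mono : ∀ n x, Rk B X D F Q n x → ∃ m ≤ n, Rk B X' D' F' Q' m x := by
    intro n x h
    induction h with
    | tgt b hb => exact ⟨0, le_rfl, Rk.tgt b hb⟩
    | perm b hb hbD hF hQ =>
      by_cases hbB : b ∈ B
      · exact ⟨0, by omega, Rk.tgt b hbB⟩
      by_cases hbt : b = t
      · subst hbt
        obtain ⟨y, hy, hy' | hy'⟩ := hNo ⟨hb, Or.inr ⟨hbB, hbD, hF, hQ⟩⟩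
        · exact ⟨0, by omega, Rk.of_reach hNF hy (Rk.tgt y hy')⟩
        · exact absurd hy' (hQ y)
      · refine ⟨1, le_rfl, Rk.perm b (hX hb) (hXD b hb hbD) (fun v h => ?_) fun v h => ?_⟩
        · rcases cls b v (Or.inl h) with (h | h) | h | h
          · exact hF v h
          · exact hQ v h.1
          · exact hbt (hNX b v h hb).1
          · exact (lX b v h).1 hb
        · rcases cls b v (Or.inr h) with (h | h) | h | h
          · exact hF v h
          · exact hQ v h.1
          · exact hbt (hNX b v h hb).1
          · exact (lX b v h).1 hb
    | real n a v h _ ih =>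
      obtain ⟨m, hm, hr⟩ := ih
      exact ⟨m, hm, Rk.real _ _ _ (Or.inl h) hr⟩
    | virt n a v h _ ih =>
      obtain ⟨m, hm, hr⟩ := ih
      by_cases hat : a = t
      · subst hat
        obtain ⟨y, hy, hy' | hy'⟩ := hNo ⟨hP.vleft a v h, Or.inl ⟨v, h⟩⟩
        · exact ⟨0, by omega, Rk.of_reach hNF hy (Rk.tgt y hy')⟩
        · obtain rfl := hP.injr a v y (Or.inr h) (Or.inr hy')
          exact ⟨m, by omega, Rk.of_reach hNF hy hr⟩
      · exact ⟨m + 1, by omega, Rk.virt _ _ _ (Or.inl ⟨h, hat⟩) hr⟩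
  have proc : Opn B X D F Q t → ∀ n, Rk B X D F Q n t → ∃ m < n, Rk B X' D' F' Q' m t := by
    intro ho n hn
    obtain ⟨y, hy, hy'⟩ := hNo ho
    have htB : t ∉ B := by
      rcases ho.2 with ⟨z, hz⟩ | h
      · exact hDB t (hP.vD t z hz)
      · exact h.1
    cases hn with
    | tgt _ hb => exact absurd hb htB
    | perm _ hb hbD hF hQ =>
      rcases hy' with hy' | hy'
      · exact ⟨0, by omega, Rk.of_reach hNF hy (Rk.tgt y hy')⟩
      · exact absurd hy' (hQ y)
    | real n _ v h h2 => exact absurd h (onF ho v)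
    | virt n _ v h h2 =>
      rcases hy' with hy' | hy'
      · exact ⟨0, by omega, Rk.of_reach hNF hy (Rk.tgt y hy')⟩
      · obtain rfl := hP.injr t v y (Or.inr h) (Or.inr hy')
        obtain ⟨m, hm, hr⟩ := mono n v h2
        exact ⟨m, by omega, Rk.of_reach hNF hy hr⟩
  refine ⟨F', Q', ⟨?_, ?_, ?_, ?_, ?_, ?_, ?_, ?_, ?_, ?_, ?_, ?_, ?_, ?_, ?_⟩,
    ⟨fun u v h => Or.inl h, ?_, mono, ?_⟩, proc⟩
  · rintro u v (h | h | h)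
    exacts [hP.edge u v h, (hNE u v h).1, h.2]
  · rintro u v (h | h | h)
    exacts [hX (hP.left u v h), (hNE u v h).2.1, (hl u v h.1).2.1.1]
  · rintro u v (h | h | h)
    exacts [hX (hP.right u v h), (hNE u v h).2.2.1, (hl u v h.1).2.2.1.1]
  · rintro u v (h | h | h)
    · exact hP.notA u v h
    · exact (hNE u v h).2.2.2
    · intro hA
      have h1 := hl u v h.1
      exact (hcov v (Or.inl hA)).elim h1.2.2.2.1 fun hd => h1.2.2.1.2 (Or.inl (Or.inl hd))
  · rintro u v (h | h)
    exacts [hX (hP.vleft u v h.1), (hl u v h.1).2.1.1]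
  · rintro u v (h | h)
    exacts [hX (hP.vright u v h.1), (hl u v h.1).2.2.1.1]
  · rintro u v (h | h)
    exacts [hD (hP.vD u v h.1), (hl u v h.1).2.2.2.2]
  · rintro u v (h | h)
    exacts [hP.vne u v h.1, ((hl u v h.1).1.resolve_left h.2).1]
  · rintro u v (h | h)
    exacts [hP.vE u v h.1, h.2]
  · rintro u v (h | h)
    exacts [hW u v (hP.vD u v h.1) (hP.vW u v h.1), ((hl u v h.1).1.resolve_left h.2).2]
  · rintro u v (h | h)
    · exact hP.vA u v h.1
    · intro hA
      have h1 := hl u v h.1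
      exact (hcov v (Or.inl hA)).elim h1.2.2.2.1 fun hd => h1.2.2.1.2 (Or.inl (Or.inl hd))
  · intro u u' v h h'
    rcases cls u v h with h | h | h <;> rcases cls u' v h' with h' | h' | h'
    · exact hP.injl u u' v (cFQ u v h) (cFQ u' v h')
    · exact (xFN' _ _ _ h h').elim
    · exact (xFl' _ _ _ h h').elim
    · exact (xFN' _ _ _ h' h).elim
    · exact hNl _ _ _ h h'
    · exact (xNl' _ _ _ h h').elim
    · exact (xFl' _ _ _ h' h).elim
    · exact (xNl' _ _ _ h' h).elim
    · exact hll _ _ _ h h'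
  · intro u v v' h h'
    rcases cls u v h with h | h | h <;> rcases cls u v' h' with h' | h' | h'
    · exact hP.injr u v v' (cFQ u v h) (cFQ u v' h')
    · exact (xFN _ _ _ h h').elim
    · exact (xFl _ _ _ h h').elim
    · exact (xFN _ _ _ h' h).elim
    · exact hNr _ _ _ h h'
    · exact (xNl _ _ _ h h').elim
    · exact (xFl _ _ _ h' h).elim
    · exact (xNl _ _ _ h' h).elim
    · exact hlr _ _ _ h h'
  · intro a ha haX
    by_cases hx : a ∈ X
    · obtain ⟨n, hn⟩ := hP.rkA a ha hx
      obtain ⟨m, -, hm⟩ := mono n a hn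
      exact ⟨m, hm⟩
    · obtain ⟨y, hy, hy' | hy' | hy'⟩ := hNA a ha haX hx
      · exact ⟨0, Rk.of_reach hNF hy (Rk.tgt y hy')⟩
      · obtain ⟨b, hb, hbD, hr⟩ := hls y hy'.1 hy'.2
        obtain ⟨n, hn⟩ := rkl b y hr ⟨1, rkend b hb hbD⟩
        exact ⟨n, Rk.of_reach hNF hy hn⟩
      · obtain ⟨n, hn⟩ := hP.rkQ t y hy'
        obtain ⟨m, -, hm⟩ := mono n y hn
        exact ⟨m, Rk.of_reach hNF hy hm⟩
  · rintro u v (h | h)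
    · obtain ⟨n, hn⟩ := hP.rkQ u v h.1
      obtain ⟨m, -, hm⟩ := mono n v hn
      exact ⟨m, hm⟩
    · obtain ⟨b, hb, hbD, hr⟩ := hle u v h.1
      exact rkl b v hr ⟨1, rkend b hb hbD⟩
  · intro x hx
    by_cases ho : x = t ∧ Opn B X D F Q t
    · obtain ⟨rfl, ho⟩ := ho
      exact Or.inr (proc ho)
    · left
      have hxN : ∀ v, ¬ N x v := fun v h => ho (hNX x v h hx)
      have hxl : ∀ v, ¬ l x v := fun v h => (lX x v h).1 hx
      refine ⟨fun v => ⟨Or.inl, ?_⟩, fun v => ⟨fun h => Or.inl ⟨h, ?_⟩, ?_⟩⟩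
      · rintro (h | h | h)
        exacts [h, absurd h (hxN v), absurd h.1 (hxl v)]
      · rintro rfl
        exact ho ⟨rfl, hx, Or.inl ⟨v, h⟩⟩
      · rintro (h | h)
        exacts [h.1, absurd h.1 (hxl v)]
  · rintro x hx v (h | h)
    exacts [h.1, absurd hx (lX x v h.1).1]

end State

/-! ### Treating one vertex -/
section Tracks
open Set Cardinal
universe u
variable {κ : Cardinal.{u}} {V : Type u}
variable {E : V → V → Prop} {B A : Set V}

/-- A linking, restricted to the edges before the first vertices in the target. -/
theorem Linking.restrict {Z : Set V} {F : V → V → Prop} (h : Linking E B A Z F) :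
    ∃ l : V → V → Prop, (∀ u v, l u v → F u v ∧ u ∉ B) ∧
      (∀ u v, l u v → ∃ b ∈ B, Relation.ReflTransGen l v b) ∧
      ∀ a ∈ A, a ∉ Z → ∃ b ∈ B, Relation.ReflTransGen l a b := by
  let l1 : V → V → Prop := fun u v => F u v ∧ u ∉ B
  have h1 : ∀ x b, b ∈ B → Relation.ReflTransGen F x b → ∃ b ∈ B, Relation.ReflTransGen l1 x b := by
    intro x b hb h
    induction h using Relation.ReflTransGen.head_induction_on with
    | refl => exact ⟨b, hb, .refl⟩
    | @head x y hxy _ ih =>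
      by_cases hx : x ∈ B
      · exact ⟨x, hx, .refl⟩
      · obtain ⟨b', hb', hr⟩ := ih
        exact ⟨b', hb', .head ⟨hxy, hx⟩ hr⟩
  let l : V → V → Prop := fun u v => l1 u v ∧ ∃ b ∈ B, Relation.ReflTransGen l1 v b
  have h2 : ∀ x b, b ∈ B → Relation.ReflTransGen l1 x b → Relation.ReflTransGen l x b := by
    intro x b hb h
    induction h using Relation.ReflTransGen.head_induction_on with
    | refl => exact .refl
    | head hxy hyb ih => exact .head ⟨hxy, b, hb, hyb⟩ ih
  refine ⟨l, fun u v h => h.1, ?_, fun a ha haZ => ?_⟩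
  · rintro u v ⟨-, b, hb, hr⟩
    exact ⟨b, hb, h2 v b hb hr⟩
  · obtain ⟨b, hb, hr⟩ := h.reach a ha haZ
    obtain ⟨b', hb', hr'⟩ := h1 a b hb hr
    exact ⟨b', hb', h2 a b' hb' hr'⟩

/-- Without dead vertices, the forward tracks of a predecessor function which differs from the wave
function at finitely many places only, started outside its domain, leave `Y`. -/
theorem exists_track {X D Δ₀ Δ Y : Set V} {g gh : V → V}
    (hinj₀ : ∀ x ∈ Δ₀, ∀ y ∈ Δ₀, g x = g y → x = y) (hX₀ : ∀ x ∈ Δ₀, x ∉ X)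
    (hdead : ∀ w, ¬ Dead (fun x w => x ∈ Δ₀ ∧ g x = w) X D w)
    (hYD : Y ⊆ D) (hs : ∀ y ∈ Y, ∃ x ∈ Δ, gh x = y)
    (hfin : {x | x ∈ Δ ∧ ¬ (x ∈ Δ₀ ∧ gh x = g x)}.Finite) {y₀ : V} (h0 : y₀ ∈ Y) (h0' : y₀ ∉ Δ) :
    ∃ e ∈ Δ, e ∉ Y ∧ Relation.ReflTransGen (fun a b => b ∈ Δ ∧ gh b = a) y₀ e := by
  by_contra hno
  push Not at hno
  have : Nonempty V := ⟨y₀⟩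
  choose! nx hnx1 hnx2 using hs
  let y : ℕ → V := fun n => nx^[n] y₀
  have ysucc : ∀ n, y (n + 1) = nx (y n) := fun n => Function.iterate_succ_apply' nx n y₀
  have hy : ∀ n, y n ∈ Y ∧ Relation.ReflTransGen (fun a b => b ∈ Δ ∧ gh b = a) y₀ (y n) := by
    intro n
    induction n with
    | zero => exact ⟨h0, .refl⟩
    | succ n ih =>
      have hr : Relation.ReflTransGen (fun a b => b ∈ Δ ∧ gh b = a) y₀ (y (n + 1)) := by
        rw [ysucc]
        exact .tail ih.2 ⟨hnx1 _ ih.1, hnx2 _ ih.1⟩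
      refine ⟨?_, hr⟩
      by_contra hc
      refine hno (y (n + 1)) ?_ hc hr
      rw [ysucc]; exact hnx1 _ ih.1
  have hyΔ : ∀ n, y (n + 1) ∈ Δ := fun n => by rw [ysucc]; exact hnx1 _ (hy n).1
  have hyg : ∀ n, gh (y (n + 1)) = y n := fun n => by rw [ysucc]; exact hnx2 _ (hy n).1
  have hne : ∀ k i, y i ≠ y (i + k + 1) := by
    intro k i
    induction i with
    | zero =>
      intro h
      have h1 : y 0 = y₀ := rfl
      rw [h1, Nat.zero_add] at h
      exact h0' (h ▸ hyΔ k)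
    | succ i ih =>
      intro h
      apply ih
      rw [← hyg i, h, show i + 1 + k + 1 = (i + k + 1) + 1 by omega, hyg]
  have yinj : Function.Injective y := by
    intro i j h
    rcases lt_trichotomy i j with hij | hij | hij
    · exact absurd h (by have := hne (j - i - 1) i; rwa [show i + (j - i - 1) + 1 = j by omega] at this)
    · exact hij
    · exact absurd h.symm (by have := hne (i - j - 1) j; rwa [show j + (i - j - 1) + 1 = i by omega] at this)
  obtain ⟨N, hN⟩ : ∃ N, ∀ n, N ≤ n → y (n + 1) ∈ Δ₀ ∧ g (y (n + 1)) = y n := by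
    have hf := hfin.preimage (yinj.injOn (s := y ⁻¹' _))
    obtain ⟨M, hM⟩ := hf.bddAbove
    refine ⟨M, fun n hn => ?_⟩
    by_contra hc
    have : n + 1 ∈ y ⁻¹' {x | x ∈ Δ ∧ ¬ (x ∈ Δ₀ ∧ gh x = g x)} := by
      refine ⟨hyΔ n, fun h => hc ⟨h.1, ?_⟩⟩
      rw [← h.2, hyg]
    have := hM this
    omega
  have hFo : ∀ z ∈ Fo (fun x w => x ∈ Δ₀ ∧ g x = w) (y (N + 1)), ∃ n, N + 1 ≤ n ∧ z = y n := by
    intro z hz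
    change Relation.ReflTransGen _ _ _ at hz
    induction hz with
    | refl => exact ⟨N + 1, le_rfl, rfl⟩
    | @tail b c _ hbc ih =>
      obtain ⟨n, hn, rfl⟩ := ih
      obtain ⟨hc1, hc2⟩ := hbc
      obtain ⟨h1, h2⟩ := hN n (by omega)
      exact ⟨n + 1, by omega, hinj₀ _ hc1 _ h1 (hc2.trans h2.symm)⟩
  refine hdead (y (N + 1)) ⟨hYD (hy _).1, hX₀ _ (hN N le_rfl).1, fun z hz => ?_, fun z hz hz' => ?_⟩
  · obtain ⟨n, -, rfl⟩ := hFo z hz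
    exact hYD (hy n).1
  · obtain ⟨n, hn, rfl⟩ := hFo z hz'
    obtain ⟨h1, h2⟩ := hN n (by omega)
    have := yinj (hinj₀ _ hz.1 _ h1 (hz.2.trans h2.symm))
    omega

/-- Without dead vertices nothing is lost. -/
theorem surj_of_noDead {X D Δ₀ : Set V} {g : V → V}
    (hdead : ∀ w, ¬ Dead (fun x w => x ∈ Δ₀ ∧ g x = w) X D w) {w : V} (hw : w ∈ D) (hwX : w ∉ X) :
    ∃ x ∈ Δ₀, g x = w := by
  by_contra hno
  push Not at hno
  have hFo : ∀ z ∈ Fo (fun x w => x ∈ Δ₀ ∧ g x = w) w, z = w := by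
    intro z hz
    change Relation.ReflTransGen _ _ _ at hz
    induction hz with
    | refl => rfl
    | tail _ hbc ih =>
      subst ih
      exact absurd hbc.2 (hno _ hbc.1)
  refine hdead w ⟨hw, hwX, fun z hz => hFo z hz ▸ hw, fun z hz hz' => ?_⟩
  have := hFo z hz'
  subst this
  exact hno _ hz.1 hz.2

/-- Shifting the predecessor function along an alternating path from `t` to `z`: afterwards `t` is
used and `z` has a predecessor. -/
theorem exists_flip {X D X' Δ₀ : Set V} {g : V → V} {t z : V} {n : ℕ} {x u : ℕ → V}
    (hinj₀ : ∀ x ∈ Δ₀, ∀ y ∈ Δ₀, g x = g y → x = y) (hX₀ : ∀ x ∈ Δ₀, x ∉ X)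
    (hg : ∀ x ∈ Δ₀, g x ∈ D ∧ g x ∉ X) (hadj : ∀ x ∈ Δ₀, x = g x ∨ E (g x) x)
    (hsurj : ∀ w ∈ D, w ∉ X → ∃ x ∈ Δ₀, g x = w)
    (hX' : ∀ x ∈ Δ₀, x ∈ X' ↔ g x ∈ X')
    (ht : t ∈ X) (htD : t ∈ D) (htX' : t ∈ X') (hz : z ∈ X) (hzX' : z ∈ X')
    (hb : IsBlk E (fun x w => x ∈ Δ₀ ∧ g x = w) {t} z n x u) (hxX' : ∀ i < n, x i ∈ X') :
    ∃ gh : V → V, (∀ y, y ∈ Δ₀ ∨ y = z → (gh y ∈ D ∧ gh y ∉ X) ∨ gh y = t) ∧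
      (∀ y, y ∈ Δ₀ ∨ y = z → ∀ y', y' ∈ Δ₀ ∨ y' = z → gh y = gh y' → y = y') ∧
      (∀ y, y ∈ Δ₀ ∨ y = z → y = gh y ∨ E (gh y) y) ∧
      (∀ w, (w ∈ D ∧ w ∉ X) ∨ w = t → ∃ y, (y ∈ Δ₀ ∨ y = z) ∧ gh y = w) ∧
      {y | (y ∈ Δ₀ ∨ y = z) ∧ ¬ (y ∈ Δ₀ ∧ gh y = g y)}.Finite ∧
      ∀ y, y ∈ Δ₀ ∨ y = z → (y ∈ X' ↔ gh y ∈ X') := by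
  classical
  let p : ℕ → V := fun i => if i < n then x i else z
  have p1 : ∀ i, i < n → p i = x i := fun i hi => if_pos hi
  have p2 : p n = z := if_neg (lt_irrefl n)
  have pmem : ∀ i ≤ n, p i ∈ Δ₀ ∨ p i = z := by
    intro i hi
    rcases hi.lt_or_eq with h | h
    · rw [p1 i h]; exact Or.inl (hb.gr i h).1
    · subst h; exact Or.inr p2
  have xz : ∀ i < n, x i ≠ z := fun i hi h => hX₀ _ (hb.gr i hi).1 (h ▸ hz)
  have xinj : ∀ i < n, ∀ j < n, x i = x j → i = j := by
    intro i hi j hj h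
    have h1 := (hb.gr i hi).2
    rw [h, (hb.gr j hj).2] at h1
    have := hb.inj (j + 1) (by omega) (i + 1) (by omega) h1
    omega
  have pinj : ∀ i ≤ n, ∀ j ≤ n, p i = p j → i = j := by
    intro i hi j hj h
    rcases hi.lt_or_eq with h1 | h1 <;> rcases hj.lt_or_eq with h2 | h2
    · rw [p1 i h1, p1 j h2] at h; exact xinj i h1 j h2 h
    · subst h2; rw [p1 i h1, p2] at h; exact absurd h (xz i h1)
    · subst h1; rw [p1 j h2, p2] at h; exact absurd h.symm (xz j h2)
    · omega
  have hut : u 0 = t := hb.start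
  have umem : ∀ i ≤ n, (u i ∈ D ∧ u i ∉ X) ∨ u i = t := by
    intro i hi
    rcases Nat.eq_zero_or_pos i with rfl | hpos
    · exact Or.inr hut
    · obtain ⟨k, rfl⟩ : ∃ k, i = k + 1 := ⟨i - 1, by omega⟩
      left
      rw [← (hb.gr k (by omega)).2]
      exact hg _ (hb.gr k (by omega)).1
  have uX' : ∀ i ≤ n, u i ∈ X' := by
    intro i hi
    rcases Nat.eq_zero_or_pos i with rfl | hpos
    · exact hut ▸ htX'
    · obtain ⟨k, rfl⟩ : ∃ k, i = k + 1 := ⟨i - 1, by omega⟩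
      rw [← (hb.gr k (by omega)).2]
      exact (hX' _ (hb.gr k (by omega)).1).1 (hxX' k (by omega))
  let gh : V → V := fun y => if h : ∃ i ≤ n, p i = y then u h.choose else g y
  have gh1 : ∀ i ≤ n, gh (p i) = u i := by
    intro i hi
    have h : ∃ j ≤ n, p j = p i := ⟨i, hi, rfl⟩
    have : gh (p i) = u h.choose := dif_pos h
    rw [this, pinj _ h.choose_spec.1 i hi h.choose_spec.2]
  have gh2 : ∀ y, (¬ ∃ i ≤ n, p i = y) → gh y = g y := fun y h => dif_neg h
  have gh2' : ∀ y, y ∈ Δ₀ ∨ y = z → (¬ ∃ i ≤ n, p i = y) → y ∈ Δ₀ := by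
    rintro y (h | rfl) hn
    · exact h
    · exact absurd ⟨n, le_rfl, p2⟩ hn
  have mix : ∀ i ≤ n, ∀ y ∈ Δ₀, (¬ ∃ i ≤ n, p i = y) → u i ≠ g y := by
    intro i hi y hy hn h
    rcases Nat.eq_zero_or_pos i with rfl | hpos
    · exact (hg y hy).2 (h ▸ hut ▸ ht)
    · obtain ⟨k, rfl⟩ : ∃ k, i = k + 1 := ⟨i - 1, by omega⟩
      obtain ⟨h1, h2⟩ := hb.gr k (by omega)
      have := hinj₀ _ h1 y hy (h2.trans h)
      exact hn ⟨k, by omega, (p1 k (by omega)).trans this⟩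
  refine ⟨gh, fun y hy => ?_, fun y hy y' hy' e => ?_, fun y hy => ?_, fun w hw => ?_, ?_, fun y hy => ?_⟩
  · by_cases h : ∃ i ≤ n, p i = y
    · obtain ⟨i, hi, rfl⟩ := h
      rw [gh1 i hi]; exact umem i hi
    · rw [gh2 y h]; exact Or.inl (hg y (gh2' y hy h))
  · by_cases h : ∃ i ≤ n, p i = y <;> by_cases h' : ∃ i ≤ n, p i = y'
    · obtain ⟨i, hi, rfl⟩ := h
      obtain ⟨j, hj, rfl⟩ := h'
      rw [gh1 i hi, gh1 j hj] at e
      rw [hb.inj i hi j hj e]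
    · obtain ⟨i, hi, rfl⟩ := h
      rw [gh1 i hi, gh2 y' h'] at e
      exact absurd e (mix i hi y' (gh2' y' hy' h') h')
    · obtain ⟨i, hi, rfl⟩ := h'
      rw [gh1 i hi, gh2 y h] at e
      exact absurd e.symm (mix i hi y (gh2' y hy h) h)
    · rw [gh2 y h, gh2 y' h'] at e
      exact hinj₀ y (gh2' y hy h) y' (gh2' y' hy' h') e
  · by_cases h : ∃ i ≤ n, p i = y
    · obtain ⟨i, hi, rfl⟩ := h
      rw [gh1 i hi]
      rcases hi.lt_or_eq with h1 | h1
      · rw [p1 i h1]; exact hb.adj i h1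
      · subst h1; rw [p2]; exact hb.last
    · rw [gh2 y h]; exact hadj y (gh2' y hy h)
  · rcases hw with hw | rfl
    · obtain ⟨y, hy, rfl⟩ := hsurj w hw.1 hw.2
      by_cases h : ∃ i ≤ n, p i = y
      · obtain ⟨i, hi, rfl⟩ := h
        rcases hi.lt_or_eq with h1 | h1
        · refine ⟨p (i + 1), pmem _ h1, ?_⟩
          rw [gh1 _ h1, p1 i h1]
          exact (hb.gr i h1).2.symm
        · subst h1
          rw [p2] at hy
          exact absurd hz (hX₀ z hy)
      · exact ⟨y, Or.inl hy, gh2 y h⟩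
    · exact ⟨p 0, pmem 0 (Nat.zero_le n), (gh1 0 (Nat.zero_le n)).trans hut⟩
  · refine ((finite_Iic n).image p).subset ?_
    rintro y ⟨hy, hne⟩
    by_contra hc
    have h : ¬ ∃ i ≤ n, p i = y := fun ⟨i, hi, e⟩ => hc ⟨i, hi, e⟩
    exact hne ⟨gh2' y hy h, gh2 y h⟩
  · by_cases h : ∃ i ≤ n, p i = y
    · obtain ⟨i, hi, rfl⟩ := h
      rw [gh1 i hi]
      refine iff_of_true ?_ (uX' i hi)
      rcases hi.lt_or_eq with h1 | h1
      · rw [p1 i h1]; exact hxX' i h1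
      · subst h1; rw [p2]; exact hzX'
    · rw [gh2 y h]; exact hX' y (gh2' y hy h)

end Tracks

section StepLemma
open Set Cardinal
universe u
variable {κ : Cardinal.{u}} {ι V : Type u} [LinearOrder ι]
variable {E : V → V → Prop} {B A : Set V} {Mf : Set V → Set V} {Sd : ι → Set V}
  {X : ι → Set V} {g : V → V}

/-- Passing from a level `X₀` (with maximal wave `D₀`) to the closed level `X i`, the partial linkage can
be extended so that the rank of any given open vertex `t` drops. -/
theorem CLadder.step [WellFoundedLT ι] (hκ : RegIdx κ ι) (hL : CLadder κ E B A Mf Sd X g)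
    (hIH : ∀ (E : V → V → Prop) (B A Z : Set V), #A < κ → Unh E B A Z → ∃ F, Linking E B A Z F)
    {i : ι} (hi : i ∈ Cst E B A X) {X₀ D₀ T₀ : Set V} {F Q : V → V → Prop}
    (hT : ∀ x, x ∈ T₀ ↔ (x ∈ Rg E D₀ ∨ x ∈ A ∨ x ∈ X₀) ∧ x ∉ D₀)
    (hw : WaveF E B (A ∪ X₀) ∅ D₀ g) (hgX : ∀ x ∈ Dm E (A ∪ X₀) ∅ D₀, g x ∉ X₀)
    (hdead : ∀ w, ¬ Dead (fun x w => x ∈ Dm E (A ∪ X₀) ∅ D₀ ∧ g x = w) X₀ D₀ w)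
    (hXX : X₀ ⊆ X i) (hDD : D₀ ⊆ LD E B A (X i)) (hXD : ∀ x ∈ X₀, x ∉ D₀ → x ∉ LD E B A (X i))
    (hcl : ∀ x ∈ Dm E (A ∪ X₀) ∅ D₀, x ∈ X i ↔ g x ∈ X i)
    (hU : Unh E B T₀ D₀)
    (hsafe : ∀ x ∈ X₀, ∀ p ∈ X i, p ∈ T₀ → ∃ b S F, IsQ E p b S F ∧ b ∈ B ∧ (∀ s ∈ S, s ∉ D₀) ∧
      (∀ s ∈ S, s ∈ T₀ → s = p) ∧ Unh E B T₀ (D₀ ∪ S) ∧ S ⊆ X i)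
    (hwide : ∀ a ∈ X₀, ∀ v ∈ X₀, Wide κ E (fun x w => x ∈ Dm E (A ∪ X₀) ∅ D₀ ∧ g x = w) a v →
      ∃ n x u, IsBlk E (fun x w => x ∈ Dm E (A ∪ X₀) ∅ D₀ ∧ g x = w) {a} v n x u ∧ ∀ l < n, x l ∈ X i)
    (hW : ∀ a v, a ∈ D₀ → Wide κ E (fun x w => x ∈ Dm E (A ∪ X₀) ∅ D₀ ∧ g x = w) a v →
      Wide κ E (Gr E B A g (X i)) a v)
    (hP : PL κ E B A X₀ D₀ (fun x w => x ∈ Dm E (A ∪ X₀) ∅ D₀ ∧ g x = w) F Q) (t : V) :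
    ∃ F' Q', PL κ E B A (X i) (LD E B A (X i)) (Gr E B A g (X i)) F' Q' ∧
      Ext B X₀ D₀ F Q (X i) (LD E B A (X i)) F' Q' ∧
      (Opn B X₀ D₀ F Q t → ∀ n, Rk B X₀ D₀ F Q n t → ∃ m < n, Rk B (X i) (LD E B A (X i)) F' Q' m t) := by
  classical
  set Δ₀ := Dm E (A ∪ X₀) ∅ D₀ with hΔ₀
  have hX₀ : ∀ x ∈ Δ₀, x ∉ X₀ := fun x hx h => hx.2.1 (Or.inr h)
  have hA₀ : ∀ x ∈ Δ₀, x ∉ A := fun x hx h => hx.2.1 (Or.inl h)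
  have hsurj : ∀ w ∈ D₀, w ∉ X₀ → ∃ x ∈ Δ₀, g x = w := fun w h1 h2 => surj_of_noDead hdead h1 h2
  have hcov : ∀ x, x ∈ A ∨ x ∈ Rg E D₀ ∨ x ∈ X₀ → x ∈ T₀ ∨ x ∈ D₀ := by
    intro x hx
    by_cases h : x ∈ D₀
    · exact Or.inr h
    · exact Or.inl ((hT x).2 ⟨by tauto, h⟩)
  have hTD : ∀ x ∈ T₀, x ∉ D₀ := fun x hx => ((hT x).1 hx).2
  -- the predecessor function, shifted if `t` is the start of a virtual edge
  obtain ⟨gh, k1, k2, k3, k4, k5, k6⟩ : ∃ gh : V → V,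
      (∀ y, y ∈ Δ₀ ∨ Q t y → (gh y ∈ D₀ ∧ gh y ∉ X₀) ∨ (gh y = t ∧ ∃ z, Q t z)) ∧
      (∀ y, y ∈ Δ₀ ∨ Q t y → ∀ y', y' ∈ Δ₀ ∨ Q t y' → gh y = gh y' → y = y') ∧
      (∀ y, y ∈ Δ₀ ∨ Q t y → y = gh y ∨ E (gh y) y) ∧
      (∀ w, (w ∈ D₀ ∧ w ∉ X₀) ∨ (w = t ∧ ∃ z, Q t z) → ∃ y, (y ∈ Δ₀ ∨ Q t y) ∧ gh y = w) ∧
      {y | (y ∈ Δ₀ ∨ Q t y) ∧ ¬ (y ∈ Δ₀ ∧ gh y = g y)}.Finite ∧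
      ∀ y, y ∈ Δ₀ ∨ Q t y → (y ∈ X i ↔ gh y ∈ X i) := by
    by_cases hq : ∃ z, Q t z
    · obtain ⟨z, hz⟩ := hq
      have hQz : ∀ y, Q t y ↔ y = z := fun y =>
        ⟨fun h => hP.injr t y z (Or.inr h) (Or.inr hz), fun h => h ▸ hz⟩
      have ht := hP.vleft t z hz
      have hzX := hP.vright t z hz
      obtain ⟨n, x, u, hb, hx⟩ := hwide t ht z hzX (hP.vW t z hz)
      obtain ⟨gh, k⟩ := exists_flip hw.inj hX₀ (fun x hx => ⟨hw.mem x hx, hgX x hx⟩) hw.adj hsurj hcl ht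
        (hP.vD t z hz) (hXX ht) hzX (hXX hzX) hb hx
      refine ⟨gh, ?_⟩
      simp only [hQz, exists_eq, and_true]
      exact k
    · push Not at hq
      refine ⟨g, ?_⟩
      simp only [hq, or_false, exists_false, and_false]
      refine ⟨fun y hy => ⟨hw.mem y hy, hgX y hy⟩, fun y hy y' hy' => hw.inj y hy y' hy', hw.adj, ?_, ?_, hcl⟩
      · rintro w ⟨h1, h2⟩
        exact hsurj w h1 h2
      · refine finite_empty.subset ?_
        rintro y ⟨h1, h2⟩
        exact h2 ⟨h1, trivial⟩
  let H : V → V → Prop := fun a b => (b ∈ Δ₀ ∨ Q t b) ∧ gh b = a ∧ a ≠ b ∧ a ∈ X i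
  let Y : Set V := {y | (y ∈ D₀ ∧ y ∉ X₀) ∨ (y = t ∧ ∃ z, Q t z)}
  have hYD : Y ⊆ D₀ := by
    rintro y (h | ⟨rfl, z, hz⟩)
    · exact h.1
    · exact hP.vD y z hz
  have hHhead : ∀ v, v ∈ Δ₀ ∨ Q t v → v ∈ T₀ ∨ v ∈ D₀ := by
    rintro v (h | h)
    · exact hcov v (Or.inr (Or.inl h.1))
    · exact hcov v (Or.inr (Or.inr (hP.vright t v h)))
  have track : ∀ y ∈ Y, ¬ (y ∈ Δ₀ ∨ Q t y) → y ∈ X i → ∃ e, (Q t e ∨ (e ∈ T₀ ∧ e ∉ X₀)) ∧ e ∈ X i ∧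
      Relation.ReflTransGen H y e := by
    intro y hy hyn hyX
    obtain ⟨e, he, heY, hr⟩ := exists_track (Δ := {y | y ∈ Δ₀ ∨ Q t y}) hw.inj hX₀ hdead hYD k4 k5 hy hyn
    have hr' : e ∈ X i ∧ Relation.ReflTransGen H y e := by
      clear he heY
      induction hr with
      | refl => exact ⟨hyX, .refl⟩
      | @tail b c _ hbc ih =>
        obtain ⟨hc, hcb⟩ := hbc
        have hbX : gh c ∈ X i := hcb.symm ▸ ih.1
        refine ⟨(k6 c hc).2 hbX, ?_⟩
        by_cases hbc : b = c
        · subst hbc; exact ih.2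
        · exact ih.2.tail ⟨hc, hcb, hbc, ih.1⟩
    refine ⟨e, ?_, hr'.1, hr'.2⟩
    rcases he with he | he
    · refine Or.inr ⟨(hHhead e (Or.inl he)).resolve_right fun h => heY (Or.inl ⟨h, hX₀ e he⟩), hX₀ e he⟩
    · exact Or.inl he
  -- the safe path
  obtain ⟨S, FQ, s1, s2, s3, s4, s5, s6, s7, s8, s9⟩ : ∃ (S : Set V) (FQ : V → V → Prop), S ⊆ X i ∧
      Unh E B T₀ (D₀ ∪ S) ∧ (∀ u v, FQ u v → E u v ∧ u ∈ S ∧ v ∈ S ∧ v ∉ T₀) ∧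
      (∀ u u' v, FQ u v → FQ u' v → u = u') ∧ (∀ u v v', FQ u v → FQ u v' → v = v') ∧
      (∀ s ∈ S, s ∉ D₀) ∧ (∀ s ∈ S, s ∈ T₀ → ∃ b ∈ B, Relation.ReflTransGen FQ s b) ∧
      (∀ s ∈ S, s ∈ X₀ → s = t ∧ Opn B X₀ D₀ F Q t) ∧
      (Opn B X₀ D₀ F Q t → (∃ b ∈ B, Relation.ReflTransGen FQ t b) ∨
        (∃ z, Q t z ∧ Relation.ReflTransGen H t z) ∨ ∃ e ∈ S, e ∈ T₀ ∧ Relation.ReflTransGen H t e) := by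
    have triv : (Opn B X₀ D₀ F Q t → ∃ z, Q t z ∧ Relation.ReflTransGen H t z) → ∃ (S : Set V)
      (FQ : V → V → Prop), S ⊆ X i ∧
      Unh E B T₀ (D₀ ∪ S) ∧ (∀ u v, FQ u v → E u v ∧ u ∈ S ∧ v ∈ S ∧ v ∉ T₀) ∧
      (∀ u u' v, FQ u v → FQ u' v → u = u') ∧ (∀ u v v', FQ u v → FQ u v' → v = v') ∧
      (∀ s ∈ S, s ∉ D₀) ∧ (∀ s ∈ S, s ∈ T₀ → ∃ b ∈ B, Relation.ReflTransGen FQ s b) ∧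
      (∀ s ∈ S, s ∈ X₀ → s = t ∧ Opn B X₀ D₀ F Q t) ∧
      (Opn B X₀ D₀ F Q t → (∃ b ∈ B, Relation.ReflTransGen FQ t b) ∨
        (∃ z, Q t z ∧ Relation.ReflTransGen H t z) ∨ ∃ e ∈ S, e ∈ T₀ ∧ Relation.ReflTransGen H t e) := by
      intro h
      refine ⟨∅, fun _ _ => False, empty_subset _, by rwa [union_empty], fun _ _ h => h.elim,
        fun _ _ _ h => h.elim, fun _ _ _ h => h.elim, fun _ h => h.elim, fun _ h => h.elim,
        fun _ h => h.elim, fun ho => Or.inr (Or.inl (h ho))⟩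
    by_cases ho : Opn B X₀ D₀ F Q t
    swap
    · exact triv fun h => absurd h ho
    have hst : ∀ p ∈ X i, p ∈ T₀ → (p ∈ X₀ → p = t) → Relation.ReflTransGen H t p → ∃ (S : Set V)
      (FQ : V → V → Prop), S ⊆ X i ∧
      Unh E B T₀ (D₀ ∪ S) ∧ (∀ u v, FQ u v → E u v ∧ u ∈ S ∧ v ∈ S ∧ v ∉ T₀) ∧
      (∀ u u' v, FQ u v → FQ u' v → u = u') ∧ (∀ u v v', FQ u v → FQ u v' → v = v') ∧
      (∀ s ∈ S, s ∉ D₀) ∧ (∀ s ∈ S, s ∈ T₀ → ∃ b ∈ B, Relation.ReflTransGen FQ s b) ∧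
      (∀ s ∈ S, s ∈ X₀ → s = t ∧ Opn B X₀ D₀ F Q t) ∧
      (Opn B X₀ D₀ F Q t → (∃ b ∈ B, Relation.ReflTransGen FQ t b) ∨
        (∃ z, Q t z ∧ Relation.ReflTransGen H t z) ∨ ∃ e ∈ S, e ∈ T₀ ∧ Relation.ReflTransGen H t e) := by
      intro p hp hpT hpt hr
      obtain ⟨b, S, FQ, hQ, hb, q1, q2, q3, q4⟩ := hsafe t ho.1 p hp hpT
      refine ⟨S, FQ, q4, q3, fun u v h => ⟨hQ.edge u v h, hQ.left u v h, hQ.right u v h, fun hv =>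
        hQ.ne_start u v h (q2 v (hQ.right u v h) hv)⟩, hQ.inj_left, hQ.inj_right, q1, fun s hs hsT => ?_,
        fun s hs hsX => ?_, fun _ => Or.inr (Or.inr ⟨p, hQ.ha, hpT, hr⟩)⟩
      · rw [q2 s hs hsT]
        exact ⟨b, hb, hQ.reach b hQ.hb⟩
      · have := q2 s hs ((hcov s (Or.inr (Or.inr hsX))).resolve_right (q1 s hs))
        subst this
        exact ⟨hpt hsX, ho⟩
    rcases ho.2 with ⟨z, hz⟩ | hperm
    · have htn : ¬ (t ∈ Δ₀ ∨ Q t t) := by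
        rintro (h | h)
        · exact hX₀ t h ho.1
        · exact hP.vne t t h rfl
      obtain ⟨e, he | he, heX, hr⟩ := track t (Or.inr ⟨rfl, z, hz⟩) htn (hXX ho.1)
      · exact triv fun _ => ⟨e, he, hr⟩
      · exact hst e heX he.1 (fun h => absurd h he.2) hr
    · exact hst t (hXX ho.1) ((hcov t (Or.inr (Or.inr ho.1))).resolve_right hperm.2.1) (fun _ => rfl) .refl
  -- the linking between the levels
  have hUs := hL.unh_step hκ hi hcov s2 s1
  have hcard : #((X i \ (D₀ ∪ X₀ ∪ S)) ∩ T₀ : Set V) < κ :=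
    lt_of_le_of_lt (mk_le_mk_of_subset fun x hx => hx.1.1) (hL.small i)
  obtain ⟨L, hLk⟩ := hIH _ _ _ _ hcard hUs
  obtain ⟨l, l1, l2, l3⟩ := hLk.restrict
  have lmem : ∀ u v, l u v → u ∈ X i \ (D₀ ∪ X₀ ∪ S) ∧ v ∈ X i \ (D₀ ∪ X₀ ∪ S) := fun u v h =>
    ⟨not_not.1 (hLk.leftZ u v (l1 u v h).1), not_not.1 (hLk.rightZ u v (l1 u v h).1)⟩
  have HD : ∀ u v, H u v → u ∈ Y := by
    rintro u v ⟨h1, rfl, -⟩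
    exact k1 v h1
  refine PL.glue (T := T₀) (S := S) (N := fun u v => H u v ∨ FQ u v) (l := l) (t := t) hP hXX hDD hw.notB hXD
    (fun x hx => hcov x (by tauto)) hW ?_ ?_ ?_ ?_ ?_ ?_ ?_ ?_ ?_ ?_ ?_ ?_ ?_ ?_
  · rintro u v (⟨h1, rfl, h3, h4⟩ | h)
    · refine ⟨(k3 v h1).resolve_left (Ne.symm h3), h4, (k6 v h1).2 h4, ?_⟩
      rcases h1 with h1 | h1
      · exact hA₀ v h1
      · exact hP.vA t v h1
    · obtain ⟨h1, h2, h3, h4⟩ := s3 u v h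
      exact ⟨h1, s1 h2, s1 h3, fun hA => (hcov v (Or.inl hA)).elim h4 (s6 v h3)⟩
  · rintro u u' v (h | h) (h' | h')
    · exact h.2.1.symm.trans h'.2.1
    · exact ((hHhead v h.1).elim (s3 u' v h').2.2.2 (s6 v (s3 u' v h').2.2.1)).elim
    · exact ((hHhead v h'.1).elim (s3 u v h).2.2.2 (s6 v (s3 u v h).2.2.1)).elim
    · exact s4 u u' v h h'
  · rintro u v v' (h | h) (h' | h')
    · exact k2 v h.1 v' h'.1 (h.2.1.trans h'.2.1.symm)
    · exact absurd (hYD (HD u v h)) (s6 u (s3 u v' h').2.1)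
    · exact absurd (hYD (HD u v' h')) (s6 u (s3 u v h).2.1)
    · exact s5 u v v' h h'
  · rintro u v (h | h)
    · exact Or.inl (Or.inl (hYD (HD u v h)))
    · exact Or.inr (s3 u v h).2.1
  · rintro u v (h | h) hu
    · rcases HD u v h with h | ⟨rfl, z, hz⟩
      · exact absurd hu h.2
      · exact ⟨rfl, hu, Or.inl ⟨z, hz⟩⟩
    · exact s8 u (s3 u v h).2.1 hu
  · rintro u v (h | h)
    · exact (hHhead v h.1).imp_right fun h => Or.inl (Or.inl h)
    · exact Or.inr (Or.inr (s3 u v h).2.2.1)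
  · rintro u v (h | h) hv
    · exact h.1.resolve_left fun h => hX₀ v h hv
    · exact ((hcov v (Or.inr (Or.inr hv))).elim (s3 u v h).2.2.2 (s6 v (s3 u v h).2.2.1)).elim
  · intro a ha haX haX₀
    have hHN : ∀ u v, H u v → H u v ∨ FQ u v := fun _ _ h => Or.inl h
    have hFN : ∀ u v, FQ u v → H u v ∨ FQ u v := fun _ _ h => Or.inr h
    have hend : ∀ e ∈ X i, e ∈ T₀ → e ∉ X₀ → Relation.ReflTransGen H a e →
        ∃ y, Relation.ReflTransGen (fun u v => H u v ∨ FQ u v) a y ∧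
          (y ∈ B ∨ (y ∈ X i \ (D₀ ∪ X₀ ∪ S) ∧ y ∈ T₀) ∨ Q t y) := by
      intro e he heT heX hr
      have hr' := rtg_mono hr hHN
      by_cases hs : e ∈ S
      · obtain ⟨b, hb, hr2⟩ := s7 e hs heT
        exact ⟨b, hr'.trans (rtg_mono hr2 hFN), Or.inl hb⟩
      · refine ⟨e, hr', Or.inr (Or.inl ⟨⟨he, ?_⟩, heT⟩)⟩
        rintro ((h | h) | h)
        exacts [hTD e heT h, heX h, hs h]
    rcases hcov a (Or.inl ha) with haT | haD
    · exact hend a haX haT haX₀ .refl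
    · have han : ¬ (a ∈ Δ₀ ∨ Q t a) := by
        rintro (h | h)
        · exact hA₀ a h ha
        · exact hP.vA t a h ha
      obtain ⟨e, he | he, heX, hr⟩ := track a (Or.inl ⟨haD, haX₀⟩) han haX
      · exact ⟨e, rtg_mono hr hHN, Or.inr (Or.inr he)⟩
      · exact hend e heX he.1 he.2 hr
  · intro ho
    have hHN : ∀ u v, H u v → H u v ∨ FQ u v := fun _ _ h => Or.inl h
    have hFN : ∀ u v, FQ u v → H u v ∨ FQ u v := fun _ _ h => Or.inr h
    rcases s9 ho with ⟨b, hb, hr⟩ | ⟨z, hz, hr⟩ | ⟨e, he, heT, hr⟩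
    · exact ⟨b, rtg_mono hr hFN, Or.inl hb⟩
    · exact ⟨z, rtg_mono hr hHN, Or.inr hz⟩
    · obtain ⟨b, hb, hr2⟩ := s7 e he heT
      exact ⟨b, (rtg_mono hr hHN).trans (rtg_mono hr2 hFN), Or.inl hb⟩
  · intro u v h
    obtain ⟨hu, hv⟩ := lmem u v h
    refine ⟨(hLk.edge u v (l1 u v h).1).imp_right fun h => ⟨h.1, h.2.2⟩, hu, hv,
      fun hvT => hLk.notA u v (l1 u v h).1 ⟨hv, hvT⟩, ?_⟩
    by_contra hc
    exact (l1 u v h).2 ⟨hu, hc⟩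
  · exact fun u u' v h h' => hLk.inj_left u u' v (l1 u v h).1 (l1 u' v h').1
  · exact fun u v v' h h' => hLk.inj_right u v v' (l1 u v h).1 (l1 u v' h').1
  · intro u v h
    obtain ⟨b, hb, hr⟩ := l2 u v h
    exact ⟨b, hb.1, hb.2, hr⟩
  · intro s hs hsT
    obtain ⟨b, hb, hr⟩ := l3 s ⟨hs, hsT⟩ (not_not.2 hs)
    exact ⟨b, hb.1, hb.2, hr⟩

end StepLemma

/-! ### Transfinite construction of the linkage along a ladder -/
section LimitLemma
open Set Cardinal
universe u
variable {κ : Cardinal.{u}} {ι V : Type u} [LinearOrder ι]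
variable {E : V → V → Prop} {B A : Set V}

/-- The limit of a chain of partial linkages: real edges accumulate, virtual edges are those which
are never removed. -/
theorem PL.limit {J : Set ι} {X D : ι → Set V} {G F Q : ι → V → V → Prop} {X' D' : Set V}
    {G' : V → V → Prop} (hmono : ∀ i j, i ≤ j → X i ⊆ X j)
    (hcov : ∀ x ∈ X', ∃ j ∈ J, x ∈ X j) (hX : ∀ j ∈ J, X j ⊆ X')
    (hD : ∀ j ∈ J, D j ⊆ D') (hXD : ∀ j ∈ J, ∀ x ∈ X j, x ∉ D j → x ∉ D')
    (hW : ∀ j ∈ J, ∀ a v, a ∈ D j → Wide κ E (G j) a v → Wide κ E G' a v)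
    (hP : ∀ j ∈ J, PL κ E B A (X j) (D j) (G j) (F j) (Q j))
    (hE : ∀ i ∈ J, ∀ j ∈ J, i < j → Ext B (X i) (D i) (F i) (Q i) (X j) (D j) (F j) (Q j)) :
    ∃ F' Q', PL κ E B A X' D' G' F' Q' ∧ ∀ j ∈ J, Ext B (X j) (D j) (F j) (Q j) X' D' F' Q' := by
  classical
  let F' : V → V → Prop := fun u v => ∃ j ∈ J, F j u v
  let Q' : V → V → Prop := fun u v => (∃ j ∈ J, u ∈ X j) ∧ ∀ j ∈ J, u ∈ X j → Q j u v
  have stab : ∀ j ∈ J, ∀ t ∈ X j, ((∀ v, F j t v ↔ F' t v) ∧ ∀ v, Q j t v ↔ Q' t v) ∨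
      ∃ j' ∈ J, ∀ n, Rk B (X j) (D j) (F j) (Q j) n t →
        ∃ m < n, Rk B (X j') (D j') (F j') (Q j') m t := by
    intro j hj t ht
    by_cases hs : ∀ j' ∈ J, j < j' → (∀ v, F j t v ↔ F j' t v) ∧ ∀ v, Q j t v ↔ Q j' t v
    · refine Or.inl ⟨fun v => ⟨fun h => ⟨j, hj, h⟩, ?_⟩, fun v => ⟨fun h => ⟨⟨j, hj, ht⟩, ?_⟩, ?_⟩⟩
      · rintro ⟨j', hj', h⟩
        rcases lt_trichotomy j j' with hlt | rfl | hlt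
        · exact ((hs j' hj' hlt).1 v).2 h
        · exact h
        · exact (hE j' hj' j hj hlt).sub t v h
      · intro j' hj' ht'
        rcases lt_trichotomy j j' with hlt | rfl | hlt
        · exact ((hs j' hj' hlt).2 v).1 h
        · exact h
        · exact (hE j' hj' j hj hlt).old t ht' v h
      · rintro ⟨-, h⟩
        exact h j hj ht
    · push Not at hs
      obtain ⟨j', hj', hlt, hs⟩ := hs
      refine Or.inr ⟨j', hj', ?_⟩
      rcases (hE j hj j' hj' hlt).out t ht with h | h
      · obtain ⟨v, hv⟩ := hs h.1
        exact absurd (h.2 v) (by tauto)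
      · exact h
  have rk : ∀ n, ∀ j ∈ J, ∀ x, Rk B (X j) (D j) (F j) (Q j) n x → ∃ m ≤ n, Rk B X' D' F' Q' m x := by
    intro n
    induction n using Nat.strong_induction_on with
    | _ n IH =>
      intro j hj x hx
      have drop : ∀ n, (∀ m < n, ∀ j ∈ J, ∀ x, Rk B (X j) (D j) (F j) (Q j) m x →
          ∃ m' ≤ m, Rk B X' D' F' Q' m' x) → ∀ t, Rk B (X j) (D j) (F j) (Q j) n t →
          (∃ j' ∈ J, ∀ n, Rk B (X j) (D j) (F j) (Q j) n t →
            ∃ m < n, Rk B (X j') (D j') (F j') (Q j') m t) → ∃ m ≤ n, Rk B X' D' F' Q' m t := by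
        rintro n IH t ht ⟨j', hj', h⟩
        obtain ⟨m, hm, hr⟩ := h n ht
        obtain ⟨m', hm', hr'⟩ := IH m hm j' hj' t hr
        exact ⟨m', by omega, hr'⟩
      induction hx with
      | tgt b hb => exact ⟨0, le_rfl, .tgt b hb⟩
      | perm b hb hbD hF hQ =>
        rcases stab j hj b hb with h | h
        · exact ⟨1, le_rfl, .perm b (hX j hj hb) (hXD j hj b hb hbD) (fun v hv => hF v ((h.1 v).2 hv))
            fun v hv => hQ v ((h.2 v).2 hv)⟩
        · exact drop _ IH b (.perm b hb hbD hF hQ) h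
      | real n a v hav _ ih =>
        obtain ⟨m, hm, hr⟩ := ih IH
        exact ⟨m, hm, .real m a v ⟨j, hj, hav⟩ hr⟩
      | virt n a v hav hv ih =>
        obtain ⟨m, hm, hr⟩ := ih fun m hm => IH m (by omega)
        rcases stab j hj a ((hP j hj).vleft a v hav) with h | h
        · exact ⟨m + 1, by omega, .virt m a v ((h.2 v).1 hav) hr⟩
        · exact drop _ IH a (.virt n a v hav hv) h
  have ev : ∀ u v, F' u v ∨ Q' u v → ∃ j ∈ J, ∀ j' ∈ J, j ≤ j' → F j' u v ∨ Q j' u v := by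
    rintro u v (⟨j, hj, h⟩ | ⟨⟨j, hj, hu⟩, h⟩)
    · refine ⟨j, hj, fun j' hj' hle => Or.inl ?_⟩
      rcases hle.eq_or_lt with rfl | hlt
      · exact h
      · exact (hE j hj j' hj' hlt).sub u v h
    · exact ⟨j, hj, fun j' hj' hle => Or.inr (h j' hj' (hmono _ _ hle hu))⟩
  have com : ∀ u v u' v', F' u v ∨ Q' u v → F' u' v' ∨ Q' u' v' → ∃ j ∈ J, (F j u v ∨ Q j u v) ∧
      (F j u' v' ∨ Q j u' v') := by
    intro u v u' v' h h'
    obtain ⟨j, hj, h⟩ := ev u v h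
    obtain ⟨j', hj', h'⟩ := ev u' v' h'
    rcases le_total j j' with hle | hle
    · exact ⟨j', hj', h j' hj' hle, h' j' hj' le_rfl⟩
    · exact ⟨j, hj, h j hj le_rfl, h' j hj hle⟩
  have q : ∀ u v, Q' u v → ∃ j ∈ J, Q j u v := fun u v ⟨⟨j, hj, hu⟩, h⟩ => ⟨j, hj, h j hj hu⟩
  refine ⟨F', Q', ⟨?_, ?_, ?_, ?_, ?_, ?_, ?_, ?_, ?_, ?_, ?_, ?_, ?_, ?_, ?_⟩, fun j hj =>
    ⟨fun u v h => ⟨j, hj, h⟩, fun t ht => ?_, fun n x => rk n j hj x, fun t ht v h => h.2 j hj ht⟩⟩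
  · rintro u v ⟨j, hj, h⟩; exact (hP j hj).edge u v h
  · rintro u v ⟨j, hj, h⟩; exact hX j hj ((hP j hj).left u v h)
  · rintro u v ⟨j, hj, h⟩; exact hX j hj ((hP j hj).right u v h)
  · rintro u v ⟨j, hj, h⟩; exact (hP j hj).notA u v h
  · intro u v h; obtain ⟨j, hj, h⟩ := q u v h; exact hX j hj ((hP j hj).vleft u v h)
  · intro u v h; obtain ⟨j, hj, h⟩ := q u v h; exact hX j hj ((hP j hj).vright u v h)
  · intro u v h; obtain ⟨j, hj, h⟩ := q u v h; exact hD j hj ((hP j hj).vD u v h)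
  · intro u v h; obtain ⟨j, hj, h⟩ := q u v h; exact (hP j hj).vne u v h
  · intro u v h; obtain ⟨j, hj, h⟩ := q u v h; exact (hP j hj).vE u v h
  · intro u v h
    obtain ⟨j, hj, h⟩ := q u v h
    exact hW j hj u v ((hP j hj).vD u v h) ((hP j hj).vW u v h)
  · intro u v h; obtain ⟨j, hj, h⟩ := q u v h; exact (hP j hj).vA u v h
  · intro u u' v h h'
    obtain ⟨j, hj, h, h'⟩ := com _ _ _ _ h h'
    exact (hP j hj).injl u u' v h h'
  · intro u v v' h h'
    obtain ⟨j, hj, h, h'⟩ := com _ _ _ _ h h'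
    exact (hP j hj).injr u v v' h h'
  · intro a ha haX
    obtain ⟨j, hj, haj⟩ := hcov a haX
    obtain ⟨n, hn⟩ := (hP j hj).rkA a ha haj
    obtain ⟨m, -, hm⟩ := rk n j hj a hn
    exact ⟨m, hm⟩
  · intro u v h
    obtain ⟨j, hj, h⟩ := q u v h
    obtain ⟨n, hn⟩ := (hP j hj).rkQ u v h
    obtain ⟨m, -, hm⟩ := rk n j hj v hn
    exact ⟨m, hm⟩
  · rcases stab j hj t ht with h | ⟨j', hj', h⟩
    · exact Or.inl h
    · refine Or.inr fun n hn => ?_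
      obtain ⟨m, hm, hr⟩ := h n hn
      obtain ⟨m', hm', hr'⟩ := rk m j' hj' t hr
      exact ⟨m', by omega, hr'⟩

/-- Definition by transfinite recursion, with choices made subject to a condition on the earlier values. -/
theorem exists_rec {ι α : Type*} [LinearOrder ι] [WellFoundedLT ι] [Nonempty α] (P : ι → (ι → α) → α → Prop)
    (hc : ∀ k S S' a, (∀ j < k, S j = S' j) → P k S a → P k S' a)
    (h : ∀ k S, (∀ j < k, P j S (S j)) → ∃ a, P k S a) : ∃ S : ι → α, ∀ k, P k S (S k) := by
  classical
  have hwf : WellFounded ((· < ·) : ι → ι → Prop) := wellFounded_lt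
  let a₀ : α := Classical.arbitrary α
  let ch : ι → (ι → α) → α := fun k S => if h : ∃ a, P k S a then h.choose else a₀
  let S : ι → α := hwf.fix fun k r => ch k fun j => if h : j < k then r j h else a₀
  have hS : ∀ k, S k = ch k fun j => if j < k then S j else a₀ := by
    intro k
    change hwf.fix _ k = _
    rw [hwf.fix_eq]
    congr 1
  refine ⟨S, fun k => ?_⟩
  induction k using hwf.induction with
  | _ k ih =>
    obtain ⟨a, ha⟩ := h k S ih
    have hex : ∃ a, P k (fun j => if j < k then S j else a₀) a :=
      ⟨a, hc k S _ a (fun j hj => by simp [hj]) ha⟩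
    have := hex.choose_spec
    have e : S k = hex.choose := by
      rw [hS]
      exact dif_pos hex
    rw [e]
    exact hc k _ S _ (fun j hj => by simp [hj]) this

end LimitLemma

section Recursion
open Set Cardinal
universe u
variable {κ : Cardinal.{u}} {ι V : Type u} [LinearOrder ι]
variable {E : V → V → Prop} {B A : Set V} {Mf : Set V → Set V} {Sd : ι → Set V}
  {X : ι → Set V} {g : V → V}

/-- A coherent system of partial linkages for the levels in a closed unbounded set; the vertex
`e j` is treated right after level `j`. -/
theorem CLadder.exists_states [WellFoundedLT ι] (hκ : RegIdx κ ι) (hL : CLadder κ E B A Mf Sd X g)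
    (hIH : ∀ (E : V → V → Prop) (B A Z : Set V), #A < κ → Unh E B A Z → ∃ F, Linking E B A Z F)
    (hU : Unh E B A ∅) {f : ι → ι} (hf : Cl f ⊆ Cst E B A X)
    (hd : ∀ i ∈ Cl f, ∀ w, ¬ Dead (Gr E B A g (X i)) (X i) (LD E B A (X i)) w) (e : ι → V) :
    ∃ F Q : ι → V → V → Prop,
      (∀ k ∈ Cl f, PL κ E B A (X k) (LD E B A (X k)) (Gr E B A g (X k)) (F k) (Q k)) ∧
      ∀ k ∈ Cl f, ∀ j ∈ Cl f, j < k →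
        Ext B (X j) (LD E B A (X j)) (F j) (Q j) (X k) (LD E B A (X k)) (F k) (Q k) ∧
        (Opn B (X j) (LD E B A (X j)) (F j) (Q j) (e j) →
          ∀ n, Rk B (X j) (LD E B A (X j)) (F j) (Q j) n (e j) →
            ∃ m < n, Rk B (X k) (LD E B A (X k)) (F k) (Q k) m (e j)) := by
  classical
  let P : ι → (ι → (V → V → Prop) × (V → V → Prop)) → (V → V → Prop) × (V → V → Prop) → Prop :=
    fun k S s => k ∈ Cl f →
      PL κ E B A (X k) (LD E B A (X k)) (Gr E B A g (X k)) s.1 s.2 ∧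
      ∀ j ∈ Cl f, j < k →
        Ext B (X j) (LD E B A (X j)) (S j).1 (S j).2 (X k) (LD E B A (X k)) s.1 s.2 ∧
        (Opn B (X j) (LD E B A (X j)) (S j).1 (S j).2 (e j) →
          ∀ n, Rk B (X j) (LD E B A (X j)) (S j).1 (S j).2 n (e j) →
            ∃ m < n, Rk B (X k) (LD E B A (X k)) s.1 s.2 m (e j))
  obtain ⟨S, hS⟩ := exists_rec P
    (by
      intro k S S' a hSS h hk
      refine ⟨(h hk).1, fun j hj hjk => ?_⟩
      rw [← hSS j hjk]
      exact (h hk).2 j hj hjk)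
    (by
      intro k S hS
      by_cases hk : k ∈ Cl f
      swap
      · exact ⟨(fun _ _ => False, fun _ _ => False), fun h => absurd h hk⟩
      have hkC := hf hk
      by_cases hb : ∃ j ∈ Cl f, j < k
      · by_cases hm : ∃ j₀ ∈ Cl f, j₀ < k ∧ ∀ j ∈ Cl f, j < k → j ≤ j₀
        · -- there is a last level `j₀` before `k`
          obtain ⟨j₀, hj₀, hlt, hmax⟩ := hm
          have hC₀ := hf hj₀
          obtain ⟨F', Q', h1, h2, h3⟩ := hL.step hκ hIH hkC (X₀ := X j₀) (D₀ := LD E B A (X j₀))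
            (T₀ := Tm E B A (X j₀)) (F := (S j₀).1) (Q := (S j₀).2) (fun x => Iff.rfl) (hL.wave j₀)
            (fun x hx h => (mem_LDm.1 hx).2.2 ((hL.g_mem_iff hC₀ hx).1 h))
            (hd j₀ hj₀) (hL.mono _ _ hlt.le) (LD_mono (hL.mono _ _ hlt.le))
            (fun x hx hxD h => hxD (hL.LD_of_mem hC₀ hx h))
            (fun x hx => (hL.g_mem_iff hkC hx).symm) (unh_level _)
            (by
              intro _ _ p hp hpT
              obtain ⟨j, hjj, hjk, hpj⟩ := hL.mem_of_lim hkC.1 hlt hp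
              obtain ⟨b, S, F, ⟨s1, s2, s3, s4, s5⟩, hS⟩ := hL.safe j₀ j hjj p hpj hpT
              exact ⟨b, S, F, s1, s2, s3, s4, s5, hS k hjk⟩)
            (by
              intro a ha v hv hw
              obtain ⟨n, x, u, hb, -, hx⟩ := hL.wide j₀ a ha v hv hw
              exact ⟨n, x, u, hb, hx k hlt⟩)
            (fun a v ha hw => (hL.wide_iff hκ hlt.le ha).2 hw) (hS j₀ hlt hj₀).1 (e j₀)
          refine ⟨(F', Q'), fun _ => ⟨h1, fun j hj hjk => ?_⟩⟩
          rcases (hmax j hj hjk).eq_or_lt with rfl | hjj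
          · exact ⟨h2, h3⟩
          · obtain ⟨k1, k2⟩ := (hS j₀ hlt hj₀).2 j hj hjj
            refine ⟨k1.trans (hL.mono _ _ hjj.le) h2, fun ho n hn => ?_⟩
            obtain ⟨m, hm, hr⟩ := k2 ho n hn
            obtain ⟨m', hm', hr'⟩ := h2.rk m _ hr
            exact ⟨m', by omega, hr'⟩
        · -- the levels before `k` are cofinal in `k`
          push Not at hm
          have hcof : ∀ β < k, ∃ j ∈ Cl f, β < j ∧ j < k := by
            intro β hβ
            by_contra hno
            push Not at hno
            obtain ⟨j₁, hj₁, hj₁k⟩ := hb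
            let U : Set ι := {γ | ∀ j ∈ Cl f, j < k → j ≤ γ}
            have hUne : U.Nonempty := by
              refine ⟨β, fun j hj hjk => ?_⟩
              by_contra hlt
              exact absurd hjk (not_lt.2 (hno j hj (not_le.1 hlt)))
            have hwf : WellFounded ((· < ·) : ι → ι → Prop) := wellFounded_lt
            let γ := hwf.min U hUne
            have hγ : γ ∈ U := hwf.min_mem U hUne
            have hγβ : γ ≤ β := by
              by_contra hlt
              refine hwf.not_lt_min (s := U) (x := β) ?_ (not_le.1 hlt)
              intro j hj hjk
              by_contra hlt
              exact absurd hjk (not_lt.2 (hno j hj (not_le.1 hlt)))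
            have hγC : γ ∈ Cl f := by
              refine cl_closed (fun δ hδ => ?_) ?_
              · have hδU : δ ∉ U := fun h => hwf.not_lt_min (s := U) h hδ
                have : ∃ j ∈ Cl f, j < k ∧ δ < j := by
                  by_contra hno
                  push Not at hno
                  exact hδU hno
                obtain ⟨j, hj, hjk, hδj⟩ := this
                exact ⟨j, hj, hδj, hγ j hj hjk⟩
              · obtain ⟨β', hβ'⟩ := hj₁.1
                exact ⟨β', lt_of_lt_of_le hβ' (hγ j₁ hj₁ hj₁k)⟩
            obtain ⟨j, hj, hjk, hjγ⟩ := hm γ hγC (lt_of_le_of_lt hγβ hβ)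
            exact absurd (hγ j hj hjk) (not_le.2 hjγ)
          obtain ⟨F', Q', h1, h2⟩ := PL.limit (κ := κ) (E := E) (B := B) (A := A)
            (J := {j | j ∈ Cl f ∧ j < k}) (X := X) (D := fun j => LD E B A (X j))
            (G := fun j => Gr E B A g (X j)) (F := fun j => (S j).1) (Q := fun j => (S j).2)
            (X' := X k) (D' := LD E B A (X k)) (G' := Gr E B A g (X k)) hL.mono
            (by
              intro x hx
              obtain ⟨β, hβ, hxβ⟩ := hL.cont k hkC.1 x hx
              obtain ⟨j, hj, hβj, hjk⟩ := hcof β hβ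
              exact ⟨j, ⟨hj, hjk⟩, hL.mono _ _ hβj.le hxβ⟩)
            (fun j hj => hL.mono _ _ hj.2.le) (fun j hj => LD_mono (hL.mono _ _ hj.2.le))
            (fun j hj x hx hxD h => hxD (hL.LD_of_mem (hf hj.1) hx h))
            (fun j hj a v ha hw => (hL.wide_iff hκ hj.2.le ha).2 hw)
            (fun j hj => (hS j hj.2 hj.1).1)
            (fun i hi j hj hij => ((hS j hj.2 hj.1).2 i hi.1 hij).1)
          refine ⟨(F', Q'), fun _ => ⟨h1, fun j hj hjk => ⟨h2 j ⟨hj, hjk⟩, fun ho n hn => ?_⟩⟩⟩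
          obtain ⟨j', hj', hjj, hj'k⟩ := hcof j hjk
          obtain ⟨m, hm, hr⟩ := ((hS j' hj'k hj').2 j hj hjj).2 ho n hn
          obtain ⟨m', hm', hr'⟩ := (h2 j' ⟨hj', hj'k⟩).rk m _ hr
          exact ⟨m', by omega, hr'⟩
      · -- the first level
        push Not at hb
        have hRg : ∀ x, x ∉ Rg E (∅ : Set V) := fun x ⟨u, hu, _⟩ => hu
        obtain ⟨F', Q', h1, -, -⟩ := hL.step hκ hIH hkC (X₀ := ∅) (D₀ := ∅) (T₀ := A)
          (F := fun _ _ => False) (Q := fun _ _ => False) (fun x => by simp [hRg])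
          (by
            refine ⟨by simp, by simp, fun x hx => absurd hx.1 (hRg x), fun x hx => absurd hx.1 (hRg x),
              fun x hx => absurd hx.1 (hRg x), fun y _ hy => absurd (hy 0).1 (hRg _)⟩)
          (by simp) (fun w hw => hw.1) (empty_subset _) (empty_subset _) (by simp)
          (fun x hx => absurd hx.1 (hRg x)) hU (by simp) (by simp) (by simp)
          (by constructor <;> simp) (e k)
        exact ⟨(F', Q'), fun _ => ⟨h1, fun j hj hjk => absurd hjk (not_lt.2 (hb j hj))⟩⟩)
  exact ⟨fun k => (S k).1, fun k => (S k).2, fun k hk => (hS k hk).1, fun k hk => (hS k hk).2⟩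

end Recursion

section RegularThm
open Set Cardinal
universe u
variable {κ : Cardinal.{u}} {ι V : Type u} [LinearOrder ι]
variable {E : V → V → Prop} {B A : Set V}

/-- For regular uncountable `κ`, and provided that webs with fewer than `κ` starting vertices are known
to be linkable: there are one relation `F` and many small sets, closed under `F`, all of whose
starting vertices are linked by `F`. -/
theorem regular_closure [Nonempty V] [WellFoundedLT ι] (hκ : RegIdx κ ι)
    (hIH : ∀ (E : V → V → Prop) (B A Z : Set V), #A < κ → Unh E B A Z → ∃ F, Linking E B A Z F)
    (hU : Unh E B A ∅) (Mf : Set V → Set V) (Sd : ι → Set V)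
    (hMf : ∀ X : Set V, #X < κ → #(Mf X) < κ) (hSd : ∀ i, #(Sd i) < κ) :
    ∃ (F : V → V → Prop) (C : Set (Set V)),
      (∀ u v, F u v → E u v) ∧ (∀ u v, F u v → v ∉ A) ∧
      (∀ u u' v, F u v → F u' v → u = u') ∧ (∀ u v v', F u v → F u v' → v = v') ∧
      (∀ X ∈ C, #X < κ) ∧ (∀ X ∈ C, ∀ u v, F u v → (u ∈ X ↔ v ∈ X)) ∧
      (∀ X ∈ C, ∀ a ∈ A, a ∈ X → ∃ b ∈ B, Relation.ReflTransGen F a b) ∧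
      (∀ i, ∃ X ∈ C, Sd i ⊆ X) ∧ (∀ X ∈ C, ∃ Y ∈ C, X ⊆ Y ∧ Mf X ⊆ Y) := by
  classical
  obtain ⟨X, g, hL⟩ := exists_cladder (E := E) (B := B) (A := A) hκ Mf Sd hMf hSd
  obtain ⟨f, hf⟩ := (lrg_cst hκ hL.toLadder).inter (hL.lrg_no_dead hκ hU)
  -- every vertex is treated unboundedly often
  obtain ⟨e, he⟩ : ∃ e : ι → V, ∀ i, ∀ t ∈ X i, ∀ δ, ∃ j ∈ Cl f, δ < j ∧ e j = t := by
    let P : Set (V × ι) := (⋃ i, X i) ×ˢ Set.univ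
    have hP : #P ≤ κ := by
      have h1 : #(⋃ i, X i : Set V) ≤ κ := by
        refine (mk_iUnion_le X).trans ?_
        refine (mul_le_mul' hκ.card.le (ciSup_le' fun i => (hL.small i).le)).trans ?_
        exact (mul_eq_self hκ.unc.le).le
      rw [mk_setProd, mk_univ, hκ.card]
      exact (mul_le_mul' h1 le_rfl).trans (mul_eq_self hκ.unc.le).le
    obtain ⟨β, hβ, hinj⟩ := exists_inj_choice hκ hP (fun p => {j | j ∈ Cl f ∧ p.2 < j}) (by
      intro p _ δ
      obtain ⟨γ, hγ, h⟩ := cl_unbdd hκ f (max δ p.2)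
      exact ⟨γ, ⟨hγ, lt_of_le_of_lt (le_max_right _ _) h⟩, lt_of_le_of_lt (le_max_left _ _) h⟩)
    refine ⟨fun j => if h : ∃ p ∈ P, β p = j then h.choose.1 else Classical.arbitrary V, ?_⟩
    intro i t ht δ
    have hp : ((t, δ) : V × ι) ∈ P := ⟨mem_iUnion.2 ⟨i, ht⟩, mem_univ _⟩
    have hex : ∃ p ∈ P, β p = β (t, δ) := ⟨_, hp, rfl⟩
    refine ⟨β (t, δ), (hβ _ hp).1, (hβ _ hp).2, ?_⟩
    beta_reduce
    rw [dif_pos hex]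
    have := hinj _ hex.choose_spec.1 _ hp hex.choose_spec.2
    rw [this]
  obtain ⟨F, Q, hPL, hEx⟩ := hL.exists_states hκ hIH hU (fun i hi => (hf hi).1) (fun i hi => (hf hi).2) e
  let F' : V → V → Prop := fun u v => ∃ j ∈ Cl f, F j u v
  have com : ∀ u v u' v', F' u v → F' u' v' → ∃ j ∈ Cl f, F j u v ∧ F j u' v' := by
    have up : ∀ j ∈ Cl f, ∀ j' ∈ Cl f, j ≤ j' → ∀ u v, F j u v → F j' u v := by
      intro j hj j' hj' hle u v h
      rcases hle.eq_or_lt with rfl | hlt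
      · exact h
      · exact (hEx j' hj' j hj hlt).1.sub u v h
    rintro u v u' v' ⟨j, hj, h⟩ ⟨j', hj', h'⟩
    rcases le_total j j' with hle | hle
    · exact ⟨j', hj', up j hj j' hj' hle _ _ h, h'⟩
    · exact ⟨j, hj, h, up j' hj' j hj hle _ _ h'⟩
  have inl : ∀ u u' v, F' u v → F' u' v → u = u' := by
    intro u u' v h h'
    obtain ⟨j, hj, h, h'⟩ := com _ _ _ _ h h'
    exact (hPL j hj).injl u u' v (Or.inl h) (Or.inl h')
  have inr : ∀ u v v', F' u v → F' u v' → v = v' := by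
    intro u v v' h hv
    obtain ⟨j, hj, h, hv⟩ := com _ _ _ _ h hv
    exact (hPL j hj).injr u v v' (Or.inl h) (Or.inl hv)
  -- strong induction on the rank: the vertex blocking the way is treated at a later stage
  have reach : ∀ n, ∀ j ∈ Cl f, ∀ x, Rk B (X j) (LD E B A (X j)) (F j) (Q j) n x →
      ∃ b ∈ B, Relation.ReflTransGen F' x b := by
    intro n
    induction n using Nat.strong_induction_on with
    | _ n IH =>
      intro j hj x hx
      -- an open vertex loses rank once it has been treated
      have opn : ∀ n, (∀ m < n, ∀ j ∈ Cl f, ∀ x, Rk B (X j) (LD E B A (X j)) (F j) (Q j) m x →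
          ∃ b ∈ B, Relation.ReflTransGen F' x b) → ∀ t,
          Rk B (X j) (LD E B A (X j)) (F j) (Q j) n t → Opn B (X j) (LD E B A (X j)) (F j) (Q j) t →
          ∃ b ∈ B, Relation.ReflTransGen F' t b := by
        intro n IH t ht ho
        obtain ⟨j', hj', hlt, rfl⟩ := he j t ho.1 j
        obtain ⟨k, hk, hlt'⟩ := cl_unbdd hκ f j'
        obtain ⟨h1, -⟩ := hEx j' hj' j hj hlt
        rcases h1.out _ ho.1 with hs | hs
        · have ho' : Opn B (X j') (LD E B A (X j')) (F j') (Q j') (e j') := by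
            refine ⟨hL.mono _ _ hlt.le ho.1, ?_⟩
            rcases ho.2 with ⟨z, hz⟩ | ⟨k1, k2, k3, k4⟩
            · exact Or.inl ⟨z, (hs.2 z).1 hz⟩
            · exact Or.inr ⟨k1, fun h => k2 (hL.LD_of_mem (hf hj).1 ho.1 h),
                fun v hv => k3 v ((hs.1 v).2 hv), fun v hv => k4 v ((hs.2 v).2 hv)⟩
          obtain ⟨m, hm, hr⟩ := h1.rk n _ ht
          obtain ⟨m', hm', hr'⟩ := (hEx k hk j' hj' hlt').2 ho' m hr
          exact IH m' (by omega) k hk _ hr'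
        · obtain ⟨m, hm, hr⟩ := hs n ht
          exact IH m hm j' hj' _ hr
      induction hx with
      | tgt b hb => exact ⟨b, hb, .refl⟩
      | perm b hb hbD hF hQ =>
        by_cases hB : b ∈ B
        · exact ⟨b, hB, .refl⟩
        · exact opn 1 IH b (.perm b hb hbD hF hQ) ⟨hb, Or.inr ⟨hB, hbD, hF, hQ⟩⟩
      | real n a v hav _ ih =>
        obtain ⟨b, hb, hr⟩ := ih IH
        exact ⟨b, hb, .head ⟨j, hj, hav⟩ hr⟩
      | virt n a v hav hv ih =>
        exact opn _ IH a (.virt n a v hav hv) ⟨(hPL j hj).vleft a v hav, Or.inl ⟨v, hav⟩⟩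
  -- the levels closed under `F'` in both directions
  have hcl : Lrg {i | ∀ u v, F' u v → (u ∈ X i ↔ v ∈ X i)} := by
    have h1 : ∀ v, Lrg {i : ι | (∀ w, F' v w → w ∈ X i) ∧ ∀ u, F' u v → u ∈ X i} := by
      intro v
      have a1 : Lrg {i : ι | ∀ w, F' v w → w ∈ X i} := by
        by_cases h : ∃ w, F' v w
        · obtain ⟨w, j, hj, hw⟩ := h
          refine (lrg_gt j).mono fun i hi w' hw' => ?_
          rw [← inr v w w' ⟨j, hj, hw⟩ hw']
          exact hL.mono _ _ (le_of_lt hi) ((hPL j hj).right _ _ hw)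
        · push Not at h
          exact ⟨id, fun i _ w hw => absurd hw (h w)⟩
      have a2 : Lrg {i : ι | ∀ u, F' u v → u ∈ X i} := by
        by_cases h : ∃ u, F' u v
        · obtain ⟨u, j, hj, hu⟩ := h
          refine (lrg_gt j).mono fun i hi u' hu' => ?_
          rw [← inl u u' v ⟨j, hj, hu⟩ hu']
          exact hL.mono _ _ (le_of_lt hi) ((hPL j hj).left _ _ hu)
        · push Not at h
          exact ⟨id, fun i _ w hw => absurd hw (h w)⟩
      exact a1.inter a2
    refine ((Lrg.diag hκ hL.small hL.mono _ h1).inter (lrg_lim hκ)).mono ?_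
    rintro i ⟨hi, hlim⟩ u v huv
    constructor
    · intro hu
      obtain ⟨j, hj, hu⟩ := hL.cont i hlim u hu
      exact (hi j hj u hu).1 v huv
    · intro hv
      obtain ⟨j, hj, hv⟩ := hL.cont i hlim v hv
      exact (hi j hj v hv).2 u huv
  have hI : Lrg (Cl f ∩ {i | ∀ u v, F' u v → (u ∈ X i ↔ v ∈ X i)}) := Lrg.inter ⟨f, subset_rfl⟩ hcl
  refine ⟨F', X '' (Cl f ∩ {i | ∀ u v, F' u v → (u ∈ X i ↔ v ∈ X i)}), ?_, ?_, inl, inr, ?_, ?_, ?_, ?_, ?_⟩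
  · rintro u v ⟨j, hj, h⟩; exact (hPL j hj).edge u v h
  · rintro u v ⟨j, hj, h⟩; exact (hPL j hj).notA u v h
  · rintro _ ⟨i, -, rfl⟩; exact hL.small i
  · rintro _ ⟨i, hi, rfl⟩; exact hi.2
  · rintro _ ⟨i, hi, rfl⟩ a ha haX
    obtain ⟨n, hn⟩ := (hPL i hi.1).rkA a ha haX
    exact reach n i hi.1 a hn
  · intro i
    obtain ⟨k, hk, hik⟩ := hI.unbdd hκ i
    exact ⟨X k, ⟨k, hk, rfl⟩, hL.seed i k hik⟩
  · rintro _ ⟨i, hi, rfl⟩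
    obtain ⟨k, hk, hik⟩ := hI.unbdd hκ i
    exact ⟨X k, ⟨k, hk, rfl⟩, hL.mono _ _ hik.le, hL.mf i k hik⟩

end RegularThm

/-! ### Singular cardinals and the induction on the number of starting vertices -/
section Game
open Set Cardinal
universe u
variable {κ : Cardinal.{u}} {V : Type u} {E : V → V → Prop} {B A : Set V}

/-- The starting vertices in `Y \ X` can be linked inside `Y \ X`. -/
def Trg (E : V → V → Prop) (B A X Y : Set V) : Prop := ∃ F, Linking E B A (Y \ X)ᶜ F

/-- `Lvl κ E B A o X`: the small set `X` is bad of level at most `o`, i.e. there is a small set `M` such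
that every small `Y ⊇ X ∪ M` with `Trg E B A X Y` is bad of a smaller level. -/
inductive Lvl (κ : Cardinal.{u}) (E : V → V → Prop) (B A : Set V) : Ordinal.{u} → Set V → Prop
  | mk (o : Ordinal.{u}) (X M : Set V) (r : Set V → Ordinal.{u}) (hM : #M < κ)
    (hr : ∀ Y : Set V, #Y < κ → X ⊆ Y → M ⊆ Y → Trg E B A X Y → r Y < o)
    (h : ∀ Y : Set V, #Y < κ → X ⊆ Y → M ⊆ Y → Trg E B A X Y → Lvl κ E B A (r Y) Y) : Lvl κ E B A o X

theorem Lvl.witness {o : Ordinal.{u}} {X : Set V} (h : Lvl κ E B A o X) : ∃ M : Set V, #M < κ ∧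
    ∀ Y : Set V, #Y < κ → X ⊆ Y → M ⊆ Y → Trg E B A X Y → ∃ o' < o, Lvl κ E B A o' Y := by
  cases h with
  | mk o X M r hM hr h =>
    exact ⟨M, hM, fun Y h1 h2 h3 h4 => ⟨r Y, hr Y h1 h2 h3 h4, h Y h1 h2 h3 h4⟩⟩

/-- A set which is not bad can be extended to one which is not bad and contains a given small set. -/
theorem exists_not_lvl {X : Set V} (hX : ∀ o, ¬ Lvl κ E B A o X) {M : Set V} (hM : #M < κ) :
    ∃ Y : Set V, #Y < κ ∧ X ⊆ Y ∧ M ⊆ Y ∧ Trg E B A X Y ∧ ∀ o, ¬ Lvl κ E B A o Y := by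
  classical
  by_contra hno
  push Not at hno
  let r : Set V → Ordinal.{u} := fun Y => if h : ∃ o, Lvl κ E B A o Y then h.choose else 0
  refine hX (Order.succ (⨆ Y, r Y)) (.mk _ X M r hM (fun Y _ _ _ _ => ?_) fun Y h1 h2 h3 h4 => ?_)
  · exact Order.lt_succ_of_le (Ordinal.le_iSup r Y)
  · have hex := hno Y h1 h2 h3 h4
    have : r Y = hex.choose := dif_pos hex
    rw [this]
    exact hex.choose_spec

/-- The empty set is not bad: among the closed sets of `regular_closure`, applied with `Mf X` a witness
for the least level of `X`, the level would decrease forever. -/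
theorem not_lvl_empty [Nonempty V] {ι : Type u} [LinearOrder ι] [WellFoundedLT ι] (hκ : RegIdx κ ι)
    (hIH : ∀ (E : V → V → Prop) (B A Z : Set V), #A < κ → Unh E B A Z → ∃ F, Linking E B A Z F)
    (hU : Unh E B A ∅) (o : Ordinal.{u}) : ¬ Lvl κ E B A o ∅ := by
  classical
  intro hbad
  obtain ⟨M₀, hM₀, hb₀⟩ := hbad.witness
  have hMex : ∀ X : Set V, ∃ M : Set V, #M < κ ∧ ∀ o, Lvl κ E B A o X → (∀ o' < o, ¬ Lvl κ E B A o' X) →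
      ∀ Y : Set V, #Y < κ → X ⊆ Y → M ⊆ Y → Trg E B A X Y → ∃ o' < o, Lvl κ E B A o' Y := by
    intro X
    by_cases h : ∃ o, Lvl κ E B A o X ∧ ∀ o' < o, ¬ Lvl κ E B A o' X
    · obtain ⟨o, ho, hmin⟩ := h
      obtain ⟨M, hM, hM'⟩ := ho.witness
      refine ⟨M, hM, fun o₁ h1 h2 => ?_⟩
      have : o₁ = o := le_antisymm (not_lt.1 fun hlt => h2 o hlt ho) (not_lt.1 fun hlt => hmin o₁ hlt h1)
      rw [this]
      exact hM'
    · push Not at h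
      refine ⟨∅, hκ.small_finite finite_empty, fun o h1 h2 => ?_⟩
      obtain ⟨o', h3, h4⟩ := h o h1
      exact absurd h4 (h2 o' h3)
  choose Mf hMf hMf' using hMex
  obtain ⟨F, C, f1, f2, f3, f4, c1, c2, c3, c4, c5⟩ := regular_closure hκ hIH hU Mf (fun _ => M₀)
    (fun X _ => hMf X) (fun _ => hM₀)
  have trg : ∀ X Y : Set V, (X = ∅ ∨ X ∈ C) → Y ∈ C → Trg E B A X Y := by
    intro X Y hX hY
    have hcl : ∀ u v, F u v → (u ∈ Y \ X ↔ v ∈ Y \ X) := by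
      intro u v h
      have h1 := c2 Y hY u v h
      have h2 : u ∈ X ↔ v ∈ X := by
        rcases hX with rfl | hX
        · simp
        · exact c2 X hX u v h
      simp only [mem_diff, h1, h2]
    refine ⟨fun u v => F u v ∧ u ∈ Y \ X, ⟨fun u v h => f1 u v h.1, fun u v h hh => hh h.2,
      fun u v h hh => hh ((hcl u v h.1).1 h.2), fun u v h => f2 u v h.1,
      fun u u' v h h' => f3 u u' v h.1 h'.1, fun u v v' h h' => f4 u v v' h.1 h'.1, ?_⟩⟩
    intro a ha haZ
    have haY : a ∈ Y \ X := by simpa using haZ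
    obtain ⟨b, hb, hr⟩ := c3 Y hY a ha haY.1
    refine ⟨b, hb, ?_⟩
    have : Relation.ReflTransGen (fun u v => F u v ∧ u ∈ Y \ X) a b ∧ b ∈ Y \ X := by
      clear hb
      induction hr with
      | refl => exact ⟨.refl, haY⟩
      | tail _ h ih => exact ⟨ih.1.tail ⟨h, ih.2⟩, (hcl _ _ h).1 ih.2⟩
    exact this.1
  obtain ⟨X₀, hX₀, hMX⟩ := c4 hκ.nonempty_idx.some
  obtain ⟨o₁, -, ho₁⟩ := hb₀ X₀ (c1 X₀ hX₀) (empty_subset _) hMX (trg ∅ X₀ (Or.inl rfl) hX₀)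
  -- a member of `C` of least level
  have hwf : WellFounded ((· < ·) : Ordinal.{u} → Ordinal.{u} → Prop) := wellFounded_lt
  let S : Set Ordinal.{u} := {o | ∃ X ∈ C, Lvl κ E B A o X}
  have hS : S.Nonempty := ⟨o₁, X₀, hX₀, ho₁⟩
  obtain ⟨X, hX, hXo⟩ : hwf.min S hS ∈ S := hwf.min_mem S hS
  obtain ⟨Y, hY, hXY, hMY⟩ := c5 X hX
  obtain ⟨o', ho', hl⟩ := hMf' X _ hXo (fun o' ho' hl => hwf.not_lt_min (s := S) ⟨X, hX, hl⟩ ho') Y (c1 Y hY) hXY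
    hMY (trg X Y (Or.inr hX) hY)
  exact hwf.not_lt_min (s := S) ⟨Y, hY, hl⟩ ho'

end Game

section MainInduction
open Set Cardinal
universe u
variable {V : Type u} {E : V → V → Prop} {B A Z : Set V}

/-- Deleting `Z` from the digraph itself. -/
theorem Unh.restrict (h : Unh E B A Z) :
    Unh (fun u v => E u v ∧ u ∉ Z ∧ v ∉ Z) (B \ Z) (A \ Z) ∅ := by
  intro D g hw w hwD
  have hRg : ∀ x ∈ Dm E A Z (D \ Z), x ∈ Dm (fun u v => E u v ∧ u ∉ Z ∧ v ∉ Z) (A \ Z) ∅ D := by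
    rintro x ⟨⟨u, hu, hx⟩, hxA, hxZ⟩
    exact ⟨⟨u, hu.1, hx.imp_right fun h => ⟨h, hu.2, hxZ⟩⟩, fun h => hxA h.1, by simp⟩
  have hw' : WaveF E B A Z (D \ Z) g := by
    refine ⟨fun x hx => hx.2, fun x hx hB => hw.notB x hx.1 ⟨hB, hx.2⟩, fun x hx => ?_,
      fun x hx => (hw.adj x (hRg x hx)).imp_right fun h => h.1,
      fun x hx y hy => hw.inj x (hRg x hx) y (hRg y hy),
      fun y hy hm => hw.noray y hy fun n => hRg _ (hm n)⟩
    refine ⟨hw.mem x (hRg x hx), ?_⟩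
    rcases hw.adj x (hRg x hx) with h | h
    · rw [← h]; exact hx.2.2
    · exact h.2.1
  by_cases hwZ : w ∈ Z
  · have hwm : w ∈ Dm (fun u v => E u v ∧ u ∉ Z ∧ v ∉ Z) (A \ Z) ∅ D :=
      ⟨subset_Rg hwD, fun h => h.2 hwZ, by simp⟩
    rcases hw.adj w hwm with h | h
    · exact ⟨w, hwm, h.symm⟩
    · exact absurd hwZ h.2.2
  · obtain ⟨x, hx, e⟩ := h _ g hw' w ⟨hwD, hwZ⟩
    exact ⟨x, hRg x hx, e⟩

theorem linking_of_restrict {F : V → V → Prop}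
    (h : Linking (fun u v => E u v ∧ u ∉ Z ∧ v ∉ Z) (B \ Z) (A \ Z) ∅ F) : Linking E B A Z F := by
  refine ⟨fun u v e => (h.edge u v e).1, fun u v e => (h.edge u v e).2.1, fun u v e => (h.edge u v e).2.2,
    fun u v e hA => h.notA u v e ⟨hA, (h.edge u v e).2.2⟩, h.inj_left, h.inj_right, fun a ha haZ => ?_⟩
  obtain ⟨b, hb, hr⟩ := h.reach a ⟨ha, haZ⟩ (by simp)
  exact ⟨b, hb.1, hr⟩

/-- The regular uncountable case: `regular_closure` with the starting vertices as seeds. -/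
theorem linking_regular [Nonempty V] {κ : Cardinal.{u}} (hreg : κ.IsRegular) (hunc : ℵ₀ < κ)
    (hIH : ∀ (E : V → V → Prop) (B A Z : Set V), #A < κ → Unh E B A Z → ∃ F, Linking E B A Z F)
    (hU : Unh E B A ∅) (hA : #A ≤ κ) : ∃ F, Linking E B A ∅ F := by
  have hκ := regIdx_ord hreg hunc
  obtain ⟨em⟩ : Nonempty (A ↪ κ.ord.ToType) := by rw [← hκ.card] at hA; exact hA
  obtain ⟨F, C, f1, f2, f3, f4, c1, c2, c3, c4, c5⟩ := regular_closure hκ hIH hU id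
    (fun i => {a | ∃ h : a ∈ A, em ⟨a, h⟩ = i}) (fun X hX => hX) (fun i => by
      refine hκ.small_finite (Set.Subsingleton.finite ?_)
      rintro a ⟨ha, h1⟩ b ⟨hb, h2⟩
      exact congrArg Subtype.val (em.injective (h1.trans h2.symm)))
  refine ⟨F, f1, by simp, by simp, f2, f3, f4, fun a ha _ => ?_⟩
  obtain ⟨X, hX, h⟩ := c4 (em ⟨a, ha⟩)
  exact c3 X hX a ha (h ⟨ha, rfl⟩)

/-- The invariant of the construction for singular cardinals: `G` links the starting vertices in `P`
inside `P`. -/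
structure PLink (E : V → V → Prop) (B A P : Set V) (G : V → V → Prop) : Prop where
  edge : ∀ u v, G u v → E u v
  left : ∀ u v, G u v → u ∈ P
  right : ∀ u v, G u v → v ∈ P
  notA : ∀ u v, G u v → v ∉ A
  inj_left : ∀ u u' v, G u v → G u' v → u = u'
  inj_right : ∀ u v v', G u v → G u v' → v = v'
  reach : ∀ a ∈ A, a ∈ P → ∃ b ∈ B, Relation.ReflTransGen G a b

/-- A linkage inside `P` and one inside `Y \ P` are disjoint. -/
theorem PLink.extend {P Y : Set V} {G : V → V → Prop} (h : PLink E B A P G) (hPY : P ⊆ Y)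
    {F : V → V → Prop} (hF : Linking E B A (Y \ P)ᶜ F) : PLink E B A Y (fun u v => G u v ∨ F u v) := by
  have hl : ∀ u v, F u v → u ∈ Y \ P := fun u v e => by simpa using hF.leftZ u v e
  have hr : ∀ u v, F u v → v ∈ Y \ P := fun u v e => by simpa using hF.rightZ u v e
  refine ⟨?_, ?_, ?_, ?_, ?_, ?_, ?_⟩
  · rintro u v (e | e)
    exacts [h.edge u v e, hF.edge u v e]
  · rintro u v (e | e)
    exacts [hPY (h.left u v e), (hl u v e).1]
  · rintro u v (e | e)
    exacts [hPY (h.right u v e), (hr u v e).1]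
  · rintro u v (e | e)
    exacts [h.notA u v e, hF.notA u v e]
  · rintro u u' v (e | e) (e' | e')
    exacts [h.inj_left u u' v e e', absurd (h.right _ _ e) (hr _ _ e').2,
      absurd (h.right _ _ e') (hr _ _ e).2, hF.inj_left u u' v e e']
  · rintro u v v' (e | e) (e' | e')
    exacts [h.inj_right u v v' e e', absurd (h.left _ _ e) (hl _ _ e').2,
      absurd (h.left _ _ e') (hl _ _ e).2, hF.inj_right u v v' e e']
  · intro a ha haY
    by_cases haP : a ∈ P
    · obtain ⟨b, hb, hr⟩ := h.reach a ha haP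
      exact ⟨b, hb, rtg_mono hr fun _ _ => Or.inl⟩
    · obtain ⟨b, hb, hr⟩ := hF.reach a ha (by simp [haY, haP])
      exact ⟨b, hb, rtg_mono hr fun _ _ => Or.inr⟩

/-- The singular case. Cover `A` by few smaller sets `Ai i`, and for every `i` build an increasing sequence
of sets that are not bad for a successor cardinal below `lam`, taking care that after `ω` steps each of the
resulting linkages is closed under the others. A starting vertex then follows the linkage with least
index containing it. -/
theorem linking_singular [Nonempty V] {lam : Cardinal.{u}} (hunc : ℵ₀ ≤ lam) (hs : ¬ lam.IsRegular)
    (hIH : ∀ (E : V → V → Prop) (B A Z : Set V), #A < lam → Unh E B A Z → ∃ F, Linking E B A Z F)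
    (hU : Unh E B A ∅) (hA : #A ≤ lam) : ∃ F, Linking E B A ∅ F := by
  classical
  obtain ⟨em⟩ : Nonempty (A ↪ lam.ord.ToType) := by rw [← mk_ord_toType lam] at hA; exact hA
  -- a short cofinal index set
  obtain ⟨I, hI, hIc⟩ := Order.exists_cof_eq lam.ord.ToType
  have hIlam : #I < lam := by
    rw [hIc, Ordinal.cof_toType]
    by_contra hle
    exact hs ⟨hunc, not_lt.1 hle⟩
  have hlam : ℵ₀ < lam := by
    refine lt_of_le_of_ne hunc fun h => hs ?_
    rw [← h]
    exact isRegular_aleph0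
  let Ai : I → Set V := fun i => {a | ∃ h : a ∈ A, em ⟨a, h⟩ ≤ i.1}
  have hAi : ∀ i, #(Ai i) < lam := by
    intro i
    have h1 : #(Iic i.1) < lam := by
      rw [← Iio_union_right]
      refine lt_of_le_of_lt (mk_union_le _ _) (add_lt_of_lt hunc (mk_Iio_toType_ord_lt i.1) ?_)
      simpa using lt_of_lt_of_le one_lt_aleph0 hunc
    refine lt_of_le_of_lt ?_ h1
    refine mk_le_of_injective (f := fun a : Ai i => (⟨em ⟨a.1, a.2.1⟩, a.2.2⟩ : Iic i.1)) ?_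
    intro a b hab
    have := em.injective (congrArg Subtype.val hab)
    exact Subtype.ext (congrArg (fun x : A => x.1) this)
  let mu : I → Cardinal.{u} := fun i => max ℵ₀ (max #I #(Ai i))
  have hmu : ∀ i, Order.succ (mu i) ≤ lam := fun i =>
    Order.succ_le_of_lt (max_lt hlam (max_lt hIlam (hAi i)))
  have hreg : ∀ i, RegIdx (Order.succ (mu i)) (Order.succ (mu i)).ord.ToType := fun i =>
    regIdx_ord (isRegular_succ (le_max_left _ _)) (lt_of_le_of_lt (le_max_left _ _) (Order.lt_succ _))
  have hIs : ∀ i, #I < Order.succ (mu i) := fun i =>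
    Order.lt_succ_of_le ((le_max_left _ _).trans (le_max_right _ _))
  have hAs : ∀ i, #(Ai i) < Order.succ (mu i) := fun i =>
    Order.lt_succ_of_le ((le_max_right _ _).trans (le_max_right _ _))
  -- the invariant and one step of the construction
  let Inv : (I → Set V × (V → V → Prop)) → Prop := fun s => ∀ i, #(s i).1 < Order.succ (mu i) ∧
    (∀ o, ¬ Lvl (Order.succ (mu i)) E B A o (s i).1) ∧ PLink E B A (s i).1 (s i).2
  have step : ∀ s, Inv s → ∃ s', Inv s' ∧ ∀ i, (s i).1 ⊆ (s' i).1 ∧ Ai i ⊆ (s' i).1 ∧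
      (∀ u v, (s i).2 u v → (s' i).2 u v) ∧
      ∀ j, ∀ x ∈ (s i).1, ∀ y, (s j).2 x y ∨ (s j).2 y x → y ∈ (s' i).1 := by
    intro s hs
    have h1 : ∀ i, ∃ q : Set V × (V → V → Prop), (#q.1 < Order.succ (mu i) ∧
        (∀ o, ¬ Lvl (Order.succ (mu i)) E B A o q.1) ∧ PLink E B A q.1 q.2) ∧ (s i).1 ⊆ q.1 ∧ Ai i ⊆ q.1 ∧
        (∀ u v, (s i).2 u v → q.2 u v) ∧
        ∀ j, ∀ x ∈ (s i).1, ∀ y, (s j).2 x y ∨ (s j).2 y x → y ∈ q.1 := by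
      intro i
      let N : Set V := ⋃ j : I, ⋃ x ∈ (s i).1, {y | (s j).2 x y} ∪ {y | (s j).2 y x}
      have hN : #N < Order.succ (mu i) := by
        refine (hreg i).small_iUnion (hIs i) fun j => (hreg i).small_biUnion (hs i).1 fun x _ => ?_
        refine (hreg i).small_finite (Set.Finite.union (Set.Subsingleton.finite ?_) (Set.Subsingleton.finite ?_))
        · intro y hy z hz
          exact (hs j).2.2.inj_right x y z hy hz
        · intro y hy z hz
          exact (hs j).2.2.inj_left y z x hy hz
      obtain ⟨Y, y1, y2, y3, ⟨F, hF⟩, y5⟩ := exists_not_lvl (hs i).2.1 ((hreg i).small_union (hAs i) hN)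
      refine ⟨(Y, fun u v => (s i).2 u v ∨ F u v), ⟨y1, y5, (hs i).2.2.extend y2 hF⟩, y2,
        fun x hx => y3 (Or.inl hx), fun u v => Or.inl, fun j x hx y hy => y3 (Or.inr ?_)⟩
      exact mem_iUnion.2 ⟨j, mem_iUnion₂.2 ⟨x, hx, hy⟩⟩
    choose s' h2 using h1
    exact ⟨s', fun i => (h2 i).1, fun i => (h2 i).2⟩
  choose! nx hnx hnx' using step
  have h0 : Inv fun _ => (∅, fun _ _ => False) := by
    intro i
    refine ⟨(hreg i).small_finite finite_empty, not_lvl_empty (hreg i) (fun E B A Z h =>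
      hIH E B A Z (lt_of_lt_of_le h (hmu i))) hU, ?_⟩
    constructor <;> simp
  let st : ℕ → I → Set V × (V → V → Prop) := fun n => nx^[n] fun _ => (∅, fun _ _ => False)
  have hst : ∀ n, Inv (st n) := by
    intro n
    induction n with
    | zero => exact h0
    | succ n ih =>
      change Inv (nx^[n + 1] _)
      rw [Function.iterate_succ_apply']
      exact hnx _ ih
  have hst' : ∀ n i, (st n i).1 ⊆ (st (n + 1) i).1 ∧ Ai i ⊆ (st (n + 1) i).1 ∧
      (∀ u v, (st n i).2 u v → (st (n + 1) i).2 u v) ∧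
      ∀ j, ∀ x ∈ (st n i).1, ∀ y, (st n j).2 x y ∨ (st n j).2 y x → y ∈ (st (n + 1) i).1 := by
    intro n i
    have := hnx' _ (hst n) i
    have e : st (n + 1) = nx (st n) := Function.iterate_succ_apply' nx n _
    rw [e]
    exact this
  have hm1 : ∀ i m n, m ≤ n → (st m i).1 ⊆ (st n i).1 := by
    intro i m n hmn
    induction hmn with
    | refl => exact subset_rfl
    | step _ ih => exact ih.trans (hst' _ i).1
  have hm2 : ∀ i m n, m ≤ n → ∀ u v, (st m i).2 u v → (st n i).2 u v := by
    intro i m n hmn u v h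
    induction hmn with
    | refl => exact h
    | step _ ih => exact (hst' _ i).2.2.1 u v ih
  let Qi : I → Set V := fun i => {x | ∃ n, x ∈ (st n i).1}
  let G : I → V → V → Prop := fun i u v => ∃ n, (st n i).2 u v
  have hcl : ∀ i j u v, G j u v → (u ∈ Qi i ↔ v ∈ Qi i) := by
    rintro i j u v ⟨n, h⟩
    constructor
    · rintro ⟨m, hu⟩
      exact ⟨max m n + 1, (hst' (max m n) i).2.2.2 j u (hm1 i _ _ (le_max_left _ _) hu) v
        (Or.inl (hm2 j _ _ (le_max_right _ _) u v h))⟩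
    · rintro ⟨m, hv⟩
      exact ⟨max m n + 1, (hst' (max m n) i).2.2.2 j v (hm1 i _ _ (le_max_left _ _) hv) u
        (Or.inr (hm2 j _ _ (le_max_right _ _) u v h))⟩
  have hGl : ∀ i u u' v, G i u v → G i u' v → u = u' := by
    rintro i u u' v ⟨n, h⟩ ⟨m, h'⟩
    exact (hst (max n m) i).2.2.inj_left u u' v (hm2 i _ _ (le_max_left _ _) _ _ h)
      (hm2 i _ _ (le_max_right _ _) _ _ h')
  have hGr : ∀ i u v v', G i u v → G i u v' → v = v' := by
    rintro i u v v' ⟨n, h⟩ ⟨m, hv⟩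
    exact (hst (max n m) i).2.2.inj_right u v v' (hm2 i _ _ (le_max_left _ _) _ _ h)
      (hm2 i _ _ (le_max_right _ _) _ _ hv)
  -- a vertex uses the linkage of the first set `Qi i` containing it
  let Fst : V → I → Prop := fun x i => x ∈ Qi i ∧ ∀ j < i, x ∉ Qi j
  have hFst : ∀ x i i', Fst x i → Fst x i' → i = i' := fun x i i' h h' =>
    le_antisymm (not_lt.1 fun hlt => h.2 i' hlt h'.1) (not_lt.1 fun hlt => h'.2 i hlt h.1)
  have hFcl : ∀ j u v, G j u v → ∀ i, Fst u i ↔ Fst v i := by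
    intro j u v h i
    change (_ ∧ ∀ j < i, u ∉ Qi j) ↔ (_ ∧ ∀ j < i, v ∉ Qi j)
    rw [hcl i j u v h]
    refine and_congr_right fun _ => forall_congr' fun k => forall_congr' fun _ => ?_
    rw [hcl k j u v h]
  refine ⟨fun u v => ∃ i, Fst u i ∧ G i u v, ?_, by simp, by simp, ?_, ?_, ?_, ?_⟩
  · rintro u v ⟨i, -, n, h⟩
    exact (hst n i).2.2.edge u v h
  · rintro u v ⟨i, -, n, h⟩
    exact (hst n i).2.2.notA u v h
  · rintro u u' v ⟨i, hi, h⟩ ⟨i', hi', h'⟩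
    have : i = i' := hFst v i i' ((hFcl i u v h i).1 hi) ((hFcl i' u' v h' i').1 hi')
    subst this
    exact hGl i u u' v h h'
  · rintro u v v' ⟨i, hi, h⟩ ⟨i', hi', h'⟩
    have : i = i' := hFst u i i' hi hi'
    subst this
    exact hGr i u v v' h h'
  · intro a ha _
    have hne : {i | a ∈ Qi i}.Nonempty := by
      obtain ⟨i, hi, hle⟩ := hI (em ⟨a, ha⟩)
      exact ⟨⟨i, hi⟩, 1, (hst' 0 ⟨i, hi⟩).2.1 ⟨ha, hle⟩⟩
    have hwf : WellFounded ((· < ·) : I → I → Prop) := wellFounded_lt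
    have hi : Fst a (hwf.min _ hne) :=
      ⟨hwf.min_mem _ hne, fun j hj h => hwf.not_lt_min (s := {i | a ∈ Qi i}) h hj⟩
    obtain ⟨n, hn⟩ := hi.1
    obtain ⟨b, hb, hr⟩ := (hst n _).2.2.reach a ha hn
    refine ⟨b, hb, ?_⟩
    clear hb
    have : Relation.ReflTransGen (fun u v => ∃ i, Fst u i ∧ G i u v) a b ∧ Fst b (hwf.min _ hne) := by
      induction hr with
      | refl => exact ⟨.refl, hi⟩
      | tail _ h ih => exact ⟨ih.1.tail ⟨_, ih.2, n, h⟩, (hFcl _ _ _ ⟨n, h⟩ _).1 ih.2⟩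
    exact this.1

/-- Every unhindered web is linkable. -/
theorem linking_main (hU : Unh E B A Z) : ∃ F, Linking E B A Z F := by
  suffices h : ∀ c : Cardinal.{u}, ∀ (E : V → V → Prop) (B A Z : Set V), #A = c → Unh E B A Z →
      ∃ F, Linking E B A Z F from h _ E B A Z rfl hU
  intro c
  induction c using Cardinal.lt_wf.induction with
  | _ c ih =>
    intro E B A Z hA hU
    have hIH : ∀ (E : V → V → Prop) (B A Z : Set V), #A < c → Unh E B A Z → ∃ F, Linking E B A Z F :=
      fun E B A Z h hU => ih _ h E B A Z rfl hU
    by_cases hc : A.Countable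
    · exact linking_countable hU hc
    have hunc : ℵ₀ < c := by
      rw [← hA]
      exact not_le.1 fun h => hc (le_aleph0_iff_set_countable.1 h)
    have hne : Nonempty V := by
      rcases A.eq_empty_or_nonempty with rfl | ⟨a, -⟩
      · exact absurd countable_empty hc
      · exact ⟨a⟩
    have hA' : #(A \ Z : Set V) ≤ c := hA ▸ mk_le_mk_of_subset diff_subset
    by_cases hreg : c.IsRegular
    · obtain ⟨F, hF⟩ := linking_regular hreg hunc hIH hU.restrict hA'
      exact ⟨F, linking_of_restrict hF⟩
    · obtain ⟨F, hF⟩ := linking_singular hunc.le hreg hIH hU.restrict hA'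
      exact ⟨F, linking_of_restrict hF⟩

end MainInduction

/-! ### From paths to relations and back -/
section Conversion
open Set
variable {V : Type*}

/-- A relation path, as a list of distinct vertices. -/
theorem exists_list_of_rtg {F : V → V → Prop} {a b : V} (h : Relation.ReflTransGen F a b) :
    ∃ l : List V, l ≠ [] ∧ l.Nodup ∧ l.IsChain F ∧ l.head? = some a ∧ l.getLast? = some b ∧
      ∀ v ∈ l, Relation.ReflTransGen F a v ∧ Relation.ReflTransGen F v b := by
  obtain ⟨n, u, h0, hn, hst, hinj⟩ := exists_simple_seq h
  refine ⟨(List.range (n + 1)).map u, by simp, ?_, ?_, ?_, ?_, ?_⟩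
  · refine List.Nodup.map_on ?_ List.nodup_range
    intro i hi j hj e
    rw [List.mem_range] at hi hj
    exact hinj i (by omega) j (by omega) e
  · rw [List.isChain_iff_getElem]
    intro i hi
    simp only [List.length_map, List.length_range] at hi
    simpa using hst i (by omega)
  · simp [List.head?_range, h0]
  · simp [List.getLast?_range, hn]
  · intro v hv
    obtain ⟨i, hi, rfl⟩ := List.mem_map.1 hv
    rw [List.mem_range] at hi
    have up : ∀ j k, j + k ≤ n → Relation.ReflTransGen F (u j) (u (j + k)) := by
      intro j k
      induction k with
      | zero => intro _; exact .refl
      | succ k ih => intro hk; exact (ih (by omega)).tail (hst _ (by omega))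
    refine ⟨?_, ?_⟩
    · have := up 0 i (by omega)
      rwa [h0, Nat.zero_add] at this
    · have := up i (n - i) (by omega)
      rwa [Nat.add_sub_cancel' (by omega), hn] at this

/-- Backward uniqueness: a vertex is reached from at most one source. -/
theorem source_unique {F : V → V → Prop} {A : Set V} (hA : ∀ u v, F u v → v ∉ A)
    (hl : ∀ u u' v, F u v → F u' v → u = u') {a a' v : V} (ha : a ∈ A) (ha' : a' ∈ A)
    (h : Relation.ReflTransGen F a v) (h' : Relation.ReflTransGen F a' v) : a = a' := by
  induction h with
  | refl =>
    rcases Relation.ReflTransGen.cases_tail h' with e | ⟨c, _, hc⟩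
    · exact e
    · exact absurd ha (hA _ _ hc)
  | tail _ hcd ih =>
    rcases Relation.ReflTransGen.cases_tail h' with e | ⟨c', hc', hcd'⟩
    · exact absurd (e ▸ ha') (hA _ _ hcd)
    · rw [hl _ _ _ hcd' hcd] at hc'
      exact ih hc'

/-- Forward uniqueness: a vertex leads to at most one sink. -/
theorem sink_unique {F : V → V → Prop} (hr : ∀ u v v', F u v → F u v' → v = v') {v x x' : V}
    (hx : ∀ y, ¬ F x y) (hx' : ∀ y, ¬ F x' y)
    (h : Relation.ReflTransGen F v x) (h' : Relation.ReflTransGen F v x') : x = x' := by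
  induction h using Relation.ReflTransGen.head_induction_on with
  | refl =>
    rcases Relation.ReflTransGen.cases_head h' with e | ⟨c, hc, _⟩
    · exact e
    · exact absurd hc (hx _)
  | head hvc _ ih =>
    rcases Relation.ReflTransGen.cases_head h' with e | ⟨c', hc', hcx'⟩
    · exact absurd (e ▸ hvc) (hx' _)
    · rw [hr _ _ _ hc' hvc] at hcx'
      exact ih hcx'

/-- Going back along a wave from a vertex that is not used as a predecessor, one arrives in `A`. -/
theorem WaveF.orbit_hits_of_unused {E : V → V → Prop} {B A Z D : Set V} {g : V → V}
    (h : WaveF E B A Z D g) {x : V} (hx : x ∈ Rg E D) (hxZ : x ∉ Z)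
    (hun : ∀ y ∈ Dm E A Z D, g y ≠ x) :
    ∃ n, g^[n] x ∈ A ∧ ∀ i < n, g^[i] x ∈ Dm E A Z D := by
  classical
  by_cases hall : ∀ n, g^[n] x ∈ Dm E A Z D
  · refine h.orbit_hits hx hxZ fun k e => ?_
    rw [Function.iterate_succ_apply'] at e
    exact hun _ (hall k) e
  · push Not at hall
    refine ⟨Nat.find hall, ?_, fun i hi => not_not.1 (Nat.find_min hall hi)⟩
    have hn := Nat.find_spec hall
    have hmin : ∀ i < Nat.find hall, g^[i] x ∈ Dm E A Z D :=
      fun i hi => not_not.1 (Nat.find_min hall hi)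
    generalize Nat.find hall = n at hn hmin
    cases n with
    | zero => by_contra hA; exact hn ⟨hx, hA, hxZ⟩
    | succ k =>
      rw [Function.iterate_succ_apply'] at hn ⊢
      have hD := h.mem _ (hmin k (by omega))
      by_contra hA
      exact hn ⟨⟨_, hD, Or.inl rfl⟩, hA, h.notZ _ hD⟩

/-- A finite path from `D` to a vertex outside `D` leaves `D` through the boundary of `D`. -/
theorem exists_exit {E : V → V → Prop} {D : Set V} : ∀ (l : List V) (a b : V), l.IsChain E →
    l.head? = some a → l.getLast? = some b → a ∈ D → b ∉ D → ∃ x ∈ l, x ∈ Rg E D ∧ x ∉ D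
  | [], _, _, _, h, _, _, _ => by simp at h
  | [c], a, b, _, h, h', ha, hb => by
    simp at h h'
    exact absurd (h' ▸ h ▸ ha) hb
  | c :: d :: l, a, b, hc, h, h', ha, hb => by
    rw [List.isChain_cons_cons] at hc
    have e : c = a := by simpa using h
    by_cases hd : d ∈ D
    · obtain ⟨x, hx, hx'⟩ := exists_exit (d :: l) d b hc.2 rfl (by simpa using h') hd hb
      exact ⟨x, List.mem_cons_of_mem _ hx, hx'⟩
    · exact ⟨d, by simp, ⟨a, ha, Or.inr (e ▸ hc.1)⟩, hd⟩

/-- A loose web admits no wave function losing a vertex: the paths of such a wave would form a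
nontrivial wave. -/
theorem unh_of_loose (Γ : Web V)
    (h : ∀ W : Set (GPath V), Γ.IsWave W → W = {P | ∃ a ∈ Γ.A, P = GPath.fin [a]}) :
    Unh Γ.Adj Γ.B Γ.A ∅ := by
  intro D g hw w hwD
  by_contra hlost
  push Not at hlost
  set F : V → V → Prop := fun u x => x ∈ Dm Γ.Adj Γ.A ∅ D ∧ g x = u ∧ u ≠ x with hF
  have hFE : ∀ u v, F u v → Γ.Adj u v := by
    rintro u v ⟨hv, rfl, hne⟩
    exact (hw.adj _ hv).resolve_left fun e => hne e.symm
  have hFA : ∀ u v, F u v → v ∉ Γ.A := fun u v huv => huv.1.2.1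
  have hFD : ∀ u v, F u v → u ∈ D := by
    rintro u v ⟨hv, rfl, -⟩
    exact hw.mem _ hv
  have hFl : ∀ u u' v, F u v → F u' v → u = u' := by
    rintro u u' v ⟨-, rfl, -⟩ ⟨-, rfl, -⟩
    rfl
  have hFr : ∀ u v v', F u v → F u v' → v = v' := by
    rintro u v v' ⟨hv, e, -⟩ ⟨hv', e', -⟩
    exact hw.inj _ hv _ hv' (e.trans e'.symm)
  -- the terminal vertices of the wave
  set T : Set V := (Γ.A ∪ Rg Γ.Adj D) \ D with hT
  have hback : ∀ x, ∀ n, (∀ i < n, g^[i] x ∈ Dm Γ.Adj Γ.A ∅ D) →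
      Relation.ReflTransGen F (g^[n] x) x := by
    intro x n hi
    induction n with
    | zero => exact .refl
    | succ n ih =>
      have ih' := ih fun i hin => hi i (by omega)
      have hm := hi n (by omega)
      rw [Function.iterate_succ_apply']
      by_cases e : g (g^[n] x) = g^[n] x
      · rwa [e]
      · exact ih'.head ⟨hm, rfl, e⟩
  have hsrc : ∀ x ∈ T, ∃ a ∈ Γ.A, Relation.ReflTransGen F a x := by
    rintro x ⟨hxA | hxR, hxD⟩
    · exact ⟨x, hxA, .refl⟩
    · obtain ⟨n, hn, hi⟩ := hw.orbit_hits_of_unused hxR (notMem_empty x)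
        fun y hy e => hxD (e ▸ hw.mem _ hy)
      exact ⟨_, hn, hback x n hi⟩
  have hL : ∀ x, ∃ l : List V, x ∈ T → ∃ a ∈ Γ.A, l ≠ [] ∧ l.Nodup ∧ l.IsChain F ∧
      l.head? = some a ∧ l.getLast? = some x ∧
      ∀ v ∈ l, Relation.ReflTransGen F a v ∧ Relation.ReflTransGen F v x := by
    intro x
    by_cases hx : x ∈ T
    · obtain ⟨a, ha, hax⟩ := hsrc x hx
      obtain ⟨l, hl⟩ := exists_list_of_rtg hax
      exact ⟨l, fun _ => ⟨a, ha, hl⟩⟩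
    · exact ⟨[], fun hh => absurd hh hx⟩
  choose L hL using hL
  have hsink : ∀ x ∈ T, ∀ y, ¬ F x y := fun x hx y hxy => hx.2 (hFD _ _ hxy)
  have hWave : Γ.IsWave {P | ∃ x ∈ T, P = GPath.fin (L x)} := by
    refine ⟨⟨?_, ?_⟩, ?_, ?_⟩
    · rintro _ ⟨x, hx, rfl⟩
      obtain ⟨a, ha, hne, hnd, hch, -⟩ := hL x hx
      exact ⟨hne, hnd, hch.imp hFE⟩
    · rintro _ ⟨x, hx, rfl⟩ _ ⟨y, hy, rfl⟩ hne v hvx hvy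
      apply hne
      obtain ⟨a, ha, -, -, -, -, -, hv⟩ := hL x hx
      obtain ⟨a', ha', -, -, -, -, -, hv'⟩ := hL y hy
      rw [sink_unique hFr (hsink x hx) (hsink y hy) (hv v hvx).2 (hv' v hvy).2]
    · rintro v ⟨_, ⟨x, hx, rfl⟩, hv⟩
      obtain ⟨a, ha, -, -, -, hh, -⟩ := hL x hx
      change (L x).head? = some v at hv
      rw [hh] at hv
      exact (Option.some.inj hv) ▸ ha
    · rintro p ⟨⟨-, -, hch⟩, ⟨a, ha, hpa⟩, ⟨b, hb, hpb⟩⟩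
      have hTer : ∀ x ∈ T, x ∈ warpTer {P | ∃ x ∈ T, P = GPath.fin (L x)} := by
        intro x hx
        obtain ⟨-, -, -, -, -, -, hl, -⟩ := hL x hx
        exact ⟨_, ⟨x, hx, rfl⟩, hl⟩
      by_cases haD : a ∈ D
      · obtain ⟨x, hxp, hxR, hxD⟩ := exists_exit p a b hch hpa hpb haD fun hbD => hw.notB _ hbD hb
        exact ⟨x, hTer x ⟨Or.inr hxR, hxD⟩, hxp⟩
      · exact ⟨a, hTer a ⟨Or.inl ha, haD⟩, List.mem_of_mem_head? hpa⟩
  have hAD : ∀ a ∈ Γ.A, a ∉ D := by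
    intro a ha
    have : GPath.fin [a] ∈ {P | ∃ x ∈ T, P = GPath.fin (L x)} := by
      rw [h _ hWave]
      exact ⟨a, ha, rfl⟩
    obtain ⟨x, hx, e⟩ := this
    obtain ⟨-, -, -, -, -, -, hl, -⟩ := hL x hx
    rw [← GPath.fin.inj e] at hl
    have : a = x := by simpa using hl
    exact this ▸ hx.2
  obtain ⟨n, hn, hi⟩ := hw.orbit_hits_of_unused ⟨w, hwD, Or.inl rfl⟩ (notMem_empty w) hlost
  cases n with
  | zero => exact hAD _ hn hwD
  | succ k =>
    refine hAD _ hn ?_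
    rw [Function.iterate_succ_apply']
    exact hw.mem _ (hi k (by omega))

/-- A linking relation is the edge set of a linkage. -/
theorem linkable_of_linking (Γ : Web V) {F : V → V → Prop} (hF : Linking Γ.Adj Γ.B Γ.A ∅ F) :
    Γ.Linkable := by
  have hL : ∀ a, ∃ l : List V, a ∈ Γ.A → ∃ b ∈ Γ.B, l ≠ [] ∧ l.Nodup ∧ l.IsChain F ∧
      l.head? = some a ∧ l.getLast? = some b ∧
      ∀ v ∈ l, Relation.ReflTransGen F a v ∧ Relation.ReflTransGen F v b := by
    intro a
    by_cases ha : a ∈ Γ.A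
    · obtain ⟨b, hb, hab⟩ := hF.reach a ha (notMem_empty a)
      obtain ⟨l, hl⟩ := exists_list_of_rtg hab
      exact ⟨l, fun _ => ⟨b, hb, hl⟩⟩
    · exact ⟨[], fun hh => absurd hh ha⟩
  choose L hL using hL
  have hA : ∀ u v, F u v → v ∉ Γ.A := fun u v huv => Γ.not_into_A u v (hF.edge u v huv)
  refine ⟨{p | ∃ a ∈ Γ.A, p = L a}, ⟨?_, ?_, ?_⟩, ?_⟩
  · rintro _ ⟨a, ha, rfl⟩
    obtain ⟨b, hb, hne, hnd, hch, hh, hl, -⟩ := hL a ha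
    exact ⟨⟨hne, hnd, hch.imp hF.edge⟩, ⟨a, ha, hh⟩, ⟨b, hb, hl⟩⟩
  · rintro _ ⟨a, ha, rfl⟩ v hv hvAB
    obtain ⟨b, hb, -, -, -, hh, hl, hr⟩ := hL a ha
    obtain ⟨h1, h2⟩ := hr v hv
    rcases hvAB with hvA | hvB
    · left
      rcases Relation.ReflTransGen.cases_tail h1 with e | ⟨c, _, hc⟩
      · rw [e, hh]
      · exact absurd hvA (hA _ _ hc)
    · right
      rcases Relation.ReflTransGen.cases_head h2 with e | ⟨c, hc, _⟩
      · rw [e, hl]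
      · exact absurd hvB (Γ.not_from_B _ _ (hF.edge _ _ hc))
  · rintro _ ⟨a, ha, rfl⟩ _ ⟨a', ha', rfl⟩ hne v hv hv'
    apply hne
    obtain ⟨b, -, -, -, -, -, -, hr⟩ := hL a ha
    obtain ⟨b', -, -, -, -, -, -, hr'⟩ := hL a' ha'
    rw [source_unique hA hF.inj_left ha ha' (hr v hv).1 (hr' v hv').1]
  · ext v
    constructor
    · rintro ⟨_, ⟨a, ha, rfl⟩, hv⟩
      obtain ⟨-, -, -, -, -, hh, -⟩ := hL a ha
      rw [hh] at hv
      exact (Option.some.inj hv) ▸ ha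
    · intro hv
      obtain ⟨-, -, -, -, -, hh, -⟩ := hL v hv
      exact ⟨_, ⟨v, hv, rfl⟩, hh⟩

end Conversion

/-- Every loose web is linkable: if the only wave in `Γ` is the trivial wave
`⟨A⟩` of singleton paths on `A`, then `Γ` has a linkage. -/
theorem loose_linkable (V : Type*) (Γ : Web V)
    (h : ∀ W : Set (GPath V), Γ.IsWave W → W = {P | ∃ a ∈ Γ.A, P = GPath.fin [a]}) :
    Γ.Linkable := by
  obtain ⟨F, hF⟩ := linking_main (unh_of_loose Γ h)
  exact linkable_of_linking Γ hF

end ErdosMenger
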